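/- arXiv:1404.4852 — 4 statements merged into one kernel-verified Lean document; each statement's English description precedes it below -/
import Mathlib

section
/- Let m = p_1^{r_1} p_2^{r_2} ⋯ p_v^{r_v} where p_1, …, p_v are distinct primes and each r_i ≥ 1. Let Q be a polynomial in n ≥ 2 variables over Z_m of total degree d ≥ 1. Then for every k ∈ Z_m, all elements w_1, …, w_v ∈ Z_m, and all natural numbers q_1 ≤ r_1, …, q_v ≤ r_v, the sum Σ_{i_1=0}^{p_1^{q_1}-1} Σ_{i_2=0}^{p_2^{q_2}-1} ⋯ Σ_{i_v=0}^{p_v^{q_v}-1} #(k + Σ_{j=1}^{v} w_j (m/p_j^{q_j}) i_j)_Q is divisible by (∏_{i : r_i = 1} p_i^{⌈n/d⌉ + q_i - 1}) · (∏_{i : r_i > 1} p_i^{⌈r_i n / 2⌉ + q_i - 1}). -/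
namespace AxMR

/-- functional degree less than `D` -/
def DegLT {n : ℕ} : ℕ → ((Fin n → ℤ) → ℤ) → Prop
  | 0, F => F = 0
  | D + 1, F => ∀ i : Fin n, DegLT D (fwdDiff (Pi.single i 1) F)

lemma DegLT.zero {n : ℕ} (D : ℕ) : DegLT D (0 : (Fin n → ℤ) → ℤ) := by
  induction D with
  | zero => rfl
  | succ D ih =>
    intro i
    have : fwdDiff (Pi.single i 1) (0 : (Fin n → ℤ) → ℤ) = 0 := by
      funext x; simp [fwdDiff]
    rw [this]; exact ih

lemma DegLT.succ {n D : ℕ} {F : (Fin n → ℤ) → ℤ} (h : DegLT D F) : DegLT (D + 1) F := by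
  induction D generalizing F with
  | zero => 
    have : F = 0 := h
    subst this; exact DegLT.zero _
  | succ D ih => exact fun i => ih (h i)

lemma DegLT.mono {n D E : ℕ} {F : (Fin n → ℤ) → ℤ} (h : DegLT D F) (hDE : D ≤ E) :
    DegLT E F := by
  induction hDE with
  | refl => exact h
  | step _ ih => exact ih.succ

lemma DegLT.add {n D : ℕ} {F G : (Fin n → ℤ) → ℤ} (hF : DegLT D F) (hG : DegLT D G) :
    DegLT D (F + G) := by
  induction D generalizing F G with
  | zero => 
    have h1 : F = 0 := hF
    have h2 : G = 0 := hG
    subst h1 h2; exact add_zero 0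
  | succ D ih => 
    intro i
    rw [fwdDiff_add]
    exact ih (hF i) (hG i)

lemma DegLT.const {n : ℕ} (c : ℤ) : DegLT 1 (fun _ : Fin n → ℤ => c) := by
  intro i
  rw [fwdDiff_const]; rfl

lemma DegLT.coord {n : ℕ} (j : Fin n) : DegLT 2 (fun x : Fin n → ℤ => x j) := by
  intro i
  have : fwdDiff (Pi.single i 1) (fun x : Fin n → ℤ => x j)
      = fun _ => (Pi.single i 1 : Fin n → ℤ) j := by
    funext x; simp [fwdDiff]
  rw [this]
  exact DegLT.const _

lemma DegLT.smul_cancel {n D : ℕ} {F : (Fin n → ℤ) → ℤ} (c : ℤ) (hc : c ≠ 0)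
    (h : DegLT D (c • F)) : DegLT D F := by
  induction D generalizing F with
  | zero => 
    have h1 : c • F = 0 := h
    exact (smul_eq_zero.1 h1).resolve_left hc
  | succ D ih =>
    intro i
    apply ih
    rw [← fwdDiff_const_smul]
    exact h i

lemma DegLT.mul_aux {n : ℕ} (N : ℕ) : ∀ {a b : ℕ}, a + b ≤ N →
    ∀ {F G : (Fin n → ℤ) → ℤ}, DegLT (a + 1) F → DegLT (b + 1) G →
      DegLT (a + b + 1) (F * G) := by
  induction N with
  | zero =>
    intro a b hab F G hF hG i
    obtain ⟨rfl, rfl⟩ : a = 0 ∧ b = 0 := by omega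
    have h1 : fwdDiff (Pi.single i 1) F = 0 := hF i
    have h2 : fwdDiff (Pi.single i 1) G = 0 := hG i
    show fwdDiff (Pi.single i 1) (F * G) = 0
    funext x
    have h1 := congrFun h1 x
    have h2 := congrFun h2 x
    simp only [fwdDiff, Pi.zero_apply, Pi.mul_apply] at *
    rw [sub_eq_zero] at *
    rw [h1, h2]
  | succ N ih =>
    intro a b hab F G hF hG i
    have key : fwdDiff (Pi.single i 1) (F * G) = fwdDiff (Pi.single i 1) F * G
        + (F * fwdDiff (Pi.single i 1) G + fwdDiff (Pi.single i 1) F * fwdDiff (Pi.single i 1) G) := by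
      funext x
      simp only [fwdDiff, Pi.mul_apply, Pi.add_apply]
      ring
    rw [key]
    have t1 : DegLT (a + b) (fwdDiff (Pi.single i 1) F * G) := by
      rcases a with _ | a
      · have h1 : fwdDiff (Pi.single i 1) F = 0 := hF i
        rw [h1, zero_mul]; exact DegLT.zero _
      · have := ih (a := a) (b := b) (by omega) (hF i) hG
        exact this.mono (by omega)
    have t2 : DegLT (a + b) (F * fwdDiff (Pi.single i 1) G) := by
      rcases b with _ | b
      · have h1 : fwdDiff (Pi.single i 1) G = 0 := hG i
        rw [h1, mul_zero]; exact DegLT.zero _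
      · have := ih (a := a) (b := b) (by omega) hF (hG i)
        exact this.mono (by omega)
    have t3 : DegLT (a + b) (fwdDiff (Pi.single i 1) F * fwdDiff (Pi.single i 1) G) := by
      rcases a with _ | a
      · have h1 : fwdDiff (Pi.single i 1) F = 0 := hF i
        rw [h1, zero_mul]; exact DegLT.zero _
      rcases b with _ | b
      · have h1 : fwdDiff (Pi.single i 1) G = 0 := hG i
        rw [h1, mul_zero]; exact DegLT.zero _
      · have := ih (a := a) (b := b) (by omega) (hF i) (hG i)
        exact this.mono (by omega)
    exact t1.add (t2.add t3)

lemma DegLT.mul {n a b : ℕ} {F G : (Fin n → ℤ) → ℤ} (hF : DegLT (a + 1) F)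
    (hG : DegLT (b + 1) G) : DegLT (a + b + 1) (F * G) :=
  DegLT.mul_aux (a + b) le_rfl hF hG

lemma DegLT.sum {n D : ℕ} {ι : Type*} (s : Finset ι) (F : ι → (Fin n → ℤ) → ℤ)
    (h : ∀ i ∈ s, DegLT D (F i)) : DegLT D (∑ i ∈ s, F i) := by
  classical
  induction s using Finset.induction_on with
  | empty => simpa using DegLT.zero D
  | insert a s ha ih =>
    rw [Finset.sum_insert ha]
    exact (h a (by simp)).add (ih fun i hi => h i (by simp [hi]))

lemma DegLT.prod {n : ℕ} {ι : Type*} (s : Finset ι) (F : ι → (Fin n → ℤ) → ℤ) (D : ι → ℕ)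
    (h : ∀ i ∈ s, DegLT (D i + 1) (F i)) : DegLT (∑ i ∈ s, D i + 1) (∏ i ∈ s, F i) := by
  classical
  induction s using Finset.induction_on with
  | empty => exact DegLT.const 1
  | insert a s ha ih =>
    rw [Finset.prod_insert ha, Finset.sum_insert ha]
    exact (h a (by simp)).mul (ih fun i hi => h i (by simp [hi]))

lemma DegLT.pow {n d : ℕ} {F : (Fin n → ℤ) → ℤ} (hF : DegLT (d + 1) F) (k : ℕ) :
    DegLT (k * d + 1) (F ^ k) := by
  have := DegLT.prod (Finset.range k) (fun _ => F) (fun _ => d) (fun _ _ => hF)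
  simpa using this

lemma DegLT.eval {n : ℕ} (Q : MvPolynomial (Fin n) ℤ) {d : ℕ} (hd : Q.totalDegree ≤ d) :
    DegLT (d + 1) (fun x => MvPolynomial.eval x Q) := by
  have : (fun x => MvPolynomial.eval x Q) =
      ∑ s ∈ Q.support, ((fun _ => Q.coeff s) * ∏ i, (fun x : Fin n → ℤ => x i) ^ (s i)) := by
    funext x
    rw [MvPolynomial.eval_eq']
    simp
  rw [this]
  apply DegLT.sum
  intro s hs
  have h1 := DegLT.prod Finset.univ (fun i => (fun x : Fin n → ℤ => x i) ^ (s i)) s (by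
    intro i _
    simpa using (DegLT.coord i).pow (d := 1) (s i))
  have h2 := (DegLT.const (n := n) (Q.coeff s)).mul (a := 0) h1
  refine h2.mono ?_
  have := MvPolynomial.le_totalDegree hs
  rw [Finsupp.sum_fintype _ _ (by simp)] at this
  omega

lemma DegLT.choose {n d : ℕ} {F : (Fin n → ℤ) → ℤ} (hF : DegLT (d + 1) F) (j : ℕ) :
    DegLT (j * d + 1) (fun x => Ring.choose (F x) j) := by
  induction j with
  | zero => simpa using DegLT.const 1
  | succ j ih =>
    apply DegLT.smul_cancel ((j + 1 : ℕ) : ℤ) (by positivity)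
    have : ((j + 1 : ℕ) : ℤ) • (fun x => Ring.choose (F x) (j + 1))
        = (fun x => Ring.choose (F x) j) * (F + fun _ => -(j : ℤ)) := by
      funext x
      have := Ring.choose_smul_choose (F x) (n := j + 1) (k := j) (by omega)
      simp at this
      simp only [Pi.smul_apply, Pi.mul_apply, Pi.add_apply, smul_eq_mul]
      push_cast
      rw [this, sub_eq_add_neg]
    rw [this]
    have := ih.mul (hF.add ((DegLT.const (-(j : ℤ))).mono (by omega)))
    convert this using 1
    ring

/-- sum over a box -/
def S {n : ℕ} (M : ℕ) (f : (Fin n → ℤ) → ℤ) : ℤ := ∑ x : Fin n → Fin M, f fun i => ((x i : ℕ) : ℤ)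

lemma DegLT.cons {n D : ℕ} {F : (Fin (n + 1) → ℤ) → ℤ} (h : DegLT D F) :
    DegLT D (fun x : Fin n → ℤ => F (Fin.cons 0 x)) := by
  induction D generalizing F with
  | zero => 
    have h : F = 0 := h
    subst h; rfl
  | succ D ih =>
    intro i
    have := ih (h i.succ)
    convert this using 1
    funext x
    simp only [fwdDiff]
    congr 2
    funext j
    refine Fin.cases ?_ (fun j => ?_) j
    · simp [Fin.succ_ne_zero]
    · simp [Pi.single_apply]

lemma DegLT.iter {n D : ℕ} {F : (Fin n → ℤ) → ℤ} (h : DegLT D F) (i : Fin n) (a : ℕ) :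
    DegLT (D - a) ((fwdDiff (Pi.single i 1))^[a] F) := by
  induction a generalizing D F with
  | zero => exact h
  | succ a ih =>
    rw [Function.iterate_succ_apply]
    rcases D with _ | D
    · have h : F = 0 := h
      subst h
      have : fwdDiff (Pi.single i 1) (0 : (Fin n → ℤ) → ℤ) = 0 := by
        funext x; simp [fwdDiff]
      have h2 := ih (DegLT.zero (n := n) 0)
      rw [this]; exact h2.mono (by omega)
    · exact (ih (h i)).mono (by omega)

lemma sum_choose_fin (p a : ℕ) : ∑ x : Fin p, ((x : ℕ).choose a) = p.choose (a + 1) := by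
  rw [Fin.sum_univ_eq_sum_range (fun x => x.choose a)]
  induction p with
  | zero => simp
  | succ p ih => rw [Finset.sum_range_succ, ih, Nat.choose_succ_succ]; ring

lemma box_dvd {p : ℕ} (hp : p.Prime) {n D : ℕ} {F : (Fin n → ℤ) → ℤ} (h : DegLT (D + 1) F) :
    ((p : ℤ) ^ (n - D / (p - 1))) ∣ S p F := by
  induction n generalizing D with
  | zero => simp
  | succ n ih =>
    have hp2 := hp.two_le
    have key : S p F = ∑ a ∈ Finset.range p, (p.choose (a + 1) : ℤ) *
        S p (fun x : Fin n → ℤ => ((fwdDiff (Pi.single (0 : Fin (n + 1)) (1 : ℤ)))^[a] F) (Fin.cons (α := fun _ => ℤ) 0 x)) := by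
      unfold S
      rw [← (Fin.consEquiv (fun _ : Fin (n + 1) => Fin p)).sum_comp, Fintype.sum_prod_type,
        Finset.sum_comm]
      simp_rw [Finset.mul_sum]
      rw [Finset.sum_comm (s := Finset.range p)]
      apply Finset.sum_congr rfl; intro y _
      have h1 : ∀ x0 : Fin p, F (fun i => (((Fin.consEquiv (fun _ : Fin (n + 1) => Fin p)) (x0, y) i : ℕ) : ℤ))
          = ∑ a ∈ Finset.range p, ((x0 : ℕ).choose a : ℤ) *
            ((fwdDiff (Pi.single (0 : Fin (n + 1)) (1 : ℤ)))^[a] F) (Fin.cons 0 fun i => ((y i : ℕ) : ℤ)) := by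
        intro x0
        have h2 := shift_eq_sum_fwdDiff_iter (Pi.single 0 1) F (x0 : ℕ)
          (Fin.cons 0 fun i => ((y i : ℕ) : ℤ))
        have h3 : (Fin.cons 0 (fun i => ((y i : ℕ) : ℤ)) : Fin (n + 1) → ℤ) + (x0 : ℕ) • Pi.single 0 1
            = (fun i => (((Fin.consEquiv (fun _ : Fin (n + 1) => Fin p)) (x0, y) i : ℕ) : ℤ)) := by
          funext j
          refine Fin.cases ?_ (fun j => ?_) j
          · simp [Fin.consEquiv]
          · simp [Fin.consEquiv]
        rw [h3] at h2
        rw [h2]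
        simp only [nsmul_eq_mul]
        apply Finset.sum_subset
        · intro a ha
          simp at ha ⊢
          have := x0.2
          omega
        · intro a _ ha
          simp at ha
          rw [Nat.choose_eq_zero_of_lt (by omega)]; simp
      simp_rw [h1]
      rw [Finset.sum_comm]
      apply Finset.sum_congr rfl; intro a _
      rw [← Finset.sum_mul, ← sum_choose_fin]
      push_cast; rfl
    rw [key]
    apply Finset.dvd_sum
    intro a ha
    simp at ha
    have hdeg := (h.iter 0 a).cons
    by_cases haD : D < a
    · rw [show D + 1 - a = 0 by omega] at hdeg
      have : (fun x : Fin n → ℤ => ((fwdDiff (Pi.single (0 : Fin (n + 1)) (1 : ℤ)))^[a] F) (Fin.cons (α := fun _ => ℤ) 0 x)) = 0 := hdeg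
      rw [this]; simp [S]
    · rw [show D + 1 - a = (D - a) + 1 by omega] at hdeg
      have h1 := ih hdeg
      by_cases hap : a + 1 < p
      · have h2 : (p : ℤ) ∣ (p.choose (a + 1) : ℤ) := by
          exact_mod_cast hp.dvd_choose_self (by omega) hap
        refine (pow_dvd_pow _ ?_).trans ((pow_succ' (p : ℤ) _).dvd.trans (mul_dvd_mul h2 h1))
        have : (D - a) / (p - 1) ≤ D / (p - 1) := Nat.div_le_div_right (by omega)
        omega
      · have ha' : a = p - 1 := by omega
        refine Dvd.dvd.mul_left ((pow_dvd_pow _ ?_).trans h1) _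
        have : D / (p - 1) = (D - a) / (p - 1) + 1 := by
          rw [ha', Nat.div_eq_sub_div (by omega) (by omega)]
        omega

open Polynomial in
/-- Fleck's congruence -/
lemma fleck {p : ℕ} (hp : p.Prime) (s : ℕ) : ∀ {f : ℤ → ℤ}, (∀ x, f (x + p) = f x) →
    ∀ {j : ℕ}, 1 + s * (p - 1) ≤ j → ∀ x, ((p : ℤ) ^ s) ∣ ((fwdDiff 1)^[j] f) x := by
  have hp2 := hp.two_le
  obtain ⟨g, hg⟩ := exists_add_pow_prime_eq (R := ℤ[X]) hp (X : ℤ[X]) 1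
  induction s with
  | zero => simp
  | succ s ih =>
    intro f hf j hj x
    let L : Module.End ℤ (ℤ → ℤ) := fwdDiff_aux.fwdDiffₗ ℤ ℤ 1
    have hL : ∀ (k : ℕ) (f : ℤ → ℤ), (L ^ k) f = (fwdDiff 1)^[k] f := fun k f => by
      rw [fwdDiff_aux.coe_fwdDiffₗ_pow]
    have hsh : ∀ (k : ℕ) (f : ℤ → ℤ) x, ((L + 1) ^ k) f x = f (x + k) := by
      intro k f x
      have := fwdDiff_aux.shiftₗ_pow_apply (1 : ℤ) f k x
      simpa [fwdDiff_aux.shiftₗ] using this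
    have h0 := congrArg (aeval L) hg
    simp only [map_add, map_pow, map_mul, aeval_X, map_one, one_pow, mul_one, map_natCast] at h0
    have hcomm : (L + 1) ^ p * aeval L g = aeval L g * (L + 1) ^ p := by
      have : (L + 1) ^ p = aeval L ((X + 1) ^ p : ℤ[X]) := by simp
      rw [this, ← map_mul, ← map_mul, mul_comm]
    have hfp : ((L + 1) ^ p) f = f := by
      funext x; rw [hsh, hf]
    have hper : ∀ x, (aeval L g f) (x + p) = (aeval L g f) x := by
      intro x
      rw [← hsh p (aeval L g f)]
      have := congrArg (fun T : Module.End ℤ (ℤ → ℤ) => T f x) hcomm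
      simp only [Module.End.mul_apply, hfp] at this
      exact this
    have h1 : (L ^ p) f = -((p : ℤ) • (L (aeval L g f))) := by
      have := congrArg (fun T : Module.End ℤ (ℤ → ℤ) => T f) h0
      simp only [LinearMap.add_apply, hfp, Module.End.mul_apply, Module.End.one_apply] at this
      have h3 : (p : Module.End ℤ (ℤ → ℤ)) (L (aeval L g f)) = (p : ℤ) • (L (aeval L g f)) := by
        rw [Module.End.natCast_apply]; simp
      rw [h3] at this
      rw [eq_neg_iff_add_eq_zero]
      have h4 : f = f + ((L ^ p) f + (p : ℤ) • L (aeval L g f)) := by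
        nth_rw 1 [this]; abel
      exact left_eq_add.1 h4
    have hj' : 1 + s * (p - 1) ≤ j - p + 1 := by
      have : (s + 1) * (p - 1) = s * (p - 1) + (p - 1) := by ring
      omega
    have hjp : p ≤ j := by
      have : (s + 1) * (p - 1) = s * (p - 1) + (p - 1) := by ring
      omega
    have h2 : (L ^ j) f = -((p : ℤ) • (L ^ (j - p + 1)) (aeval L g f)) := by
      have : L ^ j = L ^ (j - p) * L ^ p := by rw [← pow_add]; congr 1; omega
      rw [this, Module.End.mul_apply, h1, map_neg, map_smul, pow_succ, Module.End.mul_apply]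
    rw [← hL, h2, hL]
    simp only [Pi.neg_apply, Pi.smul_apply, smul_eq_mul, dvd_neg, pow_succ']
    exact mul_dvd_mul_left _ (ih hper hj' x)

/-- indicator of divisibility -/
def ind (M : ℕ) (y : ℤ) : ℤ := if (M : ℤ) ∣ y then 1 else 0

lemma ind_add (M : ℕ) (y z : ℤ) : ind M (y + M * z) = ind M y := by
  simp only [ind, Int.dvd_add_left (Dvd.intro _ rfl)]

lemma ind_approx {p : ℕ} (hp : p.Prime) (e : ℕ) (y : ℤ) (hy : 0 ≤ y) :
    ((p : ℤ) ^ e) ∣ ind p y - ∑ j ∈ Finset.range (e * (p - 1) + 1),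
      Ring.choose y j * ((fwdDiff 1)^[j] (ind p)) 0 := by
  obtain ⟨m, rfl⟩ := Int.eq_ofNat_of_zero_le hy
  have hper : ∀ x, ind p (x + p) = ind p x := fun x => by simpa using ind_add p x 1
  have h1 := shift_eq_sum_fwdDiff_iter (1 : ℤ) (ind p) m 0
  simp only [zero_add, nsmul_eq_mul, mul_one] at h1
  rw [h1]
  simp only [Ring.choose_natCast]
  have h2 : ∀ (A : ℕ), m + 1 ≤ A → ∑ x ∈ Finset.range (m + 1), ((m.choose x : ℕ) : ℤ) * ((fwdDiff 1)^[x] (ind p)) 0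
      = ∑ x ∈ Finset.range A, ((m.choose x : ℕ) : ℤ) * ((fwdDiff 1)^[x] (ind p)) 0 := by
    intro A hA
    apply Finset.sum_subset
    · intro a ha; simp at ha ⊢; omega
    · intro a _ ha
      simp at ha
      rw [Nat.choose_eq_zero_of_lt (by omega)]; simp
  rw [h2 (e * (p - 1) + 1 + (m + 1)) (by omega), Finset.sum_range_add]
  rw [add_sub_cancel_left]
  apply Finset.dvd_sum
  intro i _
  exact Dvd.dvd.mul_left (fleck hp e hper (by omega) 0) _

theorem ax {p : ℕ} (hp : p.Prime) {n d e : ℕ} (hd : 1 ≤ d) (he : e * d < n)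
    {F : (Fin n → ℤ) → ℤ} (hF : DegLT (d + 1) F) :
    ((p : ℤ) ^ e) ∣ S p (fun x => ind p (F x)) := by
  have hp2 := hp.two_le
  obtain ⟨K, hK⟩ : ∃ K : ℤ, ∀ x : Fin n → Fin p, 0 ≤ F (fun i => ((x i : ℕ) : ℤ)) + p * K := by
    refine ⟨∑ x : Fin n → Fin p, |F (fun i => ((x i : ℕ) : ℤ))|, fun x => ?_⟩
    have h1 := Finset.single_le_sum (f := fun x : Fin n → Fin p => |F (fun i => ((x i : ℕ) : ℤ))|)
      (fun i _ => abs_nonneg _) (Finset.mem_univ x)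
    have h2 := neg_abs_le (F (fun i => ((x i : ℕ) : ℤ)))
    have h3 := abs_nonneg (F (fun i => ((x i : ℕ) : ℤ)))
    have : (1 : ℤ) ≤ p := by exact_mod_cast hp.one_le
    nlinarith
  have hF' : DegLT (d + 1) (F + fun _ => p * K) := hF.add ((DegLT.const _).mono (by omega))
  set c : ℕ → ℤ := fun j => ((fwdDiff 1)^[j] (ind p)) 0 with hc
  have h1 : ((p : ℤ) ^ e) ∣ S p (fun x => ind p (F x)) -
      ∑ j ∈ Finset.range (e * (p - 1) + 1), c j *
        S p (fun x => Ring.choose (F x + p * K) j) := by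
    unfold S
    simp_rw [Finset.mul_sum]
    rw [Finset.sum_comm, ← Finset.sum_sub_distrib]
    apply Finset.dvd_sum
    intro x _
    have := ind_approx hp e _ (hK x)
    rw [ind_add] at this
    simpa only [hc, mul_comm] using this
  rw [dvd_iff_dvd_of_dvd_sub h1]
  apply Finset.dvd_sum
  intro j hj
  simp only [Finset.mem_range] at hj
  have hbox := box_dvd hp (hF'.choose j)
  have hper : ∀ x, ind p (x + p) = ind p x := fun x => by simpa using ind_add p x 1
  rcases Nat.eq_zero_or_pos j with rfl | hj0
  · refine Dvd.dvd.mul_left ((pow_dvd_pow _ ?_).trans hbox) _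
    simp only [zero_mul, Nat.zero_div, Nat.sub_zero]
    nlinarith
  · have hcj := fleck hp ((j - 1) / (p - 1)) hper (j := j) (by
      have := Nat.div_mul_le_self (j - 1) (p - 1)
      omega) 0
    refine (pow_dvd_pow _ ?_).trans ((pow_add _ _ _).dvd.trans (mul_dvd_mul hcj hbox))
    set s := (j - 1) / (p - 1) with hs
    have hs1 : s + 1 ≤ e := by
      have : s < e := by
        rw [hs, Nat.div_lt_iff_lt_mul (by omega)]
        omega
      omega
    have hs2 : j ≤ (s + 1) * (p - 1) := by
      have := Nat.lt_div_mul_add (a := j - 1) (b := p - 1) (by omega)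
      have h6 : (s + 1) * (p - 1) = s * (p - 1) + (p - 1) := by ring
      rw [← hs] at this
      omega
    have hs3 : j * d / (p - 1) ≤ (s + 1) * d := by
      apply Nat.div_le_of_le_mul
      nlinarith
    have hs4 : (s + 1) * d + e ≤ s + n := by
      obtain ⟨t, rfl⟩ := Nat.exists_eq_add_of_le hs1
      obtain ⟨d, rfl⟩ := Nat.exists_eq_add_of_le hd
      nlinarith
    omega
end AxMR
namespace AxMR

lemma dvd_congr_right {a b c : ℤ} (h : a ∣ b) (e : c = b) : a ∣ c := e ▸ h

lemma S_mul {n : ℕ} (a b : ℕ) (f : (Fin n → ℤ) → ℤ) :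
    S (b * a) f = ∑ y : Fin n → Fin a, S b (fun z => f (fun i => ((y i : ℕ) : ℤ) + a * z i)) := by
  unfold S
  let E : (Fin n → Fin a) × (Fin n → Fin b) ≃ (Fin n → Fin (b * a)) :=
    (Equiv.prodComm _ _).trans ((Equiv.arrowProdEquivProdArrow (Fin n) (fun _ => Fin b) (fun _ => Fin a)).symm.trans
      (Equiv.arrowCongr (Equiv.refl _) finProdFinEquiv))
  rw [← E.sum_comp, Fintype.sum_prod_type]
  apply Finset.sum_congr rfl; intro y _
  apply Finset.sum_congr rfl; intro z _
  have : ∀ i, ((E (y, z) i : ℕ) : ℤ) = ((y i : ℕ) : ℤ) + a * ((z i : ℕ) : ℤ) := by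
    intro i
    simp [E, Equiv.arrowProdEquivProdArrow, Equiv.arrowCongr]
  simp_rw [this]

lemma S_period {n : ℕ} (a b : ℕ) (f : (Fin n → ℤ) → ℤ)
    (hf : ∀ x z : Fin n → ℤ, f (fun i => x i + b * z i) = f x) :
    S (a * b) f = (a : ℤ) ^ n * S b f := by
  rw [S_mul]
  simp_rw [hf]
  simp [S, Finset.mul_sum]

lemma eval_sub_dvd {n : ℕ} (H : MvPolynomial (Fin n) ℤ) (t : ℤ) (x y : Fin n → ℤ)
    (h : ∀ i, t ∣ x i - y i) : t ∣ MvPolynomial.eval x H - MvPolynomial.eval y H := by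
  induction H using MvPolynomial.induction_on with
  | C a => simp
  | add p q hp hq =>
    simp only [map_add]
    have := dvd_add hp hq
    exact dvd_congr_right this (by ring)
  | mul_X p i hp =>
    simp only [map_mul, MvPolynomial.eval_X]
    have := dvd_add (hp.mul_right (x i)) ((h i).mul_left (MvPolynomial.eval y p))
    exact dvd_congr_right this (by ring)

lemma taylor {n : ℕ} (Q : MvPolynomial (Fin n) ℤ) (p : ℤ) (y : Fin n → ℤ) :
    ∃ (a : Fin n → ℤ) (q2 H : MvPolynomial (Fin n) ℤ), q2.totalDegree ≤ 2 ∧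
      ∀ z : Fin n → ℤ, MvPolynomial.eval (fun i => y i + p * z i) Q =
        MvPolynomial.eval y Q + p * (∑ i, a i * z i) + p ^ 2 * MvPolynomial.eval z q2
          + p ^ 3 * MvPolynomial.eval z H := by
  induction Q using MvPolynomial.induction_on with
  | C c => exact ⟨0, 0, 0, by simp, by simp⟩
  | add P Q hP hQ =>
    obtain ⟨a, q, H, h1, h2⟩ := hP
    obtain ⟨a', q', H', h1', h2'⟩ := hQ
    refine ⟨a + a', q + q', H + H', ?_, ?_⟩
    · exact (MvPolynomial.totalDegree_add _ _).trans (max_le h1 h1')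
    · intro z
      simp only [map_add, h2, h2', Pi.add_apply, add_mul, Finset.sum_add_distrib]
      ring
  | mul_X P j hP =>
    obtain ⟨a, q, H, h1, h2⟩ := hP
    refine ⟨fun i => y j * a i + if i = j then MvPolynomial.eval y P else 0,
      MvPolynomial.C (y j) * q + (∑ i, MvPolynomial.C (a i) * MvPolynomial.X i) * MvPolynomial.X j,
      MvPolynomial.C (y j) * H + MvPolynomial.X j * q + MvPolynomial.C p * MvPolynomial.X j * H,
      ?_, ?_⟩
    · refine (MvPolynomial.totalDegree_add _ _).trans (max_le ?_ ?_)
      · refine (MvPolynomial.totalDegree_mul _ _).trans ?_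
        simpa only [MvPolynomial.totalDegree_C, zero_add] using h1
      · refine (MvPolynomial.totalDegree_mul _ _).trans ?_
        have : (∑ i, MvPolynomial.C (a i) * MvPolynomial.X i : MvPolynomial (Fin n) ℤ).totalDegree ≤ 1 := by
          apply MvPolynomial.totalDegree_finsetSum_le
          intro i _
          refine (MvPolynomial.totalDegree_mul _ _).trans ?_
          simp only [MvPolynomial.totalDegree_C, MvPolynomial.totalDegree_X, zero_add, le_refl]
        simp only [MvPolynomial.totalDegree_X]
        omega
    · intro z
      simp only [map_add, map_mul, map_sum, MvPolynomial.eval_X, MvPolynomial.eval_C, h2, add_mul,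
        Finset.sum_add_distrib, ite_mul, zero_mul, Finset.sum_ite_eq', Finset.mem_univ, if_true,
        mul_assoc, ← Finset.mul_sum]
      ring

lemma ind_mul {p M : ℕ} (hp : p ≠ 0) (t : ℤ) : ind (p * M) (p * t) = ind M t := by
  have : (p : ℤ) ≠ 0 := by exact_mod_cast hp
  simp only [ind, Nat.cast_mul, mul_dvd_mul_iff_left this]

lemma ind_eq_zero {M : ℕ} {t : ℤ} (h : ¬ (M : ℤ) ∣ t) : ind M t = 0 := by simp [ind, h]

lemma hensel {p : ℕ} (hp : p.Prime) (s : ℕ) {n : ℕ} (c : ℤ) (a : Fin n → ℤ)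
    (H : MvPolynomial (Fin n) ℤ) (i0 : Fin n) (ha : ¬ (p : ℤ) ∣ a i0) (f : (Fin n → ℤ) → ℤ)
    (hf : ∀ z, f z = c + ∑ i, a i * z i + p * MvPolynomial.eval z H) :
    S (p ^ s) (fun z => ind (p ^ s) (f z)) = (p : ℤ) ^ (s * (n - 1)) := by
  classical
  have inj : ∀ x y : Fin n → ℤ, (∀ i, i ≠ i0 → x i = y i) → ((p ^ s : ℕ) : ℤ) ∣ f x - f y →
      ((p ^ s : ℕ) : ℤ) ∣ x i0 - y i0 := by
    intro x y hxy hd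
    obtain ⟨t, ht⟩ := eval_sub_dvd H (x i0 - y i0) x y (by
      intro i
      by_cases hi : i = i0
      · rw [hi]
      · rw [hxy i hi]; simp)
    have h1 : ∑ i, a i * x i - ∑ i, a i * y i = a i0 * (x i0 - y i0) := by
      rw [← Finset.sum_sub_distrib, Finset.sum_eq_single i0]
      · ring
      · intro i _ hi; rw [hxy i hi]; ring
      · simp
    have h2 : f x - f y = (a i0 + p * t) * (x i0 - y i0) := by
      rw [hf, hf]; linear_combination h1 + p * ht
    rw [h2] at hd
    refine IsCoprime.dvd_of_dvd_mul_left ?_ hd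
    push_cast
    apply IsCoprime.pow_left
    rw [(Nat.prime_iff_prime_int.1 hp).coprime_iff_not_dvd]
    rwa [Int.dvd_add_left (Dvd.intro _ rfl)]
  set M := p ^ s with hM
  have hMpos : 0 < M := Nat.pow_pos hp.pos
  have hM0 : (M : ℤ) ≠ 0 := by exact_mod_cast hMpos.ne'
  have : NeZero M := ⟨hMpos.ne'⟩
  let g : (Fin n → Fin M) → Fin M := fun x =>
    ⟨((f fun i => ((x i : ℕ) : ℤ)) % M).toNat, by
      have h1 := Int.emod_lt_of_pos (f fun i => ((x i : ℕ) : ℤ)) (b := M) (by exact_mod_cast hMpos)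
      have h2 := Int.emod_nonneg (f fun i => ((x i : ℕ) : ℤ)) hM0
      omega⟩
  have hg : ∀ x, ((g x : ℕ) : ℤ) = (f fun i => ((x i : ℕ) : ℤ)) % M := by
    intro x
    exact Int.toNat_of_nonneg (Int.emod_nonneg _ hM0)
  let Φ : (Fin n → Fin M) → (Fin n → Fin M) := fun x => Function.update x i0 (g x)
  have hΦ : Function.Injective Φ := by
    intro x y hxy
    have h1 : ∀ i, i ≠ i0 → x i = y i := by
      intro i hi
      have := congrFun hxy i
      simpa [Φ, hi] using this
    have h2 : g x = g y := by
      have := congrFun hxy i0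
      simpa [Φ] using this
    have h3 : (M : ℤ) ∣ (f fun i => ((x i : ℕ) : ℤ)) - (f fun i => ((y i : ℕ) : ℤ)) := by
      apply Int.ModEq.dvd
      have h4 := hg x
      rw [h2, hg y] at h4
      exact h4
    have h4 := inj _ _ (by intro i hi; simp [h1 i hi]) h3
    funext i
    by_cases hi : i = i0
    · subst hi
      have h5 : ((y i : ℕ) : ℤ) ≡ ((x i : ℕ) : ℤ) [ZMOD M] := (Int.modEq_iff_dvd).2 h4
      have h6 := (Int.natCast_modEq_iff).1 h5
      apply Fin.ext
      exact (Nat.ModEq.eq_of_lt_of_lt h6 (y i).2 (x i).2).symm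
    · exact h1 i hi
  have hbij : Function.Bijective Φ := Finite.injective_iff_bijective.1 hΦ
  have h1 : S M (fun z => ind M (f z)) = ∑ x, (fun u : Fin n → Fin M => if u i0 = 0 then (1 : ℤ) else 0) (Φ x) := by
    unfold S
    apply Finset.sum_congr rfl; intro x _
    have : g x = 0 ↔ (M : ℤ) ∣ (f fun i => ((x i : ℕ) : ℤ)) := by
      rw [Int.dvd_iff_emod_eq_zero, ← hg]
      constructor
      · intro h; rw [h]; simp
      · intro h; apply Fin.ext; simpa using h
    simp [ind, Φ, this]
  rw [h1, hbij.sum_comp (fun u : Fin n → Fin M => if u i0 = 0 then (1 : ℤ) else 0)]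
  have h2 : (Finset.univ.filter fun u : Fin n → Fin M => u i0 = 0)
      = Fintype.piFinset (fun i => if i = i0 then ({0} : Finset (Fin M)) else Finset.univ) := by
    ext u
    simp only [Finset.mem_filter, Finset.mem_univ, true_and, Fintype.mem_piFinset]
    constructor
    · intro h i
      by_cases hi : i = i0
      · subst hi; simp [h]
      · simp [hi]
    · intro h
      simpa using h i0
  rw [Finset.sum_boole, h2, Fintype.card_piFinset]
  have h3 : ∏ i, (if i = i0 then ({0} : Finset (Fin M)) else Finset.univ).card = M ^ (n - 1) := by
    rw [← Finset.mul_prod_erase Finset.univ _ (Finset.mem_univ i0)]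
    rw [Finset.prod_congr rfl (g := fun _ => M)]
    · simp [Finset.card_erase_of_mem]
    · intro i hi
      simp at hi
      simp [hi]
  rw [h3, hM]
  push_cast
  rw [pow_mul]

theorem mr {p : ℕ} (hp : p.Prime) {n : ℕ} (hn : 2 ≤ n) (r : ℕ) : r ≠ 1 →
    ∀ Q : MvPolynomial (Fin n) ℤ, ((p : ℤ) ^ ((r * n + 1) / 2 - 1)) ∣
      S (p ^ r) (fun x => ind (p ^ r) (MvPolynomial.eval x Q)) := by
  induction r using Nat.strong_induction_on with
  | _ r ih =>
  intro hr1 Q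
  rcases Nat.eq_zero_or_pos r with rfl | hr0
  · simp
  obtain ⟨u, rfl⟩ : ∃ u, r = u + 2 := ⟨r - 2, by omega⟩
  have hp0 : (p : ℤ) ≠ 0 := by exact_mod_cast hp.ne_zero
  rw [pow_succ, S_mul]
  apply Finset.dvd_sum
  intro y _
  obtain ⟨a, q2, H, hq2, hT⟩ := taylor Q p (fun i => ((y i : ℕ) : ℤ))
  simp_rw [hT]
  by_cases hc : (p : ℤ) ∣ MvPolynomial.eval (fun i => ((y i : ℕ) : ℤ)) Q
  swap
  · have : (fun z : Fin n → ℤ => ind (p ^ (u + 1) * p) (MvPolynomial.eval (fun i => ((y i : ℕ) : ℤ)) Q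
        + p * (∑ i, a i * z i) + p ^ 2 * MvPolynomial.eval z q2
          + p ^ 3 * MvPolynomial.eval z H)) = fun _ => 0 := by
      funext z
      apply ind_eq_zero
      intro h
      apply hc
      have h1 : (p : ℤ) ∣ ((p ^ (u + 1) * p : ℕ) : ℤ) := by push_cast; exact Dvd.intro_left _ rfl
      have h2 := h1.trans h
      have h3 : (p : ℤ) ∣ p * (∑ i, a i * z i + p * MvPolynomial.eval z q2
          + p ^ 2 * MvPolynomial.eval z H) := Dvd.intro _ rfl
      have h4 := dvd_sub h2 h3
      exact dvd_congr_right h4 (by ring)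
    rw [this]; simp [S]
  obtain ⟨c, hc⟩ := hc
  rw [hc]
  by_cases ha : ∃ i0, ¬ (p : ℤ) ∣ a i0
  · obtain ⟨i0, ha⟩ := ha
    have := hensel hp (u + 1) c a (q2 + MvPolynomial.C (p : ℤ) * H) i0 ha _ (fun z => rfl)
    have h2 : (fun z : Fin n → ℤ => ind (p ^ (u + 1) * p) (p * c
        + p * (∑ i, a i * z i) + p ^ 2 * MvPolynomial.eval z q2
          + p ^ 3 * MvPolynomial.eval z H)) = fun z => ind (p ^ (u + 1)) (c + ∑ i, a i * z i + p * MvPolynomial.eval z (q2 + MvPolynomial.C (p : ℤ) * H)) := by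
      funext z
      rw [mul_comm (p ^ (u + 1)) p, ← ind_mul (p := p) (M := p ^ (u + 1)) hp.ne_zero]
      congr 1
      simp only [map_add, map_mul, MvPolynomial.eval_C]
      ring
    rw [h2, this]
    apply pow_dvd_pow
    obtain ⟨m, rfl⟩ := Nat.exists_eq_add_of_le hn
    have : (u + 2) * (2 + m) = u * m + 2 * u + 2 * m + 4 := by ring
    have : (u + 1) * (2 + m - 1) = u * m + u + m + 1 := by
      rw [show 2 + m - 1 = m + 1 by omega]; ring
    omega
  push Not at ha
  choose b hb using ha
  have hab : ∀ z : Fin n → ℤ, ∑ i, a i * z i = p * ∑ i, b i * z i := by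
    intro z
    rw [Finset.mul_sum]
    apply Finset.sum_congr rfl; intro i _
    rw [hb]; ring
  simp_rw [hab]
  by_cases hc2 : (p : ℤ) ∣ c
  swap
  · have : (fun z : Fin n → ℤ => ind (p ^ (u + 1) * p) (p * c
        + p * (p * ∑ i, b i * z i) + p ^ 2 * MvPolynomial.eval z q2
          + p ^ 3 * MvPolynomial.eval z H)) = fun _ => 0 := by
      funext z
      apply ind_eq_zero
      intro h
      apply hc2
      have h1 : (p : ℤ) * p ∣ ((p ^ (u + 1) * p : ℕ) : ℤ) := by
        push_cast; rw [pow_succ, mul_assoc]; exact Dvd.intro_left _ rfl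
      have h2 := h1.trans h
      rw [← mul_dvd_mul_iff_left hp0]
      have h3 : (p : ℤ) * p ∣ p * p * (∑ i, b i * z i + MvPolynomial.eval z q2
          + p * MvPolynomial.eval z H) := Dvd.intro _ rfl
      have h4 := dvd_sub h2 h3
      exact dvd_congr_right h4 (by ring)
    rw [this]; simp [S]
  obtain ⟨c', rfl⟩ := hc2
  set R0 : MvPolynomial (Fin n) ℤ := MvPolynomial.C c' +
    ∑ i, MvPolynomial.C (b i) * MvPolynomial.X i + q2 with hR0
  have hR0d : R0.totalDegree ≤ 2 := by
    refine (MvPolynomial.totalDegree_add _ _).trans (max_le ?_ hq2)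
    refine (MvPolynomial.totalDegree_add _ _).trans (max_le (by simp only [MvPolynomial.totalDegree_C]; omega) ?_)
    apply MvPolynomial.totalDegree_finsetSum_le
    intro i _
    refine (MvPolynomial.totalDegree_mul _ _).trans ?_
    simp only [MvPolynomial.totalDegree_C, MvPolynomial.totalDegree_X]; omega
  set R : MvPolynomial (Fin n) ℤ := R0 + MvPolynomial.C (p : ℤ) * H with hR
  have h2 : (fun z : Fin n → ℤ => ind (p ^ (u + 1) * p) (p * (p * c')
        + p * (p * ∑ i, b i * z i) + p ^ 2 * MvPolynomial.eval z q2
          + p ^ 3 * MvPolynomial.eval z H)) = fun z => ind (p ^ u) (MvPolynomial.eval z R) := by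
    funext z
    rw [show p ^ (u + 1) * p = p * (p * p ^ u) by ring, ← ind_mul (p := p) (M := p ^ u) hp.ne_zero,
      ← ind_mul (p := p) (M := p * p ^ u) hp.ne_zero]
    congr 1
    simp [hR, hR0]
    ring
  rw [h2, pow_succ', S_period]
  swap
  · intro x z
    have h3 := eval_sub_dvd R ((p ^ u : ℕ) : ℤ) (fun i => x i + (p ^ u : ℕ) * z i) x (by
      intro i; simp)
    obtain ⟨t, ht⟩ := h3
    rw [sub_eq_iff_eq_add'.1 ht, ind_add]
  by_cases hu : u = 1
  · subst hu
    have h3 : (fun z : Fin n → ℤ => ind (p ^ 1) (MvPolynomial.eval z R)) =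
        fun z => ind p (MvPolynomial.eval z R0) := by
      funext z
      rw [pow_one, hR, map_add, map_mul, MvPolynomial.eval_C, ind_add]
    rw [h3, pow_one]
    have h4 := ax hp (n := n) (d := 2) (e := (n + 1) / 2 - 1) (by norm_num) (by omega)
      (DegLT.eval R0 hR0d)
    refine (pow_dvd_pow _ ?_).trans ((pow_add _ _ _).dvd.trans (mul_dvd_mul_left _ h4))
    omega
  · have h4 := ih u (by omega) hu R
    refine (pow_dvd_pow _ ?_).trans ((pow_add _ _ _).dvd.trans (mul_dvd_mul_left _ h4))
    have : (u + 2) * n = u * n + 2 * n := by ring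
    omega
end AxMR
namespace AxMR

lemma sum_fin_eq_S (M : ℕ) (g : ℤ → ℤ) :
    ∑ i : Fin M, g ((i : ℕ) : ℤ) = S (n := 1) M (fun z => g (z 0)) := by
  unfold S
  rw [← (Equiv.funUnique (Fin 1) (Fin M)).symm.sum_comp]
  rfl

lemma count1 {p : ℕ} (hp : p.Prime) {r q t : ℕ} (htq : t ≤ q) (hqr : q ≤ r) (w Y : ℤ)
    (hw : ¬ (p : ℤ) ∣ w ∨ t = 0) :
    ∑ i : Fin (p ^ q), ind (p ^ r) (Y - p ^ (r - t) * w * ((i : ℕ) : ℤ))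
      = (p : ℤ) ^ (q - t) * ind (p ^ (r - t)) Y := by
  have hr : p ^ r = p ^ (r - t) * p ^ t := by rw [← pow_add]; congr 1; omega
  by_cases hY : ((p ^ (r - t) : ℕ) : ℤ) ∣ Y
  swap
  · rw [ind_eq_zero hY, mul_zero]
    apply Finset.sum_eq_zero
    intro i _
    apply ind_eq_zero
    intro h
    apply hY
    have h1 : ((p ^ (r - t) : ℕ) : ℤ) ∣ ((p ^ r : ℕ) : ℤ) := by
      rw [hr]; push_cast; exact Dvd.intro _ rfl
    have h2 : ((p ^ (r - t) : ℕ) : ℤ) ∣ p ^ (r - t) * w * ((i : ℕ) : ℤ) := by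
      push_cast; rw [mul_assoc]; exact Dvd.intro _ rfl
    exact dvd_congr_right (dvd_add (h1.trans h) h2) (by ring)
  obtain ⟨Y', rfl⟩ := hY
  have h1 : ∀ i : ℤ, ind (p ^ r) (((p ^ (r - t) : ℕ) : ℤ) * Y' - p ^ (r - t) * w * i)
      = ind (p ^ t) (Y' - w * i) := by
    intro i
    rw [hr, ← ind_mul (p := p ^ (r - t)) (M := p ^ t) (pow_ne_zero _ hp.ne_zero)]
    congr 1
    push_cast; ring
  simp_rw [h1]
  have h2 : ind (p ^ (r - t)) (((p ^ (r - t) : ℕ) : ℤ) * Y') = 1 := by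
    simp [ind]
  rw [h2, sum_fin_eq_S (p ^ q) (fun i => ind (p ^ t) (Y' - w * i)),
    show p ^ q = p ^ (q - t) * p ^ t by rw [← pow_add]; congr 1; omega, S_period]
  · have h3 : S (n := 1) (p ^ t) (fun z => ind (p ^ t) (Y' - w * z 0)) = 1 := by
      rcases hw with hw | rfl
      · have := hensel hp t (n := 1) Y' (fun _ => -w) 0 0 (by simpa using hw)
          (fun z => Y' - w * z 0) (by intro z; simp; ring)
        simpa using this
      · have hs : Subsingleton (Fin (p ^ 0)) := by rw [pow_zero]; infer_instance
        have h5 : Fintype.card (Fin 1 → Fin (p ^ 0)) = 1 := by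
          rw [Fintype.card_fun]; simp
        simp only [S, ind, pow_zero, Nat.cast_one, one_dvd, if_true, Finset.sum_const,
          Finset.card_univ] at h5 ⊢
        simp
    rw [h3]; simp
  · intro x z
    rw [show Y' - w * (x 0 + ((p ^ t : ℕ) : ℤ) * z 0) = Y' - w * x 0 + ((p ^ t : ℕ) : ℤ) * (-w * z 0) by ring, ind_add]

lemma val_split {p : ℕ} {r : ℕ} (c : ℤ) : ∀ q : ℕ, q ≤ r → (p : ℤ) ^ (r - q) ∣ c →
    ∃ t ≤ q, ∃ w : ℤ, (¬ (p : ℤ) ∣ w ∨ t = 0) ∧ c = p ^ (r - t) * w := by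
  intro q
  induction q with
  | zero =>
    rintro _ ⟨w, hw⟩
    exact ⟨0, le_rfl, w, Or.inr rfl, hw⟩
  | succ q ih =>
    rintro hq ⟨w, hw⟩
    by_cases h : (p : ℤ) ∣ w
    · obtain ⟨w2, rfl⟩ := h
      obtain ⟨t, ht, w', h1, h2⟩ := ih (by omega) ⟨w2, by
        rw [hw, ← mul_assoc, ← pow_succ]; congr 2; omega⟩
      exact ⟨t, by omega, w', h1, h2⟩
    · exact ⟨q + 1, le_rfl, w, Or.inl h, hw⟩

lemma local_dvd {p : ℕ} (hp : p.Prime) {r q n d : ℕ} (hr : 1 ≤ r) (hqr : q ≤ r) (hn : 2 ≤ n)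
    (hd : 1 ≤ d) (Q : MvPolynomial (Fin n) ℤ) (hQ : Q.totalDegree ≤ d) (k c : ℤ)
    (hc : (p : ℤ) ^ (r - q) ∣ c) :
    (p : ℤ) ^ (if r = 1 then (n + d - 1) / d + q - 1 else (r * n + 1) / 2 + q - 1) ∣
      ∑ i : Fin (p ^ q), S (p ^ r) (fun x => ind (p ^ r) (MvPolynomial.eval x Q - (k + c * ((i : ℕ) : ℤ)))) := by
  obtain ⟨t, ht, w, hw, rfl⟩ := val_split c q hqr hc
  set Q' := Q - MvPolynomial.C k with hQ'
  have hQ'd : Q'.totalDegree ≤ d := by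
    refine (MvPolynomial.totalDegree_sub _ _).trans (max_le hQ ?_)
    simp only [MvPolynomial.totalDegree_C]; omega
  have key : ∑ i : Fin (p ^ q), S (p ^ r) (fun x => ind (p ^ r) (MvPolynomial.eval x Q - (k + p ^ (r - t) * w * ((i : ℕ) : ℤ))))
      = (p : ℤ) ^ (q - t) * (p ^ (t * n) * S (p ^ (r - t)) (fun x => ind (p ^ (r - t)) (MvPolynomial.eval x Q'))) := by
    have h1 := S_period (n := n) (p ^ t) (p ^ (r - t)) (fun x => ind (p ^ (r - t)) (MvPolynomial.eval x Q')) (by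
      intro x z
      have h3 := eval_sub_dvd Q' ((p ^ (r - t) : ℕ) : ℤ) (fun i => x i + (p ^ (r - t) : ℕ) * z i) x (by
        intro i; simp)
      obtain ⟨s, hs⟩ := h3
      rw [sub_eq_iff_eq_add'.1 hs, ind_add])
    push_cast at h1
    rw [pow_mul, ← h1, ← pow_add, show t + (r - t) = r by omega]
    unfold S
    rw [Finset.sum_comm, Finset.mul_sum]
    apply Finset.sum_congr rfl; intro x _
    rw [← count1 hp ht hqr w _ hw]
    apply Finset.sum_congr rfl; intro i _
    simp only [hQ', map_sub, MvPolynomial.eval_C, sub_sub]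
  rw [key]
  have hdiv : 1 ≤ (n + d - 1) / d := by
    rw [Nat.le_div_iff_mul_le (by omega)]; omega
  have hax : ((p : ℤ) ^ ((n + d - 1) / d - 1)) ∣ S p (fun x => ind p (MvPolynomial.eval x Q')) := by
    refine ax hp hd ?_ (DegLT.eval Q' hQ'd)
    have h1 := Nat.div_mul_le_self (n + d - 1) d
    rw [Nat.sub_mul]
    omega
  have fin : ∀ {E E' : ℕ} {T : ℤ}, (p : ℤ) ^ E' ∣ T → E ≤ (q - t) + (t * n + E') →
      (p : ℤ) ^ E ∣ (p : ℤ) ^ (q - t) * (p ^ (t * n) * T) := by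
    intro E E' T h1 h2
    refine (pow_dvd_pow _ h2).trans ?_
    rw [pow_add, pow_add]
    exact mul_dvd_mul_left _ (mul_dvd_mul_left _ h1)
  by_cases hr1 : r = 1
  · subst hr1
    simp only [if_true]
    rcases Nat.eq_zero_or_pos t with rfl | ht0
    · simp only [Nat.sub_zero, pow_one] at fin ⊢
      exact fin hax (by omega)
    · obtain rfl : t = 1 := by omega
      refine fin (E' := 0) (by simp) ?_
      have : (n + d - 1) / d ≤ n := by
        apply Nat.div_le_of_le_mul
        obtain ⟨d, rfl⟩ := Nat.exists_eq_add_of_le hd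
        obtain ⟨n, rfl⟩ := Nat.exists_eq_add_of_le hn
        have : (1 + d) * (2 + n) = 2 + n + 2 * d + d * n := by ring
        omega
      omega
  · simp only [hr1, if_false]
    obtain ⟨u, rfl⟩ : ∃ u, r = u + t := ⟨r - t, by omega⟩
    rw [Nat.add_sub_cancel]
    have hY : 2 * t ≤ t * n := by nlinarith
    by_cases hu : u = 1
    · subst hu
      refine fin (E' := 0) (by simp) ?_
      obtain ⟨m, rfl⟩ := Nat.exists_eq_add_of_le hn
      obtain ⟨s, rfl⟩ : ∃ s, t = s + 1 := ⟨t - 1, by omega⟩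
      have h1 : (1 + (s + 1)) * (2 + m) = 4 + 2 * m + 2 * s + s * m := by ring
      have h2 : (s + 1) * (2 + m) = 2 + m + 2 * s + s * m := by ring
      omega
    · refine fin (mr hp hn u hu Q') ?_
      have : (u + t) * n = u * n + t * n := by ring
      omega

lemma eval_int_cast {n : ℕ} {R : Type*} [CommRing R] (Q : MvPolynomial (Fin n) ℤ) (x : Fin n → ℤ) :
    MvPolynomial.eval (fun i => (x i : R)) (MvPolynomial.map (Int.castRingHom R) Q)
      = ((MvPolynomial.eval x Q : ℤ) : R) := by
  rw [MvPolynomial.eval_map]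
  have := MvPolynomial.eval₂_comp_left (Int.castRingHom R) (RingHom.id ℤ) x Q
  rw [RingHom.comp_id, MvPolynomial.eval₂_id] at this
  exact this.symm

lemma card_eq_S {n M : ℕ} (hM : M ≠ 0) (Q : MvPolynomial (Fin n) ℤ) (c : ℤ) :
    (Nat.card {x : Fin n → ZMod M //
      MvPolynomial.eval x (MvPolynomial.map (Int.castRingHom (ZMod M)) Q) = (c : ZMod M)} : ℤ)
      = S M (fun x => ind M (MvPolynomial.eval x Q - c)) := by
  classical
  have : NeZero M := ⟨hM⟩
  have hb : Function.Bijective (fun i : Fin M => ((i : ℕ) : ZMod M)) := by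
    rw [Fintype.bijective_iff_injective_and_card]
    refine ⟨?_, by simp [ZMod.card]⟩
    intro i j hij
    apply Fin.ext
    have := (ZMod.natCast_eq_natCast_iff _ _ _).1 hij
    exact Nat.ModEq.eq_of_lt_of_lt this i.2 j.2
  let e : (Fin n → Fin M) ≃ (Fin n → ZMod M) := Equiv.piCongrRight fun _ => Equiv.ofBijective _ hb
  rw [Nat.card_eq_fintype_card, Fintype.card_subtype, ← Finset.sum_boole, ← e.sum_comp]
  unfold S
  apply Finset.sum_congr rfl; intro x _
  have h1 : e x = fun i => ((((x i : ℕ) : ℤ)) : ZMod M) := by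
    funext i; simp [e]
  rw [h1, eval_int_cast]
  have : ((MvPolynomial.eval (fun i => ((x i : ℕ) : ℤ)) Q : ℤ) : ZMod M) = c ↔
      (M : ℤ) ∣ MvPolynomial.eval (fun i => ((x i : ℕ) : ℤ)) Q - c := by
    rw [← ZMod.intCast_zmod_eq_zero_iff_dvd, Int.cast_sub, sub_eq_zero]
  simp only [ind, this]

lemma lift_poly {n m : ℕ} (Q : MvPolynomial (Fin n) (ZMod m)) :
    ∃ P : MvPolynomial (Fin n) ℤ, MvPolynomial.map (Int.castRingHom (ZMod m)) P = Q ∧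
      P.totalDegree ≤ Q.totalDegree := by
  choose g hg using ZMod.intCast_surjective (n := m)
  refine ⟨∑ s ∈ Q.support, MvPolynomial.monomial s (g (Q.coeff s)), ?_, ?_⟩
  · rw [map_sum]
    conv_rhs => rw [Q.as_sum]
    apply Finset.sum_congr rfl; intro s _
    rw [MvPolynomial.map_monomial]
    simp [hg]
  · apply MvPolynomial.totalDegree_finsetSum_le
    intro s hs
    exact (MvPolynomial.totalDegree_monomial_le _ _).trans (MvPolynomial.le_totalDegree hs)

lemma card_pi_subtype {v : ℕ} {X : Type} {Y : Fin v → Type} (A : X → Prop)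
    (B : (j : Fin v) → Y j → Prop) (E : X ≃ ((j : Fin v) → Y j))
    (h : ∀ x, A x ↔ ∀ j, B j (E x j)) :
    Nat.card {x // A x} = ∏ j, Nat.card {y // B j y} := by
  rw [← Nat.card_pi]
  exact Nat.card_congr ((Equiv.subtypeEquiv E (q := fun y => ∀ j, B j (y j)) h).trans
    Equiv.subtypePiEquivPi)

lemma card_crt {n v : ℕ} (M : Fin v → ℕ) (hco : Pairwise (Function.onFun Nat.Coprime M))
    (Q : MvPolynomial (Fin n) ℤ) (c : ℤ) :
    Nat.card {x : Fin n → ZMod (∏ j, M j) //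
      MvPolynomial.eval x (MvPolynomial.map (Int.castRingHom (ZMod (∏ j, M j))) Q) = (c : ZMod (∏ j, M j))}
    = ∏ j, Nat.card {x : Fin n → ZMod (M j) //
      MvPolynomial.eval x (MvPolynomial.map (Int.castRingHom (ZMod (M j))) Q) = (c : ZMod (M j))} := by
  let e := ZMod.prodEquivPi M hco
  refine card_pi_subtype _ (fun j (y : Fin n → ZMod (M j)) =>
      MvPolynomial.eval y (MvPolynomial.map (Int.castRingHom (ZMod (M j))) Q) = (c : ZMod (M j)))
    ((Equiv.piCongrRight fun _ => e.toEquiv).trans (Equiv.piComm _)) ?_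
  intro x
  rw [← e.injective.eq_iff, funext_iff]
  apply forall_congr'
  intro j
  let φ : ZMod (∏ j, M j) →+* ZMod (M j) := (Pi.evalRingHom _ j).comp e.toRingHom
  have h1 : ∀ y, e y j = φ y := fun y => rfl
  rw [h1, h1, map_intCast]
  rw [MvPolynomial.eval_map, MvPolynomial.eval_map, MvPolynomial.eval₂_comp_left]
  have h2 : φ.comp (Int.castRingHom _) = Int.castRingHom (ZMod (M j)) := RingHom.ext_int _ _
  rw [h2]
  rfl

end AxMR

theorem stmt_0 (v : ℕ) (p r : Fin v → ℕ)
    (hp : ∀ i, (p i).Prime) (hpinj : Function.Injective p)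
    (hr : ∀ i, 1 ≤ r i)
    (m : ℕ) (hm : m = ∏ i, p i ^ r i)
    (n d : ℕ) (hn : 2 ≤ n) (hd : 1 ≤ d)
    (Q : MvPolynomial (Fin n) (ZMod m)) (hQ : Q.totalDegree = d)
    (k : ZMod m) (w : Fin v → ZMod m) (q : Fin v → ℕ) (hq : ∀ i, q i ≤ r i) :
    ((∏ i ∈ Finset.univ.filter (fun i => r i = 1), p i ^ ((n + d - 1) / d + q i - 1)) *
     (∏ i ∈ Finset.univ.filter (fun i => 1 < r i), p i ^ ((r i * n + 1) / 2 + q i - 1))) ∣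
    ∑ i : (j : Fin v) → Fin (p j ^ q j),
      Nat.card {x : Fin n → ZMod m //
        MvPolynomial.eval x Q =
          k + ∑ j, w j * ((m / p j ^ q j : ℕ) : ZMod m) * ((i j : ℕ) : ZMod m)} := by
  classical
  obtain ⟨P, rfl, hPd⟩ := AxMR.lift_poly Q
  rw [hQ] at hPd
  obtain ⟨k, rfl⟩ := ZMod.intCast_surjective k
  choose g hg using ZMod.intCast_surjective (n := m)
  obtain ⟨w, rfl⟩ : ∃ w' : Fin v → ℤ, w = fun j => ((w' j : ℤ) : ZMod m) :=
    ⟨fun j => g (w j), by funext j; rw [hg]⟩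
  clear hg g
  have hco : Pairwise (Function.onFun Nat.Coprime fun j => p j ^ r j) := by
    intro i j hij
    exact Nat.Coprime.pow _ _ ((Nat.coprime_primes (hp i) (hp j)).2 (hpinj.ne hij))
  have hdivm : ∀ l, m / p l ^ q l = p l ^ (r l - q l) * ∏ j ∈ Finset.univ.erase l, p j ^ r j := by
    intro l
    rw [hm, ← Finset.mul_prod_erase Finset.univ _ (Finset.mem_univ l)]
    apply Nat.div_eq_of_eq_mul_right (Nat.pow_pos (hp l).pos)
    rw [← mul_assoc, ← pow_add]
    congr 2
    have := hq l
    omega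
  have hcard : ∀ i : (j : Fin v) → Fin (p j ^ q j),
      Nat.card {x : Fin n → ZMod m //
        MvPolynomial.eval x (MvPolynomial.map (Int.castRingHom (ZMod m)) P) =
          (k : ZMod m) + ∑ j, ((w j : ℤ) : ZMod m) * ((m / p j ^ q j : ℕ) : ZMod m) * ((i j : ℕ) : ZMod m)}
      = ∏ j, Nat.card {x : Fin n → ZMod (p j ^ r j) //
        MvPolynomial.eval x (MvPolynomial.map (Int.castRingHom (ZMod (p j ^ r j))) P) =
          ((k + (w j * (m / p j ^ q j : ℕ)) * ((i j : ℕ) : ℤ) : ℤ) : ZMod (p j ^ r j))} := by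
    intro i
    have h1 : (k : ZMod m) + ∑ j, ((w j : ℤ) : ZMod m) * ((m / p j ^ q j : ℕ) : ZMod m) * ((i j : ℕ) : ZMod m)
        = ((k + ∑ j, w j * (m / p j ^ q j : ℕ) * ((i j : ℕ) : ℤ) : ℤ) : ZMod m) := by
      simp only [Int.cast_add, Int.cast_sum, Int.cast_mul, Int.cast_natCast]
    rw [h1]
    generalize hC : k + ∑ j, w j * (m / p j ^ q j : ℕ) * ((i j : ℕ) : ℤ) = C
    have h2 : ∀ j, ((k + (w j * (m / p j ^ q j : ℕ)) * ((i j : ℕ) : ℤ) : ℤ) : ZMod (p j ^ r j)) = (C : ZMod (p j ^ r j)) := by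
      intro j
      rw [← hC, Int.cast_add, Int.cast_add, Int.cast_sum, Finset.sum_eq_single j]
      · intro l _ hl
        have : ((m / p l ^ q l : ℕ) : ZMod (p j ^ r j)) = 0 := by
          rw [ZMod.natCast_eq_zero_iff, hdivm]
          apply Dvd.dvd.mul_left
          exact Finset.dvd_prod_of_mem (fun j => p j ^ r j) (by simp [hl.symm])
        rw [Int.cast_mul, Int.cast_mul, Int.cast_natCast, this]
        simp
      · simp
    simp_rw [h2]
    clear h1 h2 hC hdivm
    subst hm
    exact AxMR.card_crt (fun j => p j ^ r j) hco P C
  simp_rw [hcard]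
  have hprod := Finset.prod_univ_sum (fun j => (Finset.univ : Finset (Fin (p j ^ q j))))
    (fun j ij => Nat.card {x : Fin n → ZMod (p j ^ r j) //
        MvPolynomial.eval x (MvPolynomial.map (Int.castRingHom (ZMod (p j ^ r j))) P) =
          ((k + (w j * (m / p j ^ q j : ℕ)) * ((ij : ℕ) : ℤ) : ℤ) : ZMod (p j ^ r j))})
  rw [Fintype.piFinset_univ] at hprod
  rw [← hprod]
  have hdvr : ((∏ i ∈ Finset.univ.filter (fun i => r i = 1), p i ^ ((n + d - 1) / d + q i - 1)) *
     (∏ i ∈ Finset.univ.filter (fun i => 1 < r i), p i ^ ((r i * n + 1) / 2 + q i - 1)))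
     = ∏ i, p i ^ (if r i = 1 then (n + d - 1) / d + q i - 1 else (r i * n + 1) / 2 + q i - 1) := by
    rw [← Finset.prod_filter_mul_prod_filter_not Finset.univ (fun i => r i = 1)]
    congr 1
    · apply Finset.prod_congr rfl
      intro i hi
      simp at hi
      simp [hi]
    · apply Finset.prod_congr
      · ext i
        have := hr i
        simp
        omega
      · intro i hi
        simp at hi
        rw [if_neg hi]
  rw [hdvr]
  apply Finset.prod_dvd_prod_of_dvd
  intro j _
  rw [← Int.natCast_dvd_natCast]
  rw [Nat.cast_pow, Nat.cast_sum]
  have hloc := AxMR.local_dvd (hp j) (hr j) (hq j) hn hd P hPd k (w j * (m / p j ^ q j : ℕ)) (by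
    apply Dvd.dvd.mul_left
    rw [hdivm]
    push_cast
    exact Dvd.intro _ rfl)
  simpa only [AxMR.card_eq_S (pow_ne_zero (r j) (hp j).ne_zero)] using hloc
end

section
/- Let p be a prime, let r ≥ 2, and let Q be a polynomial in n ≥ 2 variables over Z_{p^r}. Then for every k ∈ Z_{p^r}, every w ∈ Z_{p^r}, and every natural number q ≤ r, the sum Σ_{i=0}^{p^q - 1} #(k + w p^{r-q} i)_Q is divisible by p^{⌈rn/2⌉ + q - 1}. -/
theorem aux_ite {P P' : Prop} {d : Decidable P} {d' : Decidable P'} (h : P ↔ P') :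
    (@ite ℕ P d 1 0) = @ite ℕ P' d' 1 0 := by
  by_cases hP : P
  · rw [if_pos hP, if_pos (h.1 hP)]
  · rw [if_neg hP, if_neg (fun h' => hP (h.2 h'))]

open Classical in
theorem aux_split {K V : Type*} [Field K] [Fintype K] [AddCommGroup V] [Module K V] [Fintype V]
    (v : V) (φ : V →ₗ[K] K) (h : φ v = 1) (g : V → ℕ) :
    ∑ x, g x = ∑ w : LinearMap.ker φ, ∑ t : K, g (t • v + w) := by
  let e : (LinearMap.ker φ × K) ≃ V :=
    { toFun := fun y => y.2 • v + y.1
      invFun := fun x => (⟨x - φ x • v, by simp [h]⟩, φ x)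
      left_inv := by
        rintro ⟨⟨w, hw⟩, t⟩
        have hw' : φ w = 0 := hw
        simp [h, hw']
      right_inv := by intro x; simp }
  rw [← e.sum_comp, Fintype.sum_prod_type]
  rfl

open Classical in
theorem aux_iso {K V : Type*} [Field K] [Fintype K] [AddCommGroup V] [Module K V]
    [FiniteDimensional K V] (hd : 3 ≤ Module.finrank K V) (B : V →ₗ[K] V →ₗ[K] K) :
    ∃ v, v ≠ 0 ∧ B v v = 0 := by
  let b := Module.finBasis K V
  let f : MvPolynomial (Fin (Module.finrank K V)) K :=
    ∑ i, ∑ j, MvPolynomial.C (B (b i) (b j)) * (MvPolynomial.X i * MvPolynomial.X j)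
  have hev : ∀ x, MvPolynomial.eval x f = B (∑ i, x i • b i) (∑ i, x i • b i) := by
    intro x
    simp only [f, map_sum, map_mul, MvPolynomial.eval_C, MvPolynomial.eval_X, map_smul,
      LinearMap.sum_apply, LinearMap.smul_apply, smul_eq_mul, Finset.mul_sum]
    rw [Finset.sum_comm]
    refine Finset.sum_congr rfl fun i _ => Finset.sum_congr rfl fun j _ => ?_
    ring
  have hdeg : f.totalDegree < Fintype.card (Fin (Module.finrank K V)) := by
    rw [Fintype.card_fin]
    refine lt_of_le_of_lt (b := 2) ?_ (by omega)
    refine MvPolynomial.totalDegree_finsetSum_le fun i _ =>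
      MvPolynomial.totalDegree_finsetSum_le fun j _ => ?_
    refine (MvPolynomial.totalDegree_mul _ _).trans ?_
    rw [MvPolynomial.totalDegree_C, zero_add]
    refine (MvPolynomial.totalDegree_mul _ _).trans ?_
    simp
  obtain ⟨p, hp⟩ := CharP.exists K
  have := char_dvd_card_solutions p hdeg
  have hp1 : p ≠ 1 := CharP.char_ne_one K p
  have hz : MvPolynomial.eval (0 : Fin (Module.finrank K V) → K) f = 0 := by
    rw [hev]; simp
  have : 1 < Fintype.card {x : Fin (Module.finrank K V) → K // MvPolynomial.eval x f = 0} := by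
    by_contra hlt
    have hpos : 0 < Fintype.card {x : Fin (Module.finrank K V) → K // MvPolynomial.eval x f = 0} :=
      Fintype.card_pos_iff.2 ⟨⟨0, hz⟩⟩
    have h1 : Fintype.card {x : Fin (Module.finrank K V) → K // MvPolynomial.eval x f = 0} = 1 := by
      omega
    rw [h1] at this
    exact hp1 (Nat.dvd_one.1 this)
  obtain ⟨⟨x, hx⟩, hne⟩ := Fintype.exists_ne_of_one_lt_card this ⟨0, hz⟩
  refine ⟨∑ i, x i • b i, ?_, by rw [← hev]; exact hx⟩
  intro h0
  apply hne
  apply Subtype.ext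
  funext i
  exact Fintype.linearIndependent_iff.1 b.linearIndependent x h0 i

theorem aux_dual {K V : Type*} [Field K] [AddCommGroup V] [Module K V] (v : V) (hv : v ≠ 0) :
    ∃ φ : V →ₗ[K] K, φ v = 1 := by
  exact Module.Projective.exists_dual_eq_one K hv

theorem aux_ker {K V : Type*} [Field K] [AddCommGroup V] [Module K V]
    [FiniteDimensional K V] (φ : V →ₗ[K] K) (v : V) (h : φ v = 1) :
    Module.finrank K (LinearMap.ker φ) = Module.finrank K V - 1 := by
  have hs : LinearMap.range φ = ⊤ := by
    rw [LinearMap.range_eq_top]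
    intro c
    exact ⟨c • v, by simp [h]⟩
  have := φ.finrank_range_add_finrank_ker
  rw [hs, finrank_top, Module.finrank_self] at this
  omega

open Classical in
theorem aux_line {K : Type*} [Field K] [Fintype K] (a c : K) :
    (∑ t : K, if t * a + c = 0 then 1 else 0) =
      if a = 0 then (Fintype.card K * if c = 0 then 1 else 0) else 1 := by
  split_ifs with ha hc
  · simp [ha, hc]
  · simp [ha, hc]
  · rw [Finset.sum_eq_single (-c / a)]
    · rw [if_pos]; field_simp; ring
    · intro b _ hb
      rw [if_neg]
      intro h
      apply hb
      field_simp
      linear_combination h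
    · simp

open Classical in
theorem aux_quad {K : Type*} [Field K] [Fintype K] (d : ℕ) :
    ∀ (V : Type) [AddCommGroup V] [Module K V] [FiniteDimensional K V] [Fintype V],
    Module.finrank K V = d → ∀ (B : V →ₗ[K] V →ₗ[K] K) (l : V →ₗ[K] K) (c : K),
    Fintype.card K ^ ((d - 1) / 2) ∣ ∑ x : V, if B x x + l x + c = 0 then 1 else 0 := by
  induction d using Nat.strong_induction_on with
  | _ d ih =>
  intro V _ _ _ _ hd B l c
  by_cases hd3 : d < 3
  · have : (d - 1) / 2 = 0 := by omega
    simp [this]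
  push Not at hd3
  obtain ⟨v, hv, hB⟩ := aux_iso (hd ▸ hd3) B
  obtain ⟨φ, hφ⟩ := aux_dual (K := K) v hv
  have hW := aux_ker φ v hφ
  rw [aux_split v φ hφ]
  set W := LinearMap.ker φ
  let lam : W →ₗ[K] K := (B v + B.flip v).domRestrict W
  have key : ∀ w : W, (∑ t : K, if B (t • v + w) (t • v + w) + l (t • v + w) + c = 0 then 1 else 0)
      = if lam w + l v = 0 then
        (Fintype.card K * if B w w + l w + c = 0 then 1 else 0) else 1 := by
    intro w
    rw [← aux_line]
    refine Finset.sum_congr rfl fun t _ => ?_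
    have : B (t • v + w) (t • v + w) + l (t • v + w) + c
      = t * (lam w + l v) + (B w w + l w + c) := by
      simp [lam, hB]; ring
    rw [this]
  rw [Finset.sum_congr rfl fun w _ => key w]
  by_cases hlam : ∃ w1, lam w1 ≠ 0
  · obtain ⟨w1, hw1⟩ := hlam
    obtain ⟨w0, hw0⟩ : ∃ w0, lam w0 = 1 := ⟨(lam w1)⁻¹ • w1, by simp [hw1]⟩
    have hU := aux_ker lam w0 hw0
    rw [aux_split w0 lam hw0, Finset.sum_comm]
    refine Finset.dvd_sum fun s _ => ?_
    have hlu : ∀ u : LinearMap.ker lam, lam (s • w0 + u) = s := by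
      rintro ⟨u, hu⟩
      have hu' : lam u = 0 := hu
      simp [hw0, hu']
    simp only [hlu]
    by_cases hs : s + l v = 0
    · simp only [hs, if_true]
      rw [← Finset.mul_sum]
      have h1 : (d - 1) / 2 = (d - 2 - 1) / 2 + 1 := by omega
      rw [h1, pow_succ']
      refine mul_dvd_mul_left _ ?_
      let B' : LinearMap.ker lam →ₗ[K] LinearMap.ker lam →ₗ[K] K :=
        (B.domRestrict₁₂ W W).domRestrict₁₂ _ _
      let l' : LinearMap.ker lam →ₗ[K] K :=
        ((B (s • w0) + B.flip (s • w0) + l).domRestrict W).domRestrict _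
      have := ih (d - 2) (by omega) (LinearMap.ker lam) (by omega) B' l'
        (B (s • w0) (s • w0) + l (s • w0) + c)
      refine this.trans (dvd_of_eq (Finset.sum_congr rfl fun u _ => ?_))
      have h2 : B' u u + l' u + (B (s • w0) (s • w0) + l (s • w0) + c)
        = B ((s • w0 + u : W) : V) ((s • w0 + u : W) : V) + l ((s • w0 + u : W) : V) + c := by
        have hB' : B' u u = B ((u : W) : V) ((u : W) : V) := rfl
        have hl' : l' u = B (s • w0) ((u : W) : V) + B ((u : W) : V) (s • w0)
          + l ((u : W) : V) := rfl
        rw [hB', hl']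
        simp only [Submodule.coe_add, Submodule.coe_smul, map_add, LinearMap.add_apply]
        ring
      rw [h2]
    · simp only [hs, if_false]
      simp only [Finset.sum_const, Finset.card_univ, smul_eq_mul, mul_one]
      rw [Module.card_eq_pow_finrank (K := K) (V := LinearMap.ker lam)]
      exact pow_dvd_pow _ (by omega)
  · push Not at hlam
    simp only [hlam, zero_add]
    by_cases hs : l v = 0
    · simp only [hs, if_true]
      rw [← Finset.mul_sum]
      have := ih (d - 1) (by omega) W (by omega) (B.domRestrict₁₂ W W) (l.domRestrict W) c
      refine dvd_trans (b := Fintype.card K ^ ((d - 1 - 1) / 2 + 1)) (pow_dvd_pow _ (by omega)) ?_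
      rw [pow_succ']
      exact mul_dvd_mul_left _ this
    · simp only [hs, if_false]
      simp only [Finset.sum_const, Finset.card_univ, smul_eq_mul, mul_one]
      rw [Module.card_eq_pow_finrank (K := K) (V := W)]
      exact pow_dvd_pow _ (by omega)
open Classical in
noncomputable def auxCnt (n M : ℕ) (P : (Fin n → ℤ) → Prop) : ℕ :=
  ∑ x : Fin n → Fin M, if P (fun i => ((x i : ℕ) : ℤ)) then 1 else 0

theorem auxCnt_congr {n M : ℕ} {P P' : (Fin n → ℤ) → Prop} (h : ∀ x, P x ↔ P' x) :
    auxCnt n M P = auxCnt n M P' := by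
  have : P = P' := funext fun x => propext (h x)
  rw [this]

theorem auxCnt_false {n M : ℕ} {P : (Fin n → ℤ) → Prop} (h : ∀ x, ¬ P x) :
    auxCnt n M P = 0 := by
  simp [auxCnt, h]

theorem auxCnt_split (n M K : ℕ) (P : (Fin n → ℤ) → Prop) :
    auxCnt n (M * K) P = ∑ a : Fin n → Fin K,
      auxCnt n M (fun y => P (fun i => ((a i : ℕ) : ℤ) + (K : ℤ) * y i)) := by
  classical
  unfold auxCnt
  let e : (Fin n → Fin M) × (Fin n → Fin K) ≃ (Fin n → Fin (M * K)) :=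
    (Equiv.arrowProdEquivProdArrow (Fin n) (fun _ => Fin M) (fun _ => Fin K)).symm.trans
      (Equiv.arrowCongr (Equiv.refl _) finProdFinEquiv)
  rw [← e.sum_comp, Fintype.sum_prod_type, Finset.sum_comm]
  refine Finset.sum_congr rfl fun a _ => Finset.sum_congr rfl fun y _ => ?_
  have : ∀ i, ((e (y, a) i : ℕ) : ℤ) = ((a i : ℕ) : ℤ) + (K : ℤ) * ((y i : ℕ) : ℤ) := by
    intro i
    simp [e, Equiv.arrowCongr, Equiv.arrowProdEquivProdArrow]
  simp only [this]

theorem auxCnt_periodic (n M K : ℕ) (P : (Fin n → ℤ) → Prop)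
    (h : ∀ a y : Fin n → ℤ, P (fun i => a i + (M : ℤ) * y i) ↔ P a) :
    auxCnt n (K * M) P = K ^ n * auxCnt n M P := by
  classical
  rw [auxCnt_split]
  conv_rhs => rw [auxCnt, Finset.mul_sum]
  refine Finset.sum_congr rfl fun a _ => ?_
  rw [auxCnt_congr (P' := fun _ => P (fun i => ((a i : ℕ) : ℤ))) (fun y => h _ _)]
  simp [auxCnt]

theorem aux_diff {R : Type*} [CommRing R] {n : ℕ} (F : MvPolynomial (Fin n) ℤ)
    (x y : Fin n → R) (d : R) (h : ∀ i, d ∣ x i - y i) :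
    d ∣ MvPolynomial.aeval x F - MvPolynomial.aeval y F := by
  induction F using MvPolynomial.induction_on with
  | C a => simp
  | add f g hf hg =>
    rw [map_add, map_add, add_sub_add_comm]
    exact dvd_add hf hg
  | mul_X f i hf =>
    rw [map_mul, map_mul, MvPolynomial.aeval_X, MvPolynomial.aeval_X]
    have : MvPolynomial.aeval x f * x i - MvPolynomial.aeval y f * y i
      = (MvPolynomial.aeval x f - MvPolynomial.aeval y f) * x i
        + MvPolynomial.aeval y f * (x i - y i) := by ring
    rw [this]
    exact dvd_add (hf.mul_right _) ((h i).mul_left _)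

theorem auxCnt_periodic' (n M K : ℕ) (F : MvPolynomial (Fin n) ℤ) :
    auxCnt n (K * M) (fun x => (M : ℤ) ∣ MvPolynomial.aeval x F)
      = K ^ n * auxCnt n M (fun x => (M : ℤ) ∣ MvPolynomial.aeval x F) := by
  apply auxCnt_periodic
  intro a y
  have := aux_diff F (fun i => a i + (M : ℤ) * y i) a (M : ℤ) (fun i => by simp)
  exact (dvd_iff_dvd_of_dvd_sub this)

open Classical in
theorem auxCnt_bridge (n M : ℕ) [NeZero M] (F : MvPolynomial (Fin n) ℤ) :
    auxCnt n M (fun x => (M : ℤ) ∣ MvPolynomial.aeval x F)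
      = ∑ x : Fin n → ZMod M, if MvPolynomial.aeval x F = 0 then 1 else 0 := by
  have hb : Function.Bijective (fun k : Fin M => ((k : ℕ) : ZMod M)) := by
    rw [Fintype.bijective_iff_injective_and_card]
    refine ⟨?_, by simp [ZMod.card]⟩
    intro a b hab
    have := (ZMod.natCast_eq_natCast_iff' _ _ _).1 hab
    rw [Nat.mod_eq_of_lt a.2, Nat.mod_eq_of_lt b.2] at this
    exact Fin.ext this
  let e : (Fin n → Fin M) ≃ (Fin n → ZMod M) :=
    Equiv.arrowCongr (Equiv.refl _) (Equiv.ofBijective _ hb)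
  rw [← e.sum_comp, auxCnt]
  refine Finset.sum_congr rfl fun x _ => ?_
  have : MvPolynomial.aeval (e x) F
      = ((MvPolynomial.aeval (fun i => ((x i : ℕ) : ℤ)) F : ℤ) : ZMod M) := by
    have h1 : e x = fun i => (Int.castRingHom (ZMod M)) ((x i : ℕ) : ℤ) := by
      funext i; simp [e, Equiv.arrowCongr]
    rw [h1]
    have := MvPolynomial.aeval_algebraMap_apply (B := ZMod M) (fun i => ((x i : ℕ) : ℤ)) F
    simpa [Function.comp_def] using this
  refine aux_ite ?_
  rw [this, ZMod.intCast_zmod_eq_zero_iff_dvd]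

/-- linear form -/
noncomputable def auxL {n : ℕ} (b : Fin n → ℤ) : MvPolynomial (Fin n) ℤ :=
  ∑ i, MvPolynomial.C (b i) * MvPolynomial.X i

/-- quadratic form -/
noncomputable def auxQ {n : ℕ} (A : Matrix (Fin n) (Fin n) ℤ) : MvPolynomial (Fin n) ℤ :=
  ∑ i, ∑ j, MvPolynomial.C (A i j) * (MvPolynomial.X i * MvPolynomial.X j)

open MvPolynomial in
theorem aux_taylor {n : ℕ} (p : ℤ) (a : Fin n → ℤ) (F : MvPolynomial (Fin n) ℤ) :
    ∃ (c : ℤ) (b : Fin n → ℤ) (A : Matrix (Fin n) (Fin n) ℤ) (R : MvPolynomial (Fin n) ℤ),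
      ∀ y : Fin n → ℤ, aeval (fun i => a i + p * y i) F
        = c + p * aeval y (auxL b) + p ^ 2 * aeval y (auxQ A) + p ^ 3 * aeval y R := by
  induction F using MvPolynomial.induction_on with
  | C c => exact ⟨c, 0, 0, 0, by simp [auxL, auxQ]⟩
  | add f g hf hg =>
    obtain ⟨c, b, A, R, h⟩ := hf
    obtain ⟨c', b', A', R', h'⟩ := hg
    refine ⟨c + c', b + b', A + A', R + R', fun y => ?_⟩
    rw [map_add, h, h']
    have h1 : auxL (b + b') = auxL b + auxL b' := by
      simp [auxL, add_mul, Finset.sum_add_distrib]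
    have h2 : auxQ (A + A') = auxQ A + auxQ A' := by
      simp [auxQ, add_mul, Finset.sum_add_distrib]
    rw [h1, h2]
    simp only [map_add]
    ring
  | mul_X f k hf =>
    obtain ⟨c, b, A, R, h⟩ := hf
    refine ⟨c * a k, a k • b + c • Pi.single k 1,
      Matrix.of (fun i j => a k * A i j + b i * (Pi.single k 1 : Fin n → ℤ) j),
      C (a k) * R + auxQ A * X k + C p * R * X k, fun y => ?_⟩
    rw [map_mul, h, aeval_X]
    have h1 : aeval y (auxL (a k • b + c • Pi.single k 1))
      = a k * aeval y (auxL b) + c * y k := by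
      simp [auxL, add_mul, Finset.sum_add_distrib, Finset.mul_sum, Pi.single_apply, mul_assoc]
    have h2 : aeval y (auxQ (Matrix.of (fun i j => a k * A i j + b i * (Pi.single k 1 : Fin n → ℤ) j)))
      = a k * aeval y (auxQ A) + aeval y (auxL b) * y k := by
      simp [auxL, auxQ, add_mul, Finset.sum_add_distrib, Finset.mul_sum, Finset.sum_mul,
        Pi.single_apply, mul_assoc]
    rw [h1, h2]
    simp only [map_add, map_mul, aeval_X, aeval_C]
    simp
    ring

open Classical in
theorem aux_coord (n M : ℕ) [NeZero M] (i : Fin n) :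
    (∑ z : Fin n → ZMod M, if z i = 0 then 1 else 0) = M ^ (n - 1) := by
  rw [← (Equiv.funSplitAt i (ZMod M)).symm.sum_comp, Fintype.sum_prod_type]
  simp [Equiv.funSplitAt, Equiv.piSplitAt, Fintype.card_subtype_compl, ZMod.card]

open MvPolynomial in
theorem aux_hensel {n : ℕ} (p m : ℕ) (hp : p.Prime) (c : ℤ) (b : Fin n → ℤ)
    (R : MvPolynomial (Fin n) ℤ) (i : Fin n) (hi : ¬ (p : ℤ) ∣ b i) :
    auxCnt n (p ^ m) (fun y => ((p ^ m : ℕ) : ℤ) ∣ aeval y (C c + auxL b + C (p : ℤ) * R))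
      = (p ^ m) ^ (n - 1) := by
  classical
  have : NeZero (p ^ m) := ⟨pow_ne_zero _ hp.ne_zero⟩
  rw [auxCnt_bridge]
  set h := C c + auxL b + C (p : ℤ) * R with hh
  let Φ : (Fin n → ZMod (p ^ m)) → (Fin n → ZMod (p ^ m)) :=
    fun y => Function.update y i (aeval y h)
  have hu : ∀ z : ZMod (p ^ m), IsUnit ((b i : ZMod (p ^ m)) + (p : ZMod (p ^ m)) * z) := by
    intro z
    have h1 : IsUnit (b i : ZMod (p ^ m)) := by
      rw [ZMod.coe_int_isUnit_iff_isCoprime]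
      push_cast
      exact IsCoprime.pow_left ((Nat.prime_iff_prime_int.1 hp).coprime_iff_not_dvd.2 hi)
    refine IsNilpotent.isUnit_add_left_of_commute ?_ h1 (Commute.all _ _)
    refine ⟨m, ?_⟩
    rw [mul_pow, ← Nat.cast_pow, ZMod.natCast_self, zero_mul]
  have hinj : Function.Injective Φ := by
    intro y y' hyy
    have hoff : ∀ j, j ≠ i → y j = y' j := by
      intro j hj
      have := congrFun hyy j
      simpa [Φ, hj] using this
    have hv : aeval y h = aeval y' h := by
      have := congrFun hyy i
      simpa [Φ] using this
    obtain ⟨z, hz⟩ := aux_diff R y y' (y i - y' i) (fun j => by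
      by_cases hj : j = i
      · rw [hj]
      · rw [hoff j hj, sub_self]; exact dvd_zero _)
    have hL : aeval y (auxL b) - aeval y' (auxL b) = (b i : ZMod (p ^ m)) * (y i - y' i) := by
      simp only [auxL, map_sum, map_mul, aeval_X, aeval_C]
      rw [← Finset.sum_sub_distrib, Finset.sum_eq_single i]
      · simp; ring
      · intro j _ hj
        rw [hoff j hj, sub_self]
      · simp
    have h0 : (y i - y' i) * ((b i : ZMod (p ^ m)) + (p : ZMod (p ^ m)) * z) = 0 := by
      have h3 : aeval y h - aeval y' h = 0 := sub_eq_zero.2 hv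
      simp only [hh, map_add, map_mul, aeval_C] at h3
      simp at h3
      linear_combination h3 - hL - (p : ZMod (p ^ m)) * hz
    rw [(hu z).mul_left_eq_zero, sub_eq_zero] at h0
    funext j
    by_cases hj : j = i
    · rw [hj, h0]
    · exact hoff j hj
  have hbij := Finite.injective_iff_bijective.1 hinj
  rw [← aux_coord n (p ^ m) i]
  refine Eq.trans ?_ ((Equiv.ofBijective Φ hbij).sum_comp _)
  refine Finset.sum_congr rfl fun y _ => ?_
  simp [Φ]

open MvPolynomial in
theorem aux_r1 {n : ℕ} (p : ℕ) (hp : p.Prime) (e : ℤ) (b : Fin n → ℤ)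
    (A : Matrix (Fin n) (Fin n) ℤ) (R : MvPolynomial (Fin n) ℤ) :
    p ^ ((n - 1) / 2) ∣
      auxCnt n p (fun y => (p : ℤ) ∣ aeval y (C e + auxL b + auxQ A + C (p : ℤ) * R)) := by
  classical
  have : Fact p.Prime := ⟨hp⟩
  rw [auxCnt_bridge]
  let B : (Fin n → ZMod p) →ₗ[ZMod p] (Fin n → ZMod p) →ₗ[ZMod p] ZMod p :=
    Matrix.toLinearMap₂' (ZMod p) (A.map (Int.cast : ℤ → ZMod p))
  let l : (Fin n → ZMod p) →ₗ[ZMod p] ZMod p :=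
    ∑ i, (b i : ZMod p) • LinearMap.proj i
  have h := aux_quad (K := ZMod p) n (Fin n → ZMod p) (by simp) B l (e : ZMod p)
  rw [ZMod.card] at h
  refine h.trans (dvd_of_eq (Finset.sum_congr rfl fun x _ => ?_))
  have h1 : aeval x (C e + auxL b + auxQ A + C (p : ℤ) * R) = B x x + l x + (e : ZMod p) := by
    have hB : B x x = ∑ i, ∑ j, (A i j : ZMod p) * (x i * x j) := by
      simp only [B, Matrix.toLinearMap₂'_apply, Matrix.map_apply, smul_eq_mul]
      refine Finset.sum_congr rfl fun i _ => Finset.sum_congr rfl fun j _ => ?_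
      ring
    rw [hB]
    simp [auxL, auxQ, l]
    ring
  refine aux_ite ?_
  rw [h1]

theorem aux_arith1 (r n : ℕ) (hn : 2 ≤ n) :
    ((r + 2) * n + 1) / 2 - 1 ≤ (r + 1) * (n - 1) := by
  obtain ⟨k, rfl⟩ : ∃ k, n = k + 2 := ⟨n - 2, by omega⟩
  have h1 : (r + 2) * (k + 2) = r * k + 2 * r + 2 * k + 4 := by ring
  have h2 : (r + 1) * (k + 2 - 1) = r * k + r + k + 1 := by
    rw [show k + 2 - 1 = k + 1 by omega]; ring
  rw [h1, h2]
  omega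

open MvPolynomial in
theorem aux_main {n : ℕ} (hn : 2 ≤ n) (p : ℕ) (hp : p.Prime) (r : ℕ) :
    ∀ F : MvPolynomial (Fin n) ℤ,
    (r = 1 → ∃ (e : ℤ) (b : Fin n → ℤ) (A : Matrix (Fin n) (Fin n) ℤ)
      (R : MvPolynomial (Fin n) ℤ), F = C e + auxL b + auxQ A + C (p : ℤ) * R) →
    p ^ ((r * n + 1) / 2 - 1) ∣
      auxCnt n (p ^ r) (fun y => ((p ^ r : ℕ) : ℤ) ∣ aeval y F) := by
  induction r using Nat.strong_induction_on with
  | _ r ih =>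
  intro F hF
  have hp0 : (p : ℤ) ≠ 0 := by exact_mod_cast hp.ne_zero
  match r, ih, hF with
  | 0, _, _ => simp
  | 1, _, hF =>
    obtain ⟨e, b, A, R, rfl⟩ := hF rfl
    have := aux_r1 p hp e b A R
    rw [pow_one]
    refine (pow_dvd_pow _ ?_).trans this
    omega
  | r + 2, ih, _ =>
    rw [show auxCnt n (p ^ (r + 2)) = auxCnt n (p ^ (r + 1) * p) by rw [← pow_succ],
      auxCnt_split]
    refine Finset.dvd_sum fun a _ => ?_
    obtain ⟨c, b, A, R, hT⟩ := aux_taylor (p : ℤ) (fun i => ((a i : ℕ) : ℤ)) F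
    simp only [hT]
    by_cases hb : ∃ i, ¬ (p : ℤ) ∣ b i
    · obtain ⟨i, hi⟩ := hb
      by_cases hc : (p : ℤ) ∣ c
      · obtain ⟨c', rfl⟩ := hc
        have h := aux_hensel p (r + 1) hp c' b (auxQ A + C (p : ℤ) * R) i hi
        rw [auxCnt_congr (P' := fun y => ((p ^ (r + 1) : ℕ) : ℤ) ∣
          aeval y (C c' + auxL b + C (p : ℤ) * (auxQ A + C (p : ℤ) * R))), h, ← pow_mul]
        · exact pow_dvd_pow _ (aux_arith1 r n hn)
        · intro y
          refine Iff.trans ?_ (mul_dvd_mul_iff_left hp0)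
          push_cast
          rw [pow_succ' (p : ℤ) (r + 1)]
          simp only [map_add, map_mul, aeval_C]
          simp only [algebraMap_int_eq, eq_intCast, Int.cast_id]
          ring_nf
      · rw [auxCnt_false]
        · exact dvd_zero _
        · intro y hy
          apply hc
          have h1 : (p : ℤ) ∣ ((p ^ (r + 2) : ℕ) : ℤ) := by
            push_cast; exact dvd_pow_self _ (by omega)
          have h2 := h1.trans hy
          have h3 : (p : ℤ) ∣ p * (aeval y (auxL b) + p * aeval y (auxQ A) + p ^ 2 * aeval y R) :=
            dvd_mul_right _ _
          have := dvd_sub h2 h3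
          ring_nf at this
          exact this
    · push Not at hb
      choose b' hb' using hb
      have hL : ∀ y : Fin n → ℤ, aeval y (auxL b) = p * aeval y (auxL b') := by
        intro y
        simp [auxL, hb', Finset.mul_sum, mul_assoc]
      simp only [hL]
      by_cases hc : (p : ℤ) ^ 2 ∣ c
      · obtain ⟨e, rfl⟩ := hc
        rw [auxCnt_congr (P' := fun y => ((p ^ r : ℕ) : ℤ) ∣
          aeval y (C e + auxL b' + auxQ A + C (p : ℤ) * R)),
          show auxCnt n (p ^ (r + 1)) = auxCnt n (p * p ^ r) by rw [← pow_succ'],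
          auxCnt_periodic']
        · have := ih r (by omega) _ (fun _ => ⟨e, b', A, R, rfl⟩)
          refine dvd_trans ?_ (mul_dvd_mul_left _ this)
          rw [← pow_add]
          apply pow_dvd_pow
          have : (r + 2) * n = r * n + 2 * n := by ring
          omega
        · intro y
          refine Iff.trans ?_ (mul_dvd_mul_iff_left (pow_ne_zero 2 hp0))
          push_cast
          rw [add_comm r 2, pow_add (p : ℤ) 2 r]
          simp only [map_add, map_mul, aeval_C]
          simp only [algebraMap_int_eq, eq_intCast, Int.cast_id]
          ring_nf
      · rw [auxCnt_false]
        · exact dvd_zero _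
        · intro y hy
          apply hc
          have h1 : (p : ℤ) ^ 2 ∣ ((p ^ (r + 2) : ℕ) : ℤ) := by
            push_cast; exact pow_dvd_pow _ (by omega)
          have h2 := h1.trans hy
          have h3 : (p : ℤ) ^ 2 ∣ p ^ 2 * (aeval y (auxL b') + aeval y (auxQ A) + p * aeval y R) :=
            dvd_mul_right _ _
          have := dvd_sub h2 h3
          ring_nf at this
          exact this

open Classical in
theorem aux_i (p : ℕ) (hp : p.Prime) (s t m : ℕ) (u z : ℤ) (hu : ¬ (p : ℤ) ∣ u) :
    (∑ i : Fin (p ^ (s + t)),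
      if ((p ^ (m + t) : ℕ) : ℤ) ∣ z - u * p ^ m * ((i : ℕ) : ℤ) then 1 else 0)
      = p ^ s * if ((p ^ m : ℕ) : ℤ) ∣ z then 1 else 0 := by
  have hp0 : (p : ℤ) ≠ 0 := by exact_mod_cast hp.ne_zero
  have : NeZero (p ^ t) := ⟨pow_ne_zero _ hp.ne_zero⟩
  split_ifs with hz
  · obtain ⟨z', rfl⟩ := hz
    have h1 : ∀ i : ℕ, (((p ^ (m + t) : ℕ) : ℤ) ∣ ((p ^ m : ℕ) : ℤ) * z' - u * p ^ m * (i : ℤ)) ↔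
        ((z' : ZMod (p ^ t)) - (u : ZMod (p ^ t)) * (i : ZMod (p ^ t)) = 0) := by
      intro i
      have : ((z' : ZMod (p ^ t)) - (u : ZMod (p ^ t)) * (i : ZMod (p ^ t)) = 0) ↔
        ((p ^ t : ℕ) : ℤ) ∣ z' - u * i := by
        rw [← ZMod.intCast_zmod_eq_zero_iff_dvd]; push_cast; rfl
      rw [this]
      refine Iff.trans ?_ (mul_dvd_mul_iff_left (pow_ne_zero m hp0))
      push_cast
      rw [pow_add]
      ring_nf
    simp only [h1]
    have hU : IsUnit (u : ZMod (p ^ t)) := by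
      rw [ZMod.coe_int_isUnit_iff_isCoprime]
      push_cast
      exact IsCoprime.pow_left ((Nat.prime_iff_prime_int.1 hp).coprime_iff_not_dvd.2 hu)
    rw [← (finCongr (pow_add p s t)).symm.sum_comp, ← finProdFinEquiv.sum_comp,
      Fintype.sum_prod_type]
    have h2 : ∀ x : Fin (p ^ s), ∑ y : Fin (p ^ t), (if (z' : ZMod (p ^ t)) - (u : ZMod (p ^ t)) *
        ((((finCongr (pow_add p s t)).symm (finProdFinEquiv (x, y)) : ℕ)) : ZMod (p ^ t)) = 0
        then 1 else 0) = 1 := by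
      intro x
      have h3 : ∀ y : Fin (p ^ t),
        ((((finCongr (pow_add p s t)).symm (finProdFinEquiv (x, y)) : ℕ)) : ZMod (p ^ t))
          = ((y : ℕ) : ZMod (p ^ t)) := by
        intro y
        simp
      simp only [h3]
      have hb : Function.Bijective (fun k : Fin (p ^ t) => ((k : ℕ) : ZMod (p ^ t))) := by
        rw [Fintype.bijective_iff_injective_and_card]
        refine ⟨?_, by simp [ZMod.card]⟩
        intro a b hab
        have := (ZMod.natCast_eq_natCast_iff' _ _ _).1 hab
        rw [Nat.mod_eq_of_lt a.2, Nat.mod_eq_of_lt b.2] at this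
        exact Fin.ext this
      refine ((Equiv.ofBijective _ hb).sum_comp (fun y : ZMod (p ^ t) =>
        if (z' : ZMod (p ^ t)) - (u : ZMod (p ^ t)) * y = 0 then 1 else 0)).trans ?_
      obtain ⟨v, hv⟩ := hU
      rw [Finset.sum_eq_single ((v⁻¹ : (ZMod (p ^ t))ˣ) * (z' : ZMod (p ^ t)))]
      · rw [← hv]; simp
      · intro y _ hy
        rw [if_neg]
        intro h
        apply hy
        rw [sub_eq_zero, ← hv] at h
        rw [h]; simp
      · simp
    rw [Finset.sum_congr rfl fun x _ => h2 x]
    simp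
  · rw [mul_zero]
    apply Finset.sum_eq_zero
    intro i _
    rw [if_neg]
    intro h
    apply hz
    have h1 : ((p ^ m : ℕ) : ℤ) ∣ ((p ^ (m + t) : ℕ) : ℤ) := by
      push_cast; exact pow_dvd_pow _ (by omega)
    have h2 : ((p ^ m : ℕ) : ℤ) ∣ u * p ^ m * ((i : ℕ) : ℤ) := ⟨u * (i : ℕ), by push_cast; ring⟩
    have := dvd_add (h1.trans h) h2
    simpa using this

theorem aux_w (p r q : ℕ) (hp : p.Prime) (hq : q ≤ r) (w : ZMod (p ^ r)) :
    ∃ (s t : ℕ) (u : ℤ), s + t = q ∧ ¬ (p : ℤ) ∣ u ∧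
      w * (p : ZMod (p ^ r)) ^ (r - q) = ((u * p ^ (r - t) : ℤ) : ZMod (p ^ r)) := by
  have : NeZero (p ^ r) := ⟨pow_ne_zero _ hp.ne_zero⟩
  have hw : ((w.val : ℕ) : ZMod (p ^ r)) = w := ZMod.natCast_zmod_val w
  have hpr : (p : ZMod (p ^ r)) ^ r = 0 := by rw [← Nat.cast_pow, ZMod.natCast_self]
  by_cases h : p ^ q ∣ w.val
  · obtain ⟨v, hv⟩ := h
    refine ⟨q, 0, 1, by omega, ?_, ?_⟩
    · intro h1
      exact hp.one_lt.ne' (by exact_mod_cast Int.eq_one_of_dvd_one (by positivity) h1)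
    · rw [← hw, hv]
      push_cast
      rw [Nat.sub_zero, hpr, mul_right_comm, ← pow_add, Nat.add_sub_cancel' hq, hpr]
      simp
  · have h0 : w.val ≠ 0 := by rintro h0; rw [h0] at h; exact h (dvd_zero _)
    obtain ⟨s, u, hu, hsu⟩ := Nat.exists_eq_pow_mul_and_not_dvd h0 p hp.ne_one
    have hs : s < q := by
      by_contra hs
      push Not at hs
      exact h (hsu ▸ (pow_dvd_pow p hs).mul_right u)
    refine ⟨s, q - s, u, by omega, by exact_mod_cast hu, ?_⟩
    rw [← hw, hsu, show r - (q - s) = s + (r - q) by omega]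
    push_cast
    ring

theorem aux_arith2 (r n s t : ℕ) (hn : 2 ≤ n) (hr : 2 ≤ r) (ht : t ≤ r) :
    (r * n + 1) / 2 + (s + t) - 1 ≤ s + (t * n + (((r - t) * n + 1) / 2 - 1)) := by
  obtain ⟨k, rfl⟩ : ∃ k, n = k + 2 := ⟨n - 2, by omega⟩
  obtain ⟨m, rfl⟩ : ∃ m, r = m + t := ⟨r - t, by omega⟩
  rw [Nat.add_sub_cancel]
  have h1 : (m + t) * (k + 2) = m * k + 2 * m + t * k + 2 * t := by ring
  have h2 : t * (k + 2) = t * k + 2 * t := by ring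
  have h3 : m * (k + 2) = m * k + 2 * m := by ring
  rw [h1, h2, h3]
  generalize m * k = x at *
  generalize t * k = y at *
  omega

theorem stmt_1 (p r : ℕ) (hp : p.Prime) (hr : 2 ≤ r) (n : ℕ) (hn : 2 ≤ n)
    (Q : MvPolynomial (Fin n) (ZMod (p ^ r)))
    (k w : ZMod (p ^ r)) (q : ℕ) (hq : q ≤ r) :
    (p ^ ((r * n + 1) / 2 + q - 1) : ℕ) ∣
    ∑ i : Fin (p ^ q),
      Nat.card {x : Fin n → ZMod (p ^ r) //
        MvPolynomial.eval x Q =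
          k + w * (p : ZMod (p ^ r)) ^ (r - q) * ((i : ℕ) : ZMod (p ^ r))} := by
  classical
  have : NeZero (p ^ r) := ⟨pow_ne_zero _ hp.ne_zero⟩
  obtain ⟨s, t, u, hst, hu, hw⟩ := aux_w p r q hp hq w
  obtain ⟨F, hF⟩ := MvPolynomial.map_surjective (σ := Fin n) (Int.castRingHom (ZMod (p ^ r)))
    (ZMod.intCast_surjective) (Q - MvPolynomial.C k)
  have hcard : ∀ i : Fin (p ^ q), Nat.card {x : Fin n → ZMod (p ^ r) //
        MvPolynomial.eval x Q =
          k + w * (p : ZMod (p ^ r)) ^ (r - q) * ((i : ℕ) : ZMod (p ^ r))}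
      = auxCnt n (p ^ r) (fun x => ((p ^ r : ℕ) : ℤ) ∣
          MvPolynomial.aeval x F - u * p ^ (r - t) * ((i : ℕ) : ℤ)) := by
    intro i
    have h1 := auxCnt_bridge n (p ^ r) (F - MvPolynomial.C (u * p ^ (r - t) * ((i : ℕ) : ℤ)))
    simp only [map_sub, MvPolynomial.aeval_C] at h1
    simp only [algebraMap_int_eq, eq_intCast, Int.cast_id] at h1
    rw [h1, Nat.card_eq_fintype_card, Fintype.card_subtype, Finset.card_filter]
    refine Finset.sum_congr rfl fun x _ => ?_
    have h2 : MvPolynomial.aeval x F = MvPolynomial.eval x Q - k := by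
      have := congrArg (MvPolynomial.eval x) hF
      rw [MvPolynomial.eval_map] at this
      simpa [MvPolynomial.aeval_def] using this
    refine aux_ite ?_
    rw [h2, hw, Int.cast_mul _ ((i : ℕ) : ℤ), Int.cast_natCast, sub_sub, sub_eq_zero]
  rw [Finset.sum_congr rfl fun i _ => hcard i]
  have hsum : (∑ i : Fin (p ^ q), auxCnt n (p ^ r) (fun x => ((p ^ r : ℕ) : ℤ) ∣
          MvPolynomial.aeval x F - u * p ^ (r - t) * ((i : ℕ) : ℤ)))
      = p ^ s * auxCnt n (p ^ r) (fun x => ((p ^ (r - t) : ℕ) : ℤ) ∣ MvPolynomial.aeval x F) := by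
    unfold auxCnt
    rw [Finset.sum_comm, Finset.mul_sum]
    refine Finset.sum_congr rfl fun x _ => ?_
    have := aux_i p hp s t (r - t) u (MvPolynomial.aeval (fun i => ((x i : ℕ) : ℤ)) F) hu
    rw [Nat.sub_add_cancel (by omega)] at this
    subst hst
    convert this
  rw [hsum, show auxCnt n (p ^ r) = auxCnt n (p ^ t * p ^ (r - t)) by
    rw [← pow_add, Nat.add_sub_cancel' (by omega)], auxCnt_periodic', ← pow_mul]
  by_cases h1 : r - t = 1
  · rw [← mul_assoc, ← pow_add]
    refine Dvd.dvd.mul_right (pow_dvd_pow _ ?_) _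
    have := aux_arith1 (r - 2) n hn
    rw [show r - 2 + 2 = r by omega, show r - 2 + 1 = t by omega] at this
    have h3 : t * n = t * (n - 1) + t := by
      obtain ⟨k, rfl⟩ : ∃ k, n = k + 1 := ⟨n - 1, by omega⟩
      simp; ring
    omega
  · have hm := aux_main hn p hp (r - t) F (fun h => absurd h h1)
    refine dvd_trans ?_ (mul_dvd_mul_left _ (mul_dvd_mul_left _ hm))
    rw [← pow_add, ← pow_add]
    apply pow_dvd_pow
    rw [← hst]
    exact aux_arith2 r n s t hn hr (by omega)
end

section
/- Let r ≥ 1 and let Q be a polynomial of total degree at most 2 in n ≥ 3 variables (x_1, …, x_{n-1}, z) over Z_{2^r}. Then for all natural numbers q ≤ r and v ≤ r, all elements k, w, g, u ∈ Z_{2^r}, and every polynomial T of total degree at most 1 in the variables x_1, …, x_{n-1}, the sum Σ_{i=0}^{2^q - 1} Σ_{j=0}^{2^v - 1} #(k + w 2^{r-q} i + g 2^{r-v} j)_{Q, z = T(x) + u 2^{r-v} j} is divisible by 2^{⌈(r(n-1) + min(2v, r))/2⌉ + q - 1}. -/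
open Finset

lemma coset_dvd {V : Type*} [AddCommGroup V] [Fintype V] (H : AddSubgroup V) [Fintype H] (f : V → ℤ) (d : ℤ)
    (h : ∀ x, d ∣ ∑ y : H, f (x + y)) : d ∣ ∑ x, f x := by
  classical
  have : Fintype (V ⧸ H) := Fintype.ofFinite _
  rw [← Finset.sum_fiberwise (s := Finset.univ) (g := fun x : V => (QuotientAddGroup.mk x : V ⧸ H))]
  refine Finset.dvd_sum fun y _ => ?_
  obtain ⟨x0, rfl⟩ := QuotientAddGroup.mk_surjective y
  refine (h x0).trans (dvd_of_eq ?_)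
  refine Finset.sum_bij (fun (a : H) _ => x0 + (a : V)) ?_ ?_ ?_ ?_
  · intro a _
    simp
  · intro a _ b _ hab
    simpa using hab
  · intro b hb
    simp only [Finset.mem_filter, Finset.mem_univ, true_and] at hb
    refine ⟨⟨-x0 + b, ?_⟩, Finset.mem_univ _, by simp⟩
    exact QuotientAddGroup.eq.mp hb.symm
  · intro a _; rfl

lemma sq_dvd_aux (X : ℕ) (S : ℤ) (h : (2:ℤ) ^ X ∣ S ^ 2) : (2:ℤ) ^ ((X + 1) / 2) ∣ S := by
  rcases Nat.even_or_odd' X with ⟨y, rfl | rfl⟩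
  · rw [show (2 * y + 1) / 2 = y by omega]
    rw [mul_comm, pow_mul] at h
    exact (Int.pow_dvd_pow_iff two_ne_zero).mp h
  · rw [show (2 * y + 1 + 1) / 2 = y + 1 by omega]
    have h1 : (2:ℤ) ^ y ∣ S := by
      have : ((2:ℤ) ^ y) ^ 2 ∣ S ^ 2 := by
        rw [← pow_mul, mul_comm y 2]
        exact (pow_dvd_pow _ (by omega)).trans h
      exact (Int.pow_dvd_pow_iff two_ne_zero).mp this
    obtain ⟨t, rfl⟩ := h1
    have h2 : (2:ℤ) ∣ t ^ 2 := by
      have e : (2:ℤ) ^ (2 * y + 1) = (2 ^ y) ^ 2 * 2 := by ring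
      rw [e, mul_pow] at h
      exact Int.dvd_of_mul_dvd_mul_left (by positivity) h
    have h3 : (2:ℤ) ∣ t := Int.prime_two.dvd_of_dvd_pow h2
    rw [pow_succ]
    exact mul_dvd_mul_left _ h3

/-- sign -/
def eps {A : Type*} [AddCommGroup A] [DecidableEq A] (t : A) : ℤ := if t = 0 then 1 else -1

lemma eps_add {A : Type*} [AddCommGroup A] [DecidableEq A] (c : A) (hc : c + c = 0)
    (s t : A) (hs : s = 0 ∨ s = c) (ht : t = 0 ∨ t = c) : eps (s + t) = eps s * eps t := by
  unfold eps
  rcases hs with rfl | rfl <;> rcases ht with rfl | rfl <;> simp_all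

lemma sq_sum {A : Type*} [AddCommGroup A] [DecidableEq A] (c : A) (hc : c + c = 0)
    {H : Type*} [AddCommGroup H] [Fintype H] (K : AddSubgroup H) [Fintype K]
    (ψ : H → A) (B : H → H → A) (hψc : ∀ h, ψ h = 0 ∨ ψ h = c) (hBc : ∀ h k, B h k = 0 ∨ B h k = c)
    (hψ : ∀ h k, ψ (h + k) = ψ h + ψ k + B h k)
    (hB : ∀ h h' k, B (h + h') k = B h k + B h' k)
    (hψK : ∀ k ∈ K, ψ k = 0) 
    (hBK : ∀ h, ∀ k ∈ K, B h k = 0)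
    (hBr : ∀ h k k', B h (k + k') = B h k + B h k') :
    ((Fintype.card H : ℤ) * Fintype.card K) ∣ (∑ h, eps (ψ h)) ^ 2 := by
  have e1 : (∑ h, eps (ψ h)) ^ 2 = ∑ k, eps (ψ k) * ∑ h, eps (B h k) := by
    rw [sq, Finset.sum_mul_sum]
    have : ∀ h, ∑ k, eps (ψ h) * eps (ψ k) = ∑ k, eps (ψ h) * eps (ψ (h + k)) := by
      intro h
      exact (Fintype.sum_equiv (Equiv.addLeft h) _ _ (fun k => rfl)).symm
    simp_rw [this]
    rw [Finset.sum_comm]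
    refine Finset.sum_congr rfl fun k _ => ?_
    rw [Finset.mul_sum]
    refine Finset.sum_congr rfl fun h _ => ?_
    rw [hψ]
    have h1 : ψ h + ψ k = 0 ∨ ψ h + ψ k = c := by
      rcases hψc h with h | h <;> rcases hψc k with h' | h' <;> simp [h, h', hc]
    rw [eps_add c hc _ _ h1 (hBc h k), eps_add c hc _ _ (hψc h) (hψc k)]
    have : eps (ψ h) * eps (ψ h) = 1 := by unfold eps; split_ifs <;> simp
    linear_combination (eps (ψ k) * eps (B h k)) * this
  rw [e1]
  have hW : ∀ k, (Fintype.card H : ℤ) ∣ ∑ h, eps (B h k) := by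
    intro k
    by_cases h0 : ∀ h, B h k = 0
    · simp [h0, eps]
    · push Not at h0
      obtain ⟨h1, h1'⟩ := h0
      have h2 : B h1 k = c := (hBc h1 k).resolve_left h1'
      have : ∑ h, eps (B h k) = ∑ h, - eps (B h k) := by
        rw [← Fintype.sum_equiv (Equiv.addLeft h1) (fun h => eps (B (h1 + h) k)) _ (fun k => rfl)]
        refine Finset.sum_congr rfl fun h _ => ?_
        rw [hB, eps_add c hc _ _ (hBc _ _) (hBc _ _)]
        have : eps (B h1 k) = -1 := by simp [eps, h1']
        rw [this]; ring
      rw [Finset.sum_neg_distrib] at this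
      have : ∑ h, eps (B h k) = 0 := by linarith
      rw [this]; exact dvd_zero _
  refine coset_dvd K _ _ fun x => ?_
  have : ∀ y : K, eps (ψ (x + y)) * ∑ h, eps (B h (x + y)) = eps (ψ x) * ∑ h, eps (B h x) := by
    intro y
    simp only [hBr, hBK _ _ y.2, hψ, hψK _ y.2, add_zero]
  simp only [this, Finset.sum_const, Finset.card_univ, nsmul_eq_mul]
  rw [mul_comm]
  exact mul_dvd_mul_left _ ((hW x).mul_left _)

lemma zmod_half (a : ℕ) (ha : 1 ≤ a) (t : ZMod (2 ^ a)) (ht : t ≠ 0) :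
    ∃ n : ℕ, (n : ZMod (2 ^ a)) * t = 2 ^ (a - 1) := by
  have hv : t.val ≠ 0 := by simpa [ZMod.val_eq_zero] using ht
  obtain ⟨b, m, hm, hb⟩ := Nat.exists_eq_two_pow_mul_odd hv
  have hlt := ZMod.val_lt t
  have hba : b < a := by
    by_contra hcon
    have : 2 ^ a ≤ 2 ^ b := Nat.pow_le_pow_right (by norm_num) (by omega)
    have : 2 ^ b ≤ 2 ^ b * m := Nat.le_mul_of_pos_right _ hm.pos
    omega
  have ht' : t = 2 ^ b * (m : ZMod (2 ^ a)) := by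
    rw [← ZMod.natCast_zmod_val t, hb]; push_cast; ring
  have hz : (2 : ZMod (2 ^ a)) ^ a = 0 := by
    have := ZMod.natCast_self (2 ^ a); push_cast at this; exact this
  refine ⟨2 ^ (a - 1 - b), ?_⟩
  obtain ⟨l, rfl⟩ := hm
  rw [ht']
  push_cast
  have e1 : (2 : ZMod (2 ^ a)) ^ (a - 1 - b) * 2 ^ b = 2 ^ (a - 1) := by
    rw [← pow_add]; congr 1; omega
  have e2 : (2 : ZMod (2 ^ a)) ^ (a - 1) * 2 = 0 := by
    rw [← pow_succ, show a - 1 + 1 = a by omega, hz]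
  linear_combination (2 * l + 1) * e1 + l * e2

lemma zmod_two_mul (a : ℕ) (ha : 1 ≤ a) (t : ZMod (2 ^ a)) (ht : t + t = 0) :
    t = 0 ∨ t = 2 ^ (a - 1) := by
  by_cases h : t = 0
  · exact Or.inl h
  right
  obtain ⟨n, hn⟩ := zmod_half a ha t h
  obtain ⟨l, rfl | rfl⟩ := Nat.even_or_odd' n
  · exfalso
    have : (2 : ZMod (2 ^ a)) ^ (a - 1) = 0 := by
      rw [← hn]; push_cast; linear_combination l * ht
    have h2 : ((2 ^ (a - 1) : ℕ) : ZMod (2 ^ a)) = 0 := by push_cast; exact this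
    rw [ZMod.natCast_eq_zero_iff] at h2
    have := (Nat.pow_dvd_pow_iff_le_right (x := 2) (by norm_num)).mp h2
    omega
  · rw [← hn]; push_cast; linear_combination -l * ht

lemma two_pow_zero (a : ℕ) : (2 : ZMod (2 ^ a)) ^ a = 0 := by
  have := ZMod.natCast_self (2 ^ a); push_cast at this; exact this

lemma core {V : Type*} [AddCommGroup V] [Fintype V] (a : ℕ) (ha : 1 ≤ a)
    (F : V → ZMod (2 ^ a)) (χ : ZMod (2 ^ a) → ℤ) (hχ : ∀ t, χ (t + 2 ^ (a - 1)) = - χ t)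
    (B : V → V → ZMod (2 ^ a)) (H K : AddSubgroup V) (hKH : K ≤ H)
    (hF : ∀ x h k, F (x + h + k) = F (x + h) + F (x + k) - F x + B h k)
    (hB : ∀ h h' k, B (h + h') k = B h k + B h' k)
    (hBr : ∀ h k k', B h (k + k') = B h k + B h k')
    (hHK : ∀ h ∈ H, ∀ k ∈ K, B h k = 0)
    (hHH : ∀ h ∈ H, ∀ k ∈ H, B h k + B h k = 0)
    (hhh : ∀ h ∈ H, B h h = 0)
    (h2 : ∀ h ∈ H, h + h ∈ K) (X : ℕ) (hX : 2 ^ X = Nat.card H * Nat.card K) :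
    (2:ℤ) ^ ((X + 1) / 2) ∣ ∑ x, χ (F x) := by
  classical
  have hc : (2 : ZMod (2 ^ a)) ^ (a - 1) + 2 ^ (a - 1) = 0 := by
    rw [← two_mul, ← pow_succ', show a - 1 + 1 = a by omega, two_pow_zero]
  refine coset_dvd H _ _ fun x => ?_
  set ψ : V → ZMod (2 ^ a) := fun h => F (x + h) - F x with hψdef
  have hψ : ∀ h k, ψ (h + k) = ψ h + ψ k + B h k := by
    intro h k
    simp only [hψdef, ← add_assoc, hF]; ring
  have hFψ : ∀ h, F (x + h) = F x + ψ h := by intro h; simp [hψdef]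
  by_cases hK : ∀ k ∈ K, ψ k = 0
  · have hψc : ∀ h ∈ H, ψ h = 0 ∨ ψ h = 2 ^ (a - 1) := by
      intro h hh
      apply zmod_two_mul a ha
      have := hK _ (h2 h hh)
      rw [hψ, hhh h hh, add_zero] at this
      exact this
    have e : ∑ y : H, χ (F (x + y)) = χ (F x) * ∑ y : H, eps (ψ y) := by
      rw [Finset.mul_sum]
      refine Finset.sum_congr rfl fun y _ => ?_
      rw [hFψ]
      by_cases h0 : ψ y = 0
      · simp [h0, eps]
      · have := (hψc y y.2).resolve_left h0
        have e1 : eps (ψ (y : V)) = -1 := by simp [eps, h0]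
        rw [e1, this, hχ]; ring
    rw [e]
    refine Dvd.dvd.mul_left (sq_dvd_aux _ _ ?_) _
    have := sq_sum (2 ^ (a - 1)) hc (K.addSubgroupOf H) (fun y : H => ψ y) (fun h k => B h k)
      (fun h => hψc h h.2) (fun h k => zmod_two_mul a ha _ (hHH h h.2 k k.2))
      (fun h k => hψ h k) (fun h h' k => hB h h' k) (fun k hk => hK k hk)
      (fun h k hk => hHK h h.2 k hk) (fun h k k' => hBr h k k')
    have e2 : Fintype.card (K.addSubgroupOf H) = Nat.card K := by
      rw [← Nat.card_eq_fintype_card]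
      exact Nat.card_congr (AddSubgroup.addSubgroupOfEquivOfLe hKH).toEquiv
    rw [e2, ← Nat.card_eq_fintype_card, ← Nat.cast_mul, ← hX] at this
    exact_mod_cast this
  · push Not at hK
    obtain ⟨k, hk, hk0⟩ := hK
    obtain ⟨n, hn⟩ := zmod_half a ha _ hk0
    have hmul : ∀ n : ℕ, ψ (n • k) = n * ψ k := by
      intro n
      induction n with
      | zero => simp [hψdef]
      | succ n ih =>
        rw [succ_nsmul, hψ, ih, hHK _ (H.nsmul_mem (hKH hk) n) _ hk]; push_cast; ring
    have hn' : ψ (n • k) = 2 ^ (a - 1) := by rw [hmul, hn]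
    have hmem : n • k ∈ K := K.nsmul_mem hk n
    have : ∑ y : H, χ (F (x + y)) = ∑ y : H, - χ (F (x + y)) := by
      rw [← Fintype.sum_equiv (Equiv.addRight (⟨n • k, hKH hmem⟩ : H))
        (fun y : H => χ (F (x + (y + n • k)))) _ (fun k => rfl)]
      refine Finset.sum_congr rfl fun y _ => ?_
      rw [hFψ, hψ, hHK _ y.2 _ hmem, hn', add_zero, ← add_assoc, hχ, ← hFψ]
    rw [Finset.sum_neg_distrib] at this
    have : ∑ y : H, χ (F (x + y)) = 0 := by linarith
    rw [this]; exact dvd_zero _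

def IsQ {R M : Type*} [CommRing R] [AddCommGroup M] [Module R M] (f : M → R) : Prop :=
  ∃ (c : R) (l : M →ₗ[R] R) (b : M →ₗ[R] M →ₗ[R] R), ∀ p, f p = c + l p + b p p

def IsA {R M : Type*} [CommRing R] [AddCommGroup M] [Module R M] (f : M → R) : Prop :=
  ∃ (c : R) (l : M →ₗ[R] R), ∀ p, f p = c + l p

lemma isQ_sum {R M ι : Type*} [CommRing R] [AddCommGroup M] [Module R M] (s : Finset ι)
    (f : ι → M → R) (h : ∀ i ∈ s, IsQ (f i)) : IsQ (fun p => ∑ i ∈ s, f i p) := by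
  classical
  induction s using Finset.induction_on with
  | empty => exact ⟨0, 0, 0, by simp⟩
  | insert i s hi ih =>
    obtain ⟨c, l, b, e⟩ := ih fun j hj => h j (Finset.mem_insert_of_mem hj)
    obtain ⟨c', l', b', e'⟩ := h i (Finset.mem_insert_self _ _)
    refine ⟨c' + c, l' + l, b' + b, fun p => ?_⟩
    have e1 := e p
    beta_reduce at e1 ⊢
    rw [Finset.sum_insert hi, e1, e']; simp; ring

lemma isA_sum {R M ι : Type*} [CommRing R] [AddCommGroup M] [Module R M] (s : Finset ι)
    (f : ι → M → R) (h : ∀ i ∈ s, IsA (f i)) : IsA (fun p => ∑ i ∈ s, f i p) := by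
  classical
  induction s using Finset.induction_on with
  | empty => exact ⟨0, 0, by simp⟩
  | insert i s hi ih =>
    obtain ⟨c, l, e⟩ := ih fun j hj => h j (Finset.mem_insert_of_mem hj)
    obtain ⟨c', l', e'⟩ := h i (Finset.mem_insert_self _ _)
    refine ⟨c' + c, l' + l, fun p => ?_⟩
    have e1 := e p
    beta_reduce at e1 ⊢
    rw [Finset.sum_insert hi, e1, e']; simp; ring

lemma mon_prod {R σ : Type*} [CommRing R] [Fintype σ] (s : σ →₀ ℕ) (p : σ → R) :
    ∏ i, p i ^ s i = (s.toMultiset.map p).prod := by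
  rw [Finsupp.toMultiset_map, Finsupp.prod_toMultiset, Finsupp.prod_mapDomain_index (by simp) (by intros; rw [pow_add]),
    Finsupp.prod_fintype _ _ (by simp)]

lemma isQ_eval {R σ : Type*} [CommRing R] [Fintype σ] (Q : MvPolynomial σ R) (hQ : Q.totalDegree ≤ 2) :
    IsQ (fun p : σ → R => MvPolynomial.eval p Q) := by
  simp_rw [MvPolynomial.eval_eq']
  refine isQ_sum _ _ fun s hs => ?_
  have h1 := (MvPolynomial.le_totalDegree hs).trans hQ
  simp_rw [mon_prod]
  have h2 : Multiset.card s.toMultiset ≤ 2 := by rw [Finsupp.card_toMultiset]; exact h1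
  generalize Finsupp.toMultiset s = t at h2
  generalize MvPolynomial.coeff s Q = a
  have : Multiset.card t = 0 ∨ Multiset.card t = 1 ∨ Multiset.card t = 2 := by omega
  rcases this with h | h | h
  · rw [Multiset.card_eq_zero] at h
    subst h
    exact ⟨a, 0, 0, by simp⟩
  · obtain ⟨i, rfl⟩ := Multiset.card_eq_one.mp h
    exact ⟨0, a • LinearMap.proj i, 0, by simp⟩
  · obtain ⟨i, j, rfl⟩ := Multiset.card_eq_two.mp h
    exact ⟨0, 0, (a • LinearMap.proj i : (σ → R) →ₗ[R] R).smulRight (LinearMap.proj j), by simp [mul_assoc]⟩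

lemma isA_eval {R σ : Type*} [CommRing R] [Fintype σ] (Q : MvPolynomial σ R) (hQ : Q.totalDegree ≤ 1) :
    IsA (fun p : σ → R => MvPolynomial.eval p Q) := by
  simp_rw [MvPolynomial.eval_eq']
  refine isA_sum _ _ fun s hs => ?_
  have h1 := (MvPolynomial.le_totalDegree hs).trans hQ
  simp_rw [mon_prod]
  have h2 : Multiset.card s.toMultiset ≤ 1 := by rw [Finsupp.card_toMultiset]; exact h1
  generalize Finsupp.toMultiset s = t at h2
  generalize MvPolynomial.coeff s Q = a
  have : Multiset.card t = 0 ∨ Multiset.card t = 1 := by omega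
  rcases this with h | h
  · rw [Multiset.card_eq_zero] at h
    subst h
    exact ⟨a, 0, by simp⟩
  · obtain ⟨i, rfl⟩ := Multiset.card_eq_one.mp h
    exact ⟨0, a • LinearMap.proj i, by simp⟩

def HH (r m d s : ℕ) : AddSubgroup ((Fin m → ZMod (2 ^ r)) × ZMod (2 ^ r)) :=
  (AddSubgroup.pi Set.univ fun _ => AddSubgroup.zmultiples (2 ^ s)).prod
    (AddSubgroup.zmultiples (2 ^ (s - d)))

lemma mem_zmul (r s : ℕ) (t : ZMod (2 ^ r)) :
    t ∈ AddSubgroup.zmultiples ((2 : ZMod (2 ^ r)) ^ s) ↔ ∃ y, t = 2 ^ s * y := by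
  rw [AddSubgroup.mem_zmultiples_iff]
  constructor
  · rintro ⟨k, rfl⟩
    exact ⟨k, by simp [mul_comm]⟩
  · rintro ⟨y, rfl⟩
    refine ⟨(y.val : ℤ), ?_⟩
    simp [mul_comm]

lemma card_zmul (r s : ℕ) (hs : s ≤ r) :
    Nat.card (AddSubgroup.zmultiples ((2 : ZMod (2 ^ r)) ^ s)) = 2 ^ (r - s) := by
  rw [Nat.card_zmultiples]
  have := ZMod.addOrderOf_coe (2 ^ s) (n := 2 ^ r) (by positivity)
  push_cast at this
  rw [this, Nat.gcd_eq_right (pow_dvd_pow _ hs), Nat.pow_div hs (by norm_num)]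

lemma mem_HH (r m d s : ℕ) (p : (Fin m → ZMod (2 ^ r)) × ZMod (2 ^ r)) :
    p ∈ HH r m d s ↔ ∃ y : Fin m → ZMod (2 ^ r), ∃ z : ZMod (2 ^ r), p = (fun i => 2 ^ s * y i, 2 ^ (s - d) * z) := by
  unfold HH
  rw [AddSubgroup.mem_prod, AddSubgroup.mem_pi]
  simp only [mem_zmul, Set.mem_univ, true_imp_iff]
  constructor
  · rintro ⟨h1, z, hz⟩
    choose y hy using h1
    exact ⟨y, z, Prod.ext (funext hy) hz⟩
  · rintro ⟨y, z, rfl⟩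
    exact ⟨fun i => ⟨y i, rfl⟩, z, rfl⟩

lemma card_HH (r m d s : ℕ) (hs : s ≤ r) : Nat.card (HH r m d s) = 2 ^ ((r - s) * m + (r - (s - d))) := by
  unfold HH
  rw [Nat.card_congr (AddSubgroup.prodEquiv _ _).toEquiv, Nat.card_prod, card_zmul _ _ (by omega)]
  have : Nat.card (AddSubgroup.pi Set.univ fun _ : Fin m => AddSubgroup.zmultiples ((2 : ZMod (2 ^ r)) ^ s))
      = Nat.card (Fin m → AddSubgroup.zmultiples ((2 : ZMod (2 ^ r)) ^ s)) := by
    refine Nat.card_congr ⟨fun x i => ⟨x.1 i, (AddSubgroup.mem_pi _).1 x.2 i trivial⟩,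
      fun x => ⟨fun i => x i, (AddSubgroup.mem_pi _).2 fun i _ => (x i).2⟩, fun _ => rfl, fun _ => rfl⟩
  rw [this, Nat.card_fun, card_zmul _ _ hs, Nat.card_fin, ← pow_mul, ← pow_add]

def XX (r m d b : ℕ) : ℕ :=
  (r - b / 2) * m + (r - (b / 2 - d)) + ((r - (b + 1) / 2) * m + (r - ((b + 1) / 2 - d)))

lemma level (r m d b : ℕ) (hb : 1 ≤ b) (hbr : b ≤ r) {M : Type*} [AddCommGroup M] [Module (ZMod (2 ^ r)) M]
    (lam : ((Fin m → ZMod (2 ^ r)) × ZMod (2 ^ r)) →ₗ[ZMod (2 ^ r)] M)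
    (hlam : ∀ s, ∀ p ∈ HH r m d s, ∃ y, lam p = (2 : ZMod (2 ^ r)) ^ s • y)
    (c : ZMod (2 ^ r)) (l : ((Fin m → ZMod (2 ^ r)) × ZMod (2 ^ r)) →ₗ[ZMod (2 ^ r)] ZMod (2 ^ r))
    (β : M →ₗ[ZMod (2 ^ r)] M →ₗ[ZMod (2 ^ r)] ZMod (2 ^ r))
    (F : ((Fin m → ZMod (2 ^ r)) × ZMod (2 ^ r)) → ZMod (2 ^ r))
    (hF : ∀ p, F p = c + l p + β (lam p) (lam p))
    (χ : ZMod (2 ^ b) → ℤ) (hχ : ∀ t, χ (t + 2 ^ (b - 1)) = - χ t) :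
    (2:ℤ) ^ ((XX r m d b + 1) / 2) ∣ ∑ p, χ (ZMod.castHom (pow_dvd_pow 2 hbr) (ZMod (2 ^ b)) (F p)) := by
  set φ := ZMod.castHom (pow_dvd_pow 2 hbr) (ZMod (2 ^ b)) with hφ
  have hpow : ∀ k, b ≤ k → (2 : ZMod (2 ^ b)) ^ k = 0 := by
    intro k hk
    rw [← Nat.sub_add_cancel hk, pow_add, two_pow_zero, mul_zero]
  have key : ∀ s t, ∀ h ∈ HH r m d s, ∀ k ∈ HH r m d t,
      ∃ w, β (lam h) (lam k) = 2 ^ (s + t) * w := by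
    intro s t h hh k hk
    obtain ⟨y, hy⟩ := hlam s h hh
    obtain ⟨z, hz⟩ := hlam t k hk
    exact ⟨β y z, by rw [hy, hz]; simp; ring⟩
  refine core b hb (fun p => φ (F p)) χ hχ (fun h k => φ (β (lam h) (lam k) + β (lam k) (lam h)))
    (HH r m d (b / 2)) (HH r m d ((b + 1) / 2)) ?_ ?_ ?_ ?_ ?_ ?_ ?_ ?_ _ ?_
  · intro p hp
    rw [mem_HH] at hp ⊢
    obtain ⟨y, z, rfl⟩ := hp
    refine ⟨fun i => 2 ^ ((b + 1) / 2 - b / 2) * y i, 2 ^ (((b + 1) / 2 - d) - (b / 2 - d)) * z, ?_⟩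
    refine Prod.ext (funext fun i => ?_) ?_
    · simp only [← mul_assoc, ← pow_add]
      rw [Nat.add_sub_cancel' (by omega)]
    · simp only [← mul_assoc, ← pow_add]
      rw [Nat.add_sub_cancel' (by omega)]
  · intro x h k
    simp only [hF, ← map_add, ← map_sub]
    congr 1
    simp only [map_add, LinearMap.add_apply]
    ring
  · intro h h' k
    simp only [← map_add]
    congr 1
    simp only [map_add, LinearMap.add_apply]
    ring
  · intro h h' k
    simp only [← map_add]
    congr 1
    simp only [map_add, LinearMap.add_apply]
    ring
  · intro h hh k hk
    obtain ⟨w, hw⟩ := key _ _ h hh k hk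
    obtain ⟨w', hw'⟩ := key _ _ k hk h hh
    simp only [hw, hw', map_add, map_mul, map_pow, map_ofNat]
    rw [hpow _ (by omega), hpow _ (by omega)]; simp
  · intro h hh k hk
    obtain ⟨w, hw⟩ := key _ _ h hh k hk
    obtain ⟨w', hw'⟩ := key _ _ k hk h hh
    simp only [hw, hw', map_add, map_mul, map_pow, map_ofNat]
    have := hpow (b / 2 + b / 2 + 1) (by omega)
    linear_combination (φ w + φ w') * this
  · intro h hh
    obtain ⟨w, hw⟩ := key _ _ h hh h hh
    simp only [hw, map_add, map_mul, map_pow, map_ofNat]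
    have := hpow (b / 2 + b / 2 + 1) (by omega)
    linear_combination (φ w) * this
  · intro p hp
    rw [mem_HH] at hp ⊢
    obtain ⟨y, z, rfl⟩ := hp
    refine ⟨fun i => 2 ^ (b / 2 + 1 - (b + 1) / 2) * y i, 2 ^ ((b / 2 - d + 1) - ((b + 1) / 2 - d)) * z, ?_⟩
    refine Prod.ext (funext fun i => ?_) ?_
    · simp only [← mul_assoc, ← pow_add, Prod.fst_add, Pi.add_apply]
      rw [Nat.add_sub_cancel' (by omega)]; ring
    · simp only [← mul_assoc, ← pow_add, Prod.snd_add]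
      rw [Nat.add_sub_cancel' (by omega)]; ring
  · rw [card_HH _ _ _ _ (by omega), card_HH _ _ _ _ (by omega), ← pow_add, XX]

lemma sum_zmod (N : ℕ) [NeZero N] (g : ZMod N → ℤ) : ∑ t, g t = ∑ i ∈ Finset.range N, g (i : ZMod N) := by
  refine Finset.sum_nbij' (fun t => t.val) (fun i => (i : ZMod N)) ?_ ?_ ?_ ?_ ?_
  · intro t _; simpa using ZMod.val_lt t
  · intro i _; simp
  · intro t _; simp
  · intro i hi; exact ZMod.val_cast_of_lt (by simpa using hi)
  · intro t _; simp

lemma sum_per (P : ℕ) (g : ℕ → ℤ) (hg : ∀ n, g (P + n) = g n) (c : ℕ) :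
    ∑ i ∈ Finset.range (c * P), g i = c * ∑ i ∈ Finset.range P, g i := by
  induction c with
  | zero => simp
  | succ c ih =>
    rw [add_mul, one_mul, add_comm, Finset.sum_range_add]
    simp only [hg, ih]; push_cast; ring

lemma sum_scale (r v : ℕ) (hv : v ≤ r) (f : ZMod (2 ^ r) → ℤ) :
    (2:ℤ) ^ (r - v) * ∑ j : Fin (2 ^ v), f (2 ^ (r - v) * ((j : ℕ) : ZMod (2 ^ r))) =
      ∑ t, f (2 ^ (r - v) * t) := by
  rw [sum_zmod, Fin.sum_univ_eq_sum_range (fun j => f (2 ^ (r - v) * ((j : ℕ) : ZMod (2 ^ r))))]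
  have h := sum_per (2 ^ v) (fun j => f (2 ^ (r - v) * ((j : ℕ) : ZMod (2 ^ r)))) ?_ (2 ^ (r - v))
  · rw [← pow_add, Nat.sub_add_cancel hv] at h
    rw [h]; push_cast; rfl
  · intro n
    congr 1
    push_cast
    rw [mul_add, ← pow_add, Nat.sub_add_cancel hv, two_pow_zero, zero_add]

lemma cast_zero_iff (r b : ℕ) (hb : b ≤ r) (t : ZMod (2 ^ r)) :
    ZMod.castHom (pow_dvd_pow 2 hb) (ZMod (2 ^ b)) t = 0 ↔ 2 ^ b ∣ t.val := by
  rw [← ZMod.natCast_eq_zero_iff]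
  conv_lhs => rw [← ZMod.natCast_zmod_val t, map_natCast]

lemma count_lin (r : ℕ) (w : ZMod (2 ^ r)) : ∃ b, ∃ hb : b ≤ r, ∀ t : ZMod (2 ^ r),
    (∑ i, if w * i = t then (1:ℤ) else 0) =
      if ZMod.castHom (pow_dvd_pow 2 hb) (ZMod (2 ^ b)) t = 0 then (2:ℤ) ^ b else 0 := by
  have h1 : ∃ b, b ≤ r ∧ ∃ m : ℕ, Odd m ∧ w = 2 ^ b * (m : ZMod (2 ^ r)) := by
    by_cases hw : w = 0
    · exact ⟨r, le_rfl, 1, odd_one, by rw [hw, two_pow_zero, zero_mul]⟩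
    have hv : w.val ≠ 0 := by simpa [ZMod.val_eq_zero] using hw
    obtain ⟨b, m, hm, hb⟩ := Nat.exists_eq_two_pow_mul_odd hv
    have hlt := ZMod.val_lt w
    refine ⟨b, ?_, m, hm, ?_⟩
    · by_contra hcon
      have : 2 ^ r ≤ 2 ^ b := Nat.pow_le_pow_right (by norm_num) (by omega)
      have : 2 ^ b ≤ 2 ^ b * m := Nat.le_mul_of_pos_right _ hm.pos
      omega
    · rw [← ZMod.natCast_zmod_val w, hb]; push_cast; ring
  obtain ⟨b, hb, m, hm, rfl⟩ := h1
  refine ⟨b, hb, fun t => ?_⟩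
  have hu : IsUnit (m : ZMod (2 ^ r)) := by
    rw [ZMod.isUnit_iff_coprime]
    exact Nat.Coprime.pow_right _ (Nat.coprime_two_right.mpr hm)
  obtain ⟨U, hU⟩ := hu
  have e1 : (∑ i, if 2 ^ b * (m : ZMod (2 ^ r)) * i = t then (1:ℤ) else 0) =
      ∑ i, if 2 ^ b * i = t then (1:ℤ) else 0 := by
    refine Fintype.sum_equiv (Units.mulLeft U) _ _ fun i => ?_
    simp [hU, mul_assoc]
  rw [e1]
  have h3 := sum_scale r (r - b) (by omega) (fun s => if s = t then (1:ℤ) else 0)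
  rw [show r - (r - b) = b by omega] at h3
  rw [← h3]
  split_ifs with h0
  · rw [cast_zero_iff r b hb] at h0
    obtain ⟨j0, hj0⟩ := h0
    have hlt : j0 < 2 ^ (r - b) := by
      have := ZMod.val_lt t
      rw [hj0] at this
      have e : 2 ^ r = 2 ^ b * 2 ^ (r - b) := by rw [← pow_add]; congr 1; omega
      rw [e] at this
      exact Nat.lt_of_mul_lt_mul_left this
    have : ∀ j : Fin (2 ^ (r - b)), (2 ^ b * ((j : ℕ) : ZMod (2 ^ r)) = t) ↔ j = ⟨j0, hlt⟩ := by
      intro j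
      have e2 : (2 ^ b * ((j : ℕ) : ZMod (2 ^ r))) = ((2 ^ b * (j : ℕ) : ℕ) : ZMod (2 ^ r)) := by push_cast; rfl
      have hj : 2 ^ b * (j : ℕ) < 2 ^ r := by
        have e : 2 ^ r = 2 ^ b * 2 ^ (r - b) := by rw [← pow_add]; congr 1; omega
        rw [e]
        exact Nat.mul_lt_mul_of_pos_left j.2 (by positivity)
      rw [e2]
      constructor
      · intro h
        have := congrArg ZMod.val h
        rw [ZMod.val_cast_of_lt hj, hj0] at this
        exact Fin.ext (Nat.eq_of_mul_eq_mul_left (by positivity) this)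
      · rintro rfl
        rw [← hj0, ZMod.natCast_zmod_val]
    simp [this]
  · rw [Finset.sum_eq_zero, mul_zero]
    intro j _
    rw [if_neg]
    rintro rfl
    apply h0
    rw [map_mul, map_pow, map_ofNat, two_pow_zero, zero_mul]

lemma XX_zero (r m d : ℕ) : (XX r m d 0 + 1) / 2 = r * m + r := by
  simp [XX]; omega

lemma XX_succ (r m d b : ℕ) (hm : 2 ≤ m) (hb : b + 1 ≤ r) :
    (XX r m d (b + 1) + 1) / 2 + 1 ≤ (XX r m d b + 1) / 2 := by
  have : XX r m d (b + 1) + 2 ≤ XX r m d b := by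
    unfold XX
    have e : (b + 1 + 1) / 2 = b / 2 + 1 := by omega
    rw [e]
    obtain ⟨z, hz⟩ : ∃ z, r - b / 2 = z + 1 := ⟨r - b / 2 - 1, by omega⟩
    have hz' : r - (b / 2 + 1) = z := by omega
    rw [hz, hz', add_mul, one_mul]
    omega
  omega

lemma XX_le (r m d b : ℕ) (hm : 2 ≤ m) (hb : b ≤ r) :
    (XX r m d r + 1) / 2 + r ≤ (XX r m d b + 1) / 2 + b := by
  obtain ⟨c, rfl⟩ := Nat.exists_eq_add_of_le hb
  have : ∀ c', c' ≤ c → (XX (b + c) m d (b + c') + 1) / 2 + (b + c') ≤ (XX (b + c) m d b + 1) / 2 + b := by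
    intro c' h
    induction c' with
    | zero => simp
    | succ c' ih =>
      have := XX_succ (b + c) m d (b + c') hm (by omega)
      have := ih (by omega)
      rw [← add_assoc b c' 1]
      omega
  exact this c le_rfl

lemma XX_r (r m v : ℕ) (hv : v ≤ r) :
    (r - v) + r + (r * m + min (2 * v) r + 1) / 2 ≤ (XX r m (r - v) r + 1) / 2 + r := by
  have : XX r m (r - v) r = r * m + ((r - (r / 2 - (r - v))) + (r - ((r + 1) / 2 - (r - v)))) := by
    unfold XX
    have : r * m = (r - r / 2) * m + (r - (r + 1) / 2) * m := by
      rw [← add_mul]; congr 1; omega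
    omega
  rw [this]
  generalize r * m = z
  omega

lemma counts (r m d : ℕ) (hm : 2 ≤ m) {V : Type*} [Fintype V] (hV : Fintype.card V = 2 ^ (r * m + r))
    (F : V → ZMod (2 ^ r))
    (hL : ∀ b, 1 ≤ b → ∀ hbr : b ≤ r, ∀ χ : ZMod (2 ^ b) → ℤ, (∀ t, χ (t + 2 ^ (b - 1)) = - χ t) →
      (2:ℤ) ^ ((XX r m d b + 1) / 2) ∣ ∑ p, χ (ZMod.castHom (pow_dvd_pow 2 hbr) (ZMod (2 ^ b)) (F p)))
    (b : ℕ) : ∀ hbr : b ≤ r, ∀ κ : ZMod (2 ^ b),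
    (2:ℤ) ^ ((XX r m d b + 1) / 2) ∣
      2 * ∑ p, if ZMod.castHom (pow_dvd_pow 2 hbr) (ZMod (2 ^ b)) (F p) = κ then (1:ℤ) else 0 := by
  induction b with
  | zero =>
    intro hbr κ
    have : ∀ a b : ZMod (2 ^ 0), a = b := by
      intro a b; exact Subsingleton.elim (α := ZMod 1) a b
    rw [XX_zero]
    simp only [this _ κ, if_true, Finset.sum_const, Finset.card_univ, hV]
    simp
  | succ b ih =>
    intro hbr κ
    have hh := (pow_dvd_pow (2 : ℕ) (Nat.le_succ b))
    have h1 := ih (by omega) (ZMod.castHom hh (ZMod (2 ^ b)) κ)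
    have hc : (2 : ZMod (2 ^ (b + 1))) ^ b + 2 ^ b = 0 := by
      rw [← two_mul, ← pow_succ', two_pow_zero]
    have hne : (2 : ZMod (2 ^ (b + 1))) ^ b ≠ 0 := by
      intro h
      have h2 : ((2 ^ b : ℕ) : ZMod (2 ^ (b + 1))) = 0 := by push_cast; exact h
      rw [ZMod.natCast_eq_zero_iff] at h2
      have := (Nat.pow_dvd_pow_iff_le_right (x := 2) (by norm_num)).mp h2
      omega
    have h2 := hL (b + 1) (by omega) hbr
      (fun t => (if t = κ then (1:ℤ) else 0) - if t = κ + 2 ^ b then (1:ℤ) else 0) (by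
        intro t
        have e1 : t + 2 ^ b = κ ↔ t = κ + 2 ^ b := by
          constructor
          · intro h; linear_combination h - hc
          · intro h; linear_combination h + hc
        simp only [Nat.add_sub_cancel, add_left_inj, e1]
        ring)
    rw [Finset.sum_sub_distrib] at h2
    have h3 : (∑ p, if ZMod.castHom (pow_dvd_pow 2 (by omega : b ≤ r)) (ZMod (2 ^ b)) (F p) = ZMod.castHom hh (ZMod (2 ^ b)) κ then (1:ℤ) else 0)
      = (∑ p, if ZMod.castHom (pow_dvd_pow 2 hbr) (ZMod (2 ^ (b + 1))) (F p) = κ then (1:ℤ) else 0) +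
       ∑ p, if ZMod.castHom (pow_dvd_pow 2 hbr) (ZMod (2 ^ (b + 1))) (F p) = κ + 2 ^ b then (1:ℤ) else 0 := by
      rw [← Finset.sum_add_distrib]
      refine Finset.sum_congr rfl fun p _ => ?_
      have e1 : ZMod.castHom (pow_dvd_pow 2 (by omega : b ≤ r)) (ZMod (2 ^ b)) (F p) =
        ZMod.castHom hh (ZMod (2 ^ b)) (ZMod.castHom (pow_dvd_pow 2 hbr) (ZMod (2 ^ (b + 1))) (F p)) := by
        rw [← RingHom.comp_apply]
        congr 1
        exact Subsingleton.elim _ _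
      rw [e1]
      generalize ZMod.castHom (pow_dvd_pow 2 hbr) (ZMod (2 ^ (b + 1))) (F p) = t
      have e2 : ZMod.castHom hh (ZMod (2 ^ b)) t = ZMod.castHom hh (ZMod (2 ^ b)) κ ↔ t = κ ∨ t = κ + 2 ^ b := by
        rw [← sub_eq_zero, ← map_sub]
        constructor
        · intro h
          rw [cast_zero_iff _ _ (Nat.le_succ b)] at h
          obtain ⟨y, hy⟩ := h
          have : t - κ = 2 ^ b * (y : ZMod (2 ^ (b + 1))) := by
            rw [← ZMod.natCast_zmod_val (t - κ), hy]; push_cast; rfl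
          have h0 : (t - κ) + (t - κ) = 0 := by
            rw [this]; linear_combination (y : ZMod (2 ^ (b + 1))) * hc
          rcases zmod_two_mul (b + 1) (by omega) _ h0 with h | h
          · left; linear_combination h
          · right; rw [Nat.add_sub_cancel] at h; linear_combination h
        · rintro (rfl | rfl)
          · simp
          · rw [add_sub_cancel_left, map_pow, map_ofNat, two_pow_zero]
      by_cases ht : t = κ
      · have : ¬ (t = κ + 2 ^ b) := by
          rw [ht]; intro h; apply hne; linear_combination -h
        rw [if_pos (e2.2 (Or.inl ht)), if_pos ht, if_neg this]; rfl
      · by_cases ht' : t = κ + 2 ^ b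
        · rw [if_pos (e2.2 (Or.inr ht')), if_neg ht, if_pos ht']; rfl
        · rw [if_neg (fun h => (e2.1 h).elim ht ht'), if_neg ht, if_neg ht']; rfl
    rw [h3] at h1
    have h4 := XX_succ r m d b hm hbr
    have h5 := (pow_dvd_pow (2:ℤ) h4).trans h1
    rw [pow_succ, mul_comm _ (2:ℤ)] at h5
    have h6 := Int.dvd_of_mul_dvd_mul_left (by norm_num) h5
    have h7 := dvd_add h6 h2
    exact h7.trans (dvd_of_eq (by ring))

lemma main_dvd (r n : ℕ) (hn : 3 ≤ n)
    (Q : MvPolynomial (Fin n) (ZMod (2 ^ r))) (hQ : Q.totalDegree ≤ 2)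
    (g u : ZMod (2 ^ r)) (d : ℕ)
    (T : MvPolynomial (Fin (n - 1)) (ZMod (2 ^ r))) (hT : T.totalDegree ≤ 1)
    (F : ((Fin (n - 1) → ZMod (2 ^ r)) × ZMod (2 ^ r)) → ZMod (2 ^ r))
    (hF : ∀ p, F p = MvPolynomial.eval
          (fun t : Fin n => if h : (t : ℕ) < n - 1 then p.1 ⟨t, h⟩
            else MvPolynomial.eval p.1 T + u * (2 ^ d * p.2)) Q - g * (2 ^ d * p.2))
    (b : ℕ) (hbr : b ≤ r) (κ : ZMod (2 ^ b)) :
    (2:ℤ) ^ ((XX r (n - 1) d b + 1) / 2) ∣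
      2 * ∑ p, if ZMod.castHom (pow_dvd_pow 2 hbr) (ZMod (2 ^ b)) (F p) = κ then (1:ℤ) else 0 := by
  have hcard : Fintype.card ((Fin (n - 1) → ZMod (2 ^ r)) × ZMod (2 ^ r)) = 2 ^ (r * (n - 1) + r) := by
    simp [ZMod.card, pow_add, pow_mul]
  refine counts r (n - 1) d (by omega) hcard F ?_ b hbr κ
  intro b hb hbr χ hχ
  obtain ⟨c, l, β, hc⟩ := isQ_eval Q hQ
  obtain ⟨t0, tl, ht⟩ := isA_eval T hT
  let R := ZMod (2 ^ r)
  let lam : ((Fin (n - 1) → R) × R) →ₗ[R] (Fin n → R) :=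
    LinearMap.pi fun t : Fin n => if h : (t : ℕ) < n - 1 then
        (LinearMap.proj (⟨t, h⟩ : Fin (n - 1))).comp (LinearMap.fst R _ _)
      else tl.comp (LinearMap.fst R _ _) + (u * 2 ^ d) • LinearMap.snd R _ _
  let y0 : Fin n → R := fun t => if (t : ℕ) < n - 1 then 0 else t0
  have hy : ∀ p : ((Fin (n - 1) → R) × R), (fun t : Fin n => if h : (t : ℕ) < n - 1 then p.1 ⟨t, h⟩
            else MvPolynomial.eval p.1 T + u * (2 ^ d * p.2)) = y0 + lam p := by
    intro p
    have ht' := ht p.1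
    beta_reduce at ht'
    funext t
    by_cases h : (t : ℕ) < n - 1
    · simp [y0, lam, h]
    · simp only [y0, lam, h, ht', Pi.add_apply, LinearMap.pi_apply]
      simp
      ring
  refine level r (n - 1) d b hb hbr lam ?_ (c + l y0 + β y0 y0)
    (l.comp lam + (β y0).comp lam + (β.flip y0).comp lam - (g * 2 ^ d) • LinearMap.snd R _ _) β F ?_ χ hχ
  · intro s p hp
    rw [mem_HH] at hp
    obtain ⟨y, z, rfl⟩ := hp
    refine ⟨lam (y, 0) + (fun t : Fin n => if (t : ℕ) < n - 1 then (0 : R) else u * 2 ^ (d + (s - d) - s) * z), ?_⟩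
    have e : ((fun i => 2 ^ s * y i : Fin (n - 1) → R)) = (2 ^ s : R) • y := by
      funext i; simp
    rw [e]
    have e2 : (2 : R) ^ d * 2 ^ (s - d) = 2 ^ s * 2 ^ (d + (s - d) - s) := by
      rw [← pow_add, ← pow_add]; congr 1; omega
    funext t
    by_cases h : (t : ℕ) < n - 1
    · simp [lam, h]
    · simp [lam, h]
      linear_combination (u * z) * e2
  · intro p
    have hc' := hc (y0 + lam p)
    beta_reduce at hc'
    rw [hF, hy, hc']
    simp
    ring

/-- Main theorem: for `Q` of degree ≤ 2 in `n ≥ 3` variables `(x, z)` over `ℤ/2^r`,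
`q, v ≤ r`, elements `k, w, g, u` and linear `T(x)`, the double sum of constrained
solution counts is divisible by `2^{⌈(r(n-1)+min(2v,r))/2⌉+q-1}`. -/
theorem stmt_2 (r : ℕ) (hr : 1 ≤ r) (n : ℕ) (hn : 3 ≤ n)
    (Q : MvPolynomial (Fin n) (ZMod (2 ^ r))) (hQ : Q.totalDegree ≤ 2)
    (q v : ℕ) (hq : q ≤ r) (hv : v ≤ r)
    (k w g u : ZMod (2 ^ r))
    (T : MvPolynomial (Fin (n - 1)) (ZMod (2 ^ r))) (hT : T.totalDegree ≤ 1) :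
    (2 ^ ((r * (n - 1) + min (2 * v) r + 1) / 2 + q - 1) : ℕ) ∣
    ∑ i : Fin (2 ^ q), ∑ j : Fin (2 ^ v),
      Nat.card {x : Fin (n - 1) → ZMod (2 ^ r) //
        MvPolynomial.eval
          (fun t : Fin n => if h : (t : ℕ) < n - 1 then x ⟨t, h⟩
            else MvPolynomial.eval x T
              + u * (2 : ZMod (2 ^ r)) ^ (r - v) * ((j : ℕ) : ZMod (2 ^ r))) Q
          = k + w * (2 : ZMod (2 ^ r)) ^ (r - q) * ((i : ℕ) : ZMod (2 ^ r))
              + g * (2 : ZMod (2 ^ r)) ^ (r - v) * ((j : ℕ) : ZMod (2 ^ r))} := by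
  classical
  rw [← Int.natCast_dvd_natCast]
  push_cast
  let G : (Fin (n - 1) → ZMod (2 ^ r)) → ZMod (2 ^ r) → ZMod (2 ^ r) := fun x y =>
    MvPolynomial.eval
          (fun t : Fin n => if h : (t : ℕ) < n - 1 then x ⟨t, h⟩
            else MvPolynomial.eval x T + u * y) Q - g * y
  let F : ((Fin (n - 1) → ZMod (2 ^ r)) × ZMod (2 ^ r)) → ZMod (2 ^ r) :=
    fun p => G p.1 (2 ^ (r - v) * p.2)
  have e1 : ∀ (i : Fin (2 ^ q)) (j : Fin (2 ^ v)), (Nat.card {x : Fin (n - 1) → ZMod (2 ^ r) //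
        MvPolynomial.eval
          (fun t : Fin n => if h : (t : ℕ) < n - 1 then x ⟨t, h⟩
            else MvPolynomial.eval x T
              + u * (2 : ZMod (2 ^ r)) ^ (r - v) * ((j : ℕ) : ZMod (2 ^ r))) Q
          = k + w * (2 : ZMod (2 ^ r)) ^ (r - q) * ((i : ℕ) : ZMod (2 ^ r))
              + g * (2 : ZMod (2 ^ r)) ^ (r - v) * ((j : ℕ) : ZMod (2 ^ r))} : ℤ) =
      ∑ x, if w * (2 ^ (r - q) * ((i : ℕ) : ZMod (2 ^ r))) = G x (2 ^ (r - v) * ((j : ℕ) : ZMod (2 ^ r))) - k then (1:ℤ) else 0 := by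
    intro i j
    rw [Nat.card_eq_fintype_card, Fintype.card_subtype, Finset.card_filter]
    push_cast
    refine Finset.sum_congr rfl fun x _ => ?_
    refine if_congr ?_ rfl rfl
    simp only [G, ← mul_assoc]
    constructor
    · intro h; linear_combination -h
    · intro h; linear_combination -h
  simp only [e1]
  set S := ∑ i : Fin (2 ^ q), ∑ j : Fin (2 ^ v), ∑ x, (if w * (2 ^ (r - q) * ((i : ℕ) : ZMod (2 ^ r))) = G x (2 ^ (r - v) * ((j : ℕ) : ZMod (2 ^ r))) - k then (1:ℤ) else 0) with hS
  obtain ⟨b, hb, hcl⟩ := count_lin r (w * 2 ^ (r - q))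
  have e2 : (2:ℤ) ^ (r - q) * (2 ^ (r - v) * S) =
      2 ^ b * ∑ p, if ZMod.castHom (pow_dvd_pow 2 hb) (ZMod (2 ^ b)) (F p) = ZMod.castHom (pow_dvd_pow 2 hb) (ZMod (2 ^ b)) k then (1:ℤ) else 0 := by
    have a1 : (2:ℤ) ^ (r - v) * S = ∑ i : Fin (2 ^ q), ∑ p, (if w * (2 ^ (r - q) * ((i : ℕ) : ZMod (2 ^ r))) = F p - k then (1:ℤ) else 0) := by
      rw [hS, Finset.mul_sum]
      refine Finset.sum_congr rfl fun i _ => ?_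
      rw [sum_scale r v hv (fun y => ∑ x, (if w * (2 ^ (r - q) * ((i : ℕ) : ZMod (2 ^ r))) = G x y - k then (1:ℤ) else 0)),
        Fintype.sum_prod_type_right]
    rw [a1, sum_scale r q hq (fun a => ∑ p, (if w * a = F p - k then (1:ℤ) else 0)), Finset.sum_comm,
      Finset.mul_sum]
    refine Finset.sum_congr rfl fun p _ => ?_
    simp only [← mul_assoc]
    rw [hcl, mul_ite, mul_one, mul_zero]
    exact if_congr (by rw [map_sub, sub_eq_zero]) rfl rfl
  have e3 := main_dvd r n hn Q hQ g u (r - v) T hT F (fun p => rfl) b hb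
    (ZMod.castHom (pow_dvd_pow 2 hb) (ZMod (2 ^ b)) k)
  have e4 := mul_dvd_mul_left ((2:ℤ) ^ b) e3
  rw [mul_left_comm, ← e2, ← pow_add] at e4
  have x1 := XX_le r (n - 1) (r - v) b (by omega) hb
  have x2 := XX_r r (n - 1) v hv
  have hpos : 2 ≤ r * (n - 1) := by nlinarith [show 2 ≤ n - 1 by omega]
  set e := (r * (n - 1) + min (2 * v) r + 1) / 2 with he
  have hepos : 1 ≤ e := by omega
  have e5 := (pow_dvd_pow (2:ℤ) (show (1 + (r - q) + (r - v)) + (e + q - 1) ≤ b + (XX r (n - 1) (r - v) b + 1) / 2 by omega)).trans e4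
  rw [pow_add] at e5
  have e6 : (2:ℤ) * (2 ^ (r - q) * (2 ^ (r - v) * S)) = 2 ^ (1 + (r - q) + (r - v)) * S := by ring
  rw [e6] at e5
  exact Int.dvd_of_mul_dvd_mul_left (by positivity) e5
end

section
/- Let r ≥ 1 and let Q be a polynomial of total degree at most 2 in 3 variables (x, y, z) over Z_{2^r}. Then for all natural numbers q ≤ r and v ≤ r, all elements k, w, g, u ∈ Z_{2^r}, and every polynomial T of total degree at most 1 in the variables x, y, the sum Σ_{i=0}^{2^q - 1} Σ_{j=0}^{2^v - 1} #(k + w 2^{r-q} i + g 2^{r-v} j)_{Q, z = T(x,y) + u 2^{r-v} j} is divisible by 2^{r + ⌈min(2v, r)/2⌉ + q - 1}. -/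
section aux
open Finset

lemma S_mul (f : ℕ → ℕ) (N : ℕ) (hf : ∀ x, f (x + N) = f x) (K : ℕ) :
    ∑ x ∈ range (K * N), f x = K * ∑ x ∈ range N, f x := by
  induction K with
  | zero => simp
  | succ K ih =>
    rw [Nat.succ_mul, Finset.sum_range_add, ih, Nat.succ_mul]
    congr 1
    apply Finset.sum_congr rfl
    intro x _
    have : ∀ k, f (k * N + x) = f x := by
      intro k
      induction k with
      | zero => simp
      | succ k ih => rw [← ih, ← hf (k * N + x)]; congr 1; ring
    exact this K

lemma S_per (f : ℕ → ℕ) (n k : ℕ) (hf : ∀ x, f (x + 2 ^ n) = f x) :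
    ∑ x ∈ range (2 ^ (n + k)), f x = 2 ^ k * ∑ x ∈ range (2 ^ n), f x := by
  rw [← S_mul f _ hf, pow_add, mul_comm (2 ^ n)]

lemma S_split (f : ℕ → ℕ) (n : ℕ) :
    ∑ x ∈ range (2 ^ (n + 1)), f x = ∑ e ∈ range 2, ∑ x ∈ range (2 ^ n), f (e + 2 * x) := by
  have : ∀ N, ∑ x ∈ range (2 * N), f x = ∑ e ∈ range 2, ∑ x ∈ range N, f (e + 2 * x) := by
    intro N
    induction N with
    | zero => simp
    | succ N ih =>
      rw [show 2 * (N + 1) = 2 * N + 1 + 1 by ring, sum_range_succ, sum_range_succ, ih]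
      simp only [sum_range_succ, sum_range_zero]
      rw [show 1 + 2 * N = 2 * N + 1 by ring]
      simp only [zero_add]
      ring
  rw [← this, pow_succ, mul_comm]

lemma hensel (n : ℕ) (a b c : ℤ) (hb : Odd b) :
    ∑ x ∈ range (2 ^ n), (if (2 ^ n : ℤ) ∣ c + b * x + 2 * a * x ^ 2 then 1 else 0) = 1 := by
  rw [← Finset.card_filter, Finset.card_eq_one]
  let φ : Fin (2 ^ n) → ZMod (2 ^ n) := fun x => ((c + b * (x : ℕ) + 2 * a * (x : ℕ) ^ 2 : ℤ) : ZMod (2 ^ n))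
  have inj : ∀ x y : ℕ, x < 2 ^ n → y < 2 ^ n →
      (2 ^ n : ℤ) ∣ (c + b * x + 2 * a * x ^ 2) - (c + b * y + 2 * a * y ^ 2) → x = y := by
    intro x y hx hy h
    have h1 : (c + b * x + 2 * a * x ^ 2) - (c + b * y + 2 * a * y ^ 2)
      = (b + 2 * (a * (x + y))) * ((x : ℤ) - y) := by ring
    rw [h1] at h
    have h2 : IsCoprime (2 ^ n : ℤ) (b + 2 * (a * (x + y))) := by
      apply IsCoprime.pow_left
      have : Odd (b + 2 * (a * (x + y))) := hb.add_even (even_two_mul _)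
      exact Int.isCoprime_iff_gcd_eq_one.mpr (by
        have := Int.isCoprime_iff_gcd_eq_one.mp (Int.isCoprime_two_left.mpr this)
        exact this)
    have h3 := h2.dvd_of_dvd_mul_left h
    have h4 : (x : ℤ) ≡ y [ZMOD ((2 ^ n : ℕ) : ℤ)] := by
      apply Int.ModEq.symm
      rw [Int.modEq_iff_dvd]; push_cast; exact h3
    have h5 := Int.natCast_modEq_iff.mp h4
    exact Nat.ModEq.eq_of_lt_of_lt h5 hx hy
  have hinj : Function.Injective φ := by
    intro x y h
    have h' := (ZMod.intCast_eq_intCast_iff_dvd_sub _ _ _).mp h.symm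
    push_cast at h'
    exact Fin.ext (inj x y x.2 y.2 h')
  have : NeZero (2 ^ n) := ⟨by positivity⟩
  have hbij : Function.Bijective φ := by
    rw [Fintype.bijective_iff_injective_and_card]
    exact ⟨hinj, by simp [ZMod.card]⟩
  obtain ⟨x, hx⟩ := hbij.2 0
  have hx' : (2 ^ n : ℤ) ∣ c + b * (x : ℕ) + 2 * a * (x : ℕ) ^ 2 := by
    have := (ZMod.intCast_zmod_eq_zero_iff_dvd _ _).mp hx
    push_cast at this
    exact this
  refine ⟨x, ?_⟩
  ext y
  simp only [mem_filter, mem_range, mem_singleton]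
  constructor
  · rintro ⟨h1, h2⟩
    exact inj y x h1 x.2 (dvd_sub h2 hx')
  · rintro rfl
    exact ⟨x.2, hx'⟩

/-- indicator -/
def ind (n : ℕ) (X : ℤ) : ℕ := if (2 ^ n : ℤ) ∣ X then 1 else 0

lemma ind_congr (n : ℕ) (X Y : ℤ) (h : (2 ^ n : ℤ) ∣ X - Y) : ind n X = ind n Y := by
  unfold ind
  have : (2 ^ n : ℤ) ∣ X ↔ (2 ^ n : ℤ) ∣ Y := by
    constructor
    · intro h1; have := dvd_sub h1 h; simpa using this
    · intro h1; have := dvd_add h1 h; simpa using this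
  simp only [this]

lemma ind_mul (n k : ℕ) (X : ℤ) : ind (n + k) (2 ^ k * X) = ind n X := by
  unfold ind
  have : (2 ^ (n + k) : ℤ) ∣ 2 ^ k * X ↔ (2 ^ n : ℤ) ∣ X := by
    rw [pow_add, mul_comm (2 ^ n : ℤ)]
    exact mul_dvd_mul_iff_left (by positivity)
  simp only [this]

lemma ind_zero (n k : ℕ) (X : ℤ) (hk : k ≤ n) (h : ¬ (2 ^ k : ℤ) ∣ X) : ind n X = 0 := by
  unfold ind
  rw [if_neg]
  intro h1
  exact h ((pow_dvd_pow 2 hk).trans h1)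

lemma henselI (n : ℕ) (a b c : ℤ) (hb : Odd b) :
    ∑ x ∈ range (2 ^ n), ind n (c + b * x + 2 * a * x ^ 2) = 1 := hensel n a b c hb

/-- Hensel in a class. -/
lemma henselC (n : ℕ) (a b c : ℤ) (hb : Odd b) :
    ∑ x ∈ range (2 ^ n), ind (n + 1) (c + 2 * b * x + 4 * a * x ^ 2) = ind 1 c := by
  by_cases hc : (2 : ℤ) ∣ c
  · obtain ⟨c, rfl⟩ := hc
    rw [show ind 1 (2 * c) = 1 by simp [ind]]
    refine Eq.trans ?_ (henselI n a b c hb)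
    apply sum_congr rfl
    intro x _
    rw [← ind_mul n 1]; congr 1; ring
  · rw [ind_zero 1 1 c le_rfl (by simpa using hc)]
    apply sum_eq_zero
    intro x _
    apply ind_zero _ 1 _ (by omega)
    intro h
    apply hc
    have : c = (c + 2 * b * x + 4 * a * x ^ 2) - 2 * (b * x + 2 * a * x ^ 2) := by ring
    rw [this]
    exact dvd_sub (by simpa using h) (dvd_mul_right _ _)

def q2 (F D E A B C x y : ℤ) : ℤ := F + D * x + E * y + A * x ^ 2 + B * x * y + C * y ^ 2

lemma box2 (f : ℤ → ℤ → ℕ) (n k : ℕ) (hx : ∀ x y, f (x + 2 ^ n) y = f x y)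
    (hy : ∀ x y, f x (y + 2 ^ n) = f x y) :
    ∑ x ∈ range (2 ^ (n + k)), ∑ y ∈ range (2 ^ (n + k)), f x y =
      2 ^ (2 * k) * ∑ x ∈ range (2 ^ n), ∑ y ∈ range (2 ^ n), f x y := by
  rw [S_per (fun x : ℕ => ∑ y ∈ range (2 ^ (n + k)), f x y) n k]
  · rw [two_mul, pow_add 2 k k, mul_assoc]
    congr 1
    rw [mul_sum]
    apply sum_congr rfl
    intro x _
    rw [S_per (fun y : ℕ => f x y) n k]
    intro y
    simp [hy]
  · intro x
    simp [hx]

def N2 (m : ℕ) (F D E A B C : ℤ) : ℕ :=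
  ∑ x ∈ range (2 ^ m), ∑ y ∈ range (2 ^ m), ind m (q2 F D E A B C x y)

def C2 (n : ℕ) (F D E A B C : ℤ) : ℕ :=
  ∑ x ∈ range (2 ^ n), ∑ y ∈ range (2 ^ n), ind (n + 1) (q2 F (2 * D) (2 * E) (4 * A) (4 * B) (4 * C) x y)

lemma even_iff_not_odd' (D : ℤ) (h : ¬ Odd D) : ∃ D', D = 2 * D' := by
  obtain ⟨k, hk⟩ := Int.not_odd_iff_even.mp h
  exact ⟨k, by omega⟩

lemma C2_dvd (n : ℕ) (ih : ∀ m < n, ∀ F D E A B C, 2 ^ m ∣ 2 * N2 m F D E A B C)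
    (F D E A B C : ℤ) : 2 ^ (n + 1) ∣ 2 * C2 n F D E A B C := by
  rw [pow_succ, mul_comm]
  apply mul_dvd_mul_left
  unfold C2
  by_cases hD : Odd D
  · rw [sum_comm]
    have : ∀ y ∈ range (2 ^ n), ∑ x ∈ range (2 ^ n),
        ind (n + 1) (q2 F (2 * D) (2 * E) (4 * A) (4 * B) (4 * C) x y) = ind 1 F := by
      intro y _
      rw [← ind_congr 1 (F + 2 * (E * y + 2 * C * y ^ 2)) F (by simp),
        ← henselC n A (D + 2 * (B * y)) (F + 2 * (E * y + 2 * C * y ^ 2)) (hD.add_even (even_two_mul _))]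
      apply sum_congr rfl
      intro x _
      congr 1; unfold q2; ring
    rw [sum_congr rfl this]; simp
  by_cases hE : Odd E
  · have : ∀ x ∈ range (2 ^ n), ∑ y ∈ range (2 ^ n),
        ind (n + 1) (q2 F (2 * D) (2 * E) (4 * A) (4 * B) (4 * C) x y) = ind 1 F := by
      intro x _
      rw [← ind_congr 1 (F + 2 * (D * x + 2 * A * x ^ 2)) F (by simp),
        ← henselC n C (E + 2 * (B * x)) (F + 2 * (D * x + 2 * A * x ^ 2)) (hE.add_even (even_two_mul _))]
      apply sum_congr rfl
      intro y _
      congr 1; unfold q2; ring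
    rw [sum_congr rfl this]; simp
  obtain ⟨D, rfl⟩ := even_iff_not_odd' D hD
  obtain ⟨E, rfl⟩ := even_iff_not_odd' E hE
  rcases n with _ | n
  · simp
  by_cases hF : (4 : ℤ) ∣ F
  · obtain ⟨F, rfl⟩ := hF
    have h := ih n (by omega) F D E A B C
    have e : ∀ x y : ℤ, ind (n + 1 + 1) (q2 (4 * F) (2 * (2 * D)) (2 * (2 * E)) (4 * A) (4 * B) (4 * C) x y)
        = ind n (q2 F D E A B C x y) := by
      intro x y
      rw [← ind_mul n 2]; congr 1; unfold q2; ring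
    simp only [e]
    rw [box2 (fun x y => ind n (q2 F D E A B C x y)) n 1]
    · rw [show 2 ^ (2 * 1) * ∑ x ∈ range (2 ^ n), ∑ y ∈ range (2 ^ n), ind n (q2 F D E A B C x y)
        = 2 * (2 * N2 n F D E A B C) by unfold N2; ring, pow_succ, mul_comm]
      exact mul_dvd_mul_left _ h
    · intro x y
      apply ind_congr
      exact ⟨D + A * (2 * x + 2 ^ n) + B * y, by unfold q2; ring⟩
    · intro x y
      apply ind_congr
      exact ⟨E + C * (2 * y + 2 ^ n) + B * x, by unfold q2; ring⟩
  · rw [sum_eq_zero]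
    · simp
    intro x _
    apply sum_eq_zero
    intro y _
    apply ind_zero _ 2 _ (by omega)
    intro h
    apply hF
    have : F = (q2 F (2 * (2 * D)) (2 * (2 * E)) (4 * A) (4 * B) (4 * C) x y)
      - 4 * (D * x + E * y + A * x ^ 2 + B * x * y + C * y ^ 2) := by unfold q2; ring
    rw [this]
    exact dvd_sub (by simpa using h) (dvd_mul_right _ _)

lemma N2_dvd (m : ℕ) : ∀ F D E A B C, 2 ^ m ∣ 2 * N2 m F D E A B C := by
  induction m using Nat.strong_induction_on with
  | _ m ih =>
  intro F D E A B C
  rcases m with _ | n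
  · simp
  unfold N2
  rw [S_split]
  simp only [S_split _ n]
  rw [mul_sum]
  apply dvd_sum
  intro x0 _
  rw [sum_comm, mul_sum]
  apply dvd_sum
  intro y0 _
  have h := C2_dvd n (fun m hm => ih m (by omega)) (q2 F D E A B C x0 y0)
    (D + 2 * A * x0 + B * y0) (E + 2 * C * y0 + B * x0) A B C
  refine h.trans (dvd_of_eq (congrArg _ ?_))
  unfold C2
  apply sum_congr rfl
  intro x _
  apply sum_congr rfl
  intro y _
  congr 1
  unfold q2
  push_cast
  ring

lemma C2_dvd' (n : ℕ) (F D E A B C : ℤ) : 2 ^ (n + 1) ∣ 2 * C2 n F D E A B C :=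
  C2_dvd n (fun m _ => N2_dvd m) F D E A B C

def q3 (F D E H A B C G I J x y z : ℤ) : ℤ :=
  q2 F D E A B C x y + z * (H + I * x + J * y) + G * z ^ 2

def N3 (d v : ℕ) (F D E H A B C G I J : ℤ) : ℕ :=
  ∑ x ∈ range (2 ^ (d + v)), ∑ y ∈ range (2 ^ (d + v)), ∑ j ∈ range (2 ^ v),
    ind (d + v) (q3 F D E H A B C G I J x y (2 ^ d * j))

def ex (d v : ℕ) : ℕ := (d + v) + (min (2 * v) (d + v) + 1) / 2

lemma ind_x (n : ℕ) (F D E H A B C G I J x y z : ℤ) :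
    ind n (q3 F D E H A B C G I J (x + 2 ^ n) y z) = ind n (q3 F D E H A B C G I J x y z) := by
  apply ind_congr
  exact ⟨D + A * (2 * x + 2 ^ n) + B * y + z * I, by unfold q3 q2; ring⟩

lemma ind_y (n : ℕ) (F D E H A B C G I J x y z : ℤ) :
    ind n (q3 F D E H A B C G I J x (y + 2 ^ n) z) = ind n (q3 F D E H A B C G I J x y z) := by
  apply ind_congr
  exact ⟨E + C * (2 * y + 2 ^ n) + B * x + z * J, by unfold q3 q2; ring⟩

lemma ind_z (n : ℕ) (F D E H A B C G I J x y z : ℤ) :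
    ind n (q3 F D E H A B C G I J x y (z + 2 ^ n)) = ind n (q3 F D E H A B C G I J x y z) := by
  apply ind_congr
  exact ⟨(H + I * x + J * y) + G * (2 * z + 2 ^ n), by unfold q3; ring⟩

lemma box3 (d v k : ℕ) (F D E H A B C G I J : ℤ) :
    ∑ x ∈ range (2 ^ (d + v + k)), ∑ y ∈ range (2 ^ (d + v + k)), ∑ j ∈ range (2 ^ (v + k)),
      ind (d + v) (q3 F D E H A B C G I J x y (2 ^ d * j)) =
    2 ^ (3 * k) * N3 d v F D E H A B C G I J := by
  rw [box2 (fun x y => ∑ j ∈ range (2 ^ (v + k)),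
      ind (d + v) (q3 F D E H A B C G I J x y (2 ^ d * j)))]
  · rw [show 3 * k = 2 * k + k by ring, pow_add 2 (2 * k) k, mul_assoc]
    congr 1
    unfold N3
    rw [mul_sum]
    apply sum_congr rfl
    intro x _
    rw [mul_sum]
    apply sum_congr rfl
    intro y _
    rw [S_per (fun j : ℕ => ind (d + v) (q3 F D E H A B C G I J x y (2 ^ d * j)))]
    intro j
    refine Eq.trans ?_ (ind_z _ _ _ _ _ _ _ _ _ _ _ _ _ _)
    congr 2
    push_cast; ring
  · intro x y
    simp only [ind_x]
  · intro x y
    simp only [ind_y]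

lemma ex_le (d v : ℕ) : ex d v ≤ d + 2 * v := by unfold ex; omega

lemma N3_v0 (d : ℕ) (F D E H A B C G I J : ℤ) : 2 ^ ex d 0 ∣ 2 * N3 d 0 F D E H A B C G I J := by
  have := N2_dvd d F D E A B C
  have e : ex d 0 = d := by simp [ex]
  rw [e]
  refine this.trans (dvd_of_eq (congrArg _ ?_))
  simp [N3, N2, q3]

lemma N3_01 (F D E H A B C G I J : ℤ) : 2 ^ ex 0 1 ∣ 2 * N3 0 1 F D E H A B C G I J := by
  rw [show ex 0 1 = 2 by rfl, pow_two]
  apply mul_dvd_mul_left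
  have key : ∀ X : ℤ, (2 : ℤ) ∣ (ind 1 X : ℤ) - (1 - X) := by
    intro X
    unfold ind
    split_ifs with h
    · simp at h ⊢; exact h
    · simp at h ⊢; omega
  have h1 : (2 : ℤ) ∣ ∑ x ∈ range (2 ^ (0 + 1)), ∑ y ∈ range (2 ^ (0 + 1)), ∑ j ∈ range (2 ^ 1),
    ((ind (0 + 1) (q3 F D E H A B C G I J x y (2 ^ 0 * j)) : ℤ)
      - (1 - q3 F D E H A B C G I J x y (2 ^ 0 * j))) :=
    dvd_sum fun x _ => dvd_sum fun y _ => dvd_sum fun j _ => key _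
  simp only [sum_sub_distrib] at h1
  have h2 : (2 : ℤ) ∣ ∑ x ∈ range (2 ^ (0 + 1)), ∑ y ∈ range (2 ^ (0 + 1)), ∑ j ∈ range (2 ^ 1),
    (1 - q3 F D E H A B C G I J x y (2 ^ 0 * j)) := by
    simp [sum_range_succ, q3, q2]
    ring_nf
    omega
  simp only [sum_sub_distrib] at h2
  have h3 := dvd_add h1 h2
  rw [sub_add_cancel] at h3
  unfold N3
  exact_mod_cast h3

/-- class for `d = 0` -/
lemma N3_0class (n : ℕ) (ih : ∀ F D E H A B C G I J, 2 ^ ex 0 n ∣ 2 * N3 0 n F D E H A B C G I J)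
    (F D E H A B C G I J : ℤ) :
    2 ^ ex 0 (n + 2) ∣ 2 * ∑ x ∈ range (2 ^ (n + 1)), ∑ y ∈ range (2 ^ (n + 1)),
      ∑ j ∈ range (2 ^ (n + 1)), ind (n + 1 + 1) (q3 F (2 * D) (2 * E) (2 * H) (4 * A) (4 * B) (4 * C)
        (4 * G) (4 * I) (4 * J) x y j) := by
  have fin : ∀ c : ℕ, 2 ^ ex 0 (n + 2) ∣ 2 * (2 ^ (n + 1) * (2 ^ (n + 1) * c)) := by
    intro c
    refine (pow_dvd_pow 2 (?_ : _ ≤ 1 + (n + 1) + (n + 1))).trans ⟨c, by ring⟩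
    unfold ex; omega
  by_cases hD : Odd D
  · have : ∀ y ∈ range (2 ^ (n + 1)), ∀ j ∈ range (2 ^ (n + 1)), ∑ x ∈ range (2 ^ (n + 1)),
        ind (n + 1 + 1) (q3 F (2 * D) (2 * E) (2 * H) (4 * A) (4 * B) (4 * C)
        (4 * G) (4 * I) (4 * J) x y j) = ind 1 F := by
      intro y _ z _
      rw [← ind_congr 1 (F + 2 * (E * y + 2 * C * y ^ 2 + z * (H + 2 * J * y) + 2 * G * z ^ 2)) F (by simp),
        ← henselC (n + 1) A (D + 2 * (B * y + I * z)) _ (hD.add_even (even_two_mul _))]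
      apply sum_congr rfl
      intro x _
      congr 1; unfold q3 q2; ring
    rw [sum_comm]
    rw [sum_congr rfl (fun y hy => by rw [sum_comm, sum_congr rfl (this y hy)])]
    simpa using fin _
  by_cases hE : Odd E
  · have : ∀ x ∈ range (2 ^ (n + 1)), ∀ j ∈ range (2 ^ (n + 1)), ∑ y ∈ range (2 ^ (n + 1)),
        ind (n + 1 + 1) (q3 F (2 * D) (2 * E) (2 * H) (4 * A) (4 * B) (4 * C)
        (4 * G) (4 * I) (4 * J) x y j) = ind 1 F := by
      intro x _ z _
      rw [← ind_congr 1 (F + 2 * (D * x + 2 * A * x ^ 2 + z * (H + 2 * I * x) + 2 * G * z ^ 2)) F (by simp),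
        ← henselC (n + 1) C (E + 2 * (B * x + J * z)) _ (hE.add_even (even_two_mul _))]
      apply sum_congr rfl
      intro y _
      congr 1; unfold q3 q2; ring
    rw [sum_congr rfl (fun y hy => by rw [sum_comm, sum_congr rfl (this y hy)])]
    simpa using fin _
  by_cases hH : Odd H
  · have : ∀ x ∈ range (2 ^ (n + 1)), ∀ y ∈ range (2 ^ (n + 1)), ∑ j ∈ range (2 ^ (n + 1)),
        ind (n + 1 + 1) (q3 F (2 * D) (2 * E) (2 * H) (4 * A) (4 * B) (4 * C)
        (4 * G) (4 * I) (4 * J) x y j) = ind 1 F := by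
      intro x _ y _
      rw [← ind_congr 1 (F + 2 * (D * x + 2 * A * x ^ 2 + E * y + 2 * C * y ^ 2 + 2 * B * x * y)) F (by simp),
        ← henselC (n + 1) G (H + 2 * (I * x + J * y)) _ (hH.add_even (even_two_mul _))]
      apply sum_congr rfl
      intro z _
      congr 1; unfold q3 q2; ring
    rw [sum_congr rfl (fun y hy => by rw [sum_congr rfl (this y hy)])]
    simpa using fin _
  obtain ⟨D, rfl⟩ := even_iff_not_odd' D hD
  obtain ⟨E, rfl⟩ := even_iff_not_odd' E hE
  obtain ⟨H, rfl⟩ := even_iff_not_odd' H hH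
  by_cases hF : (4 : ℤ) ∣ F
  · obtain ⟨F, rfl⟩ := hF
    have h := ih F D E H A B C G I J
    have b := box3 0 n 1 F D E H A B C G I J
    have e : ∀ x y z : ℤ, ind (n + 1 + 1) (q3 (4 * F) (2 * (2 * D)) (2 * (2 * E)) (2 * (2 * H)) (4 * A) (4 * B) (4 * C)
        (4 * G) (4 * I) (4 * J) x y z)
        = ind n (q3 F D E H A B C G I J x y z) := by
      intro x y z
      rw [← ind_mul n 2]; congr 1; unfold q3 q2; ring
    simp only [e]
    simp only [zero_add, pow_zero, one_mul] at b
    rw [b, show ex 0 (n + 2) = 3 + ex 0 n by unfold ex; omega, pow_add]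
    rw [show 2 * (2 ^ (3 * 1) * N3 0 n F D E H A B C G I J) = 2 ^ 3 * (2 * N3 0 n F D E H A B C G I J) by ring]
    exact mul_dvd_mul_left _ h
  · rw [sum_eq_zero]
    · simp
    intro x _
    apply sum_eq_zero
    intro y _
    apply sum_eq_zero
    intro z _
    apply ind_zero _ 2 _ (by omega)
    intro h
    apply hF
    have : F = (q3 F (2 * (2 * D)) (2 * (2 * E)) (2 * (2 * H)) (4 * A) (4 * B) (4 * C)
        (4 * G) (4 * I) (4 * J) x y z)
      - 4 * (D * x + E * y + H * z + A * x ^ 2 + B * x * y + C * y ^ 2 + G * z ^ 2 + I * x * z + J * y * z) := by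
      unfold q3 q2; ring
    rw [this]
    exact dvd_sub (by simpa using h) (dvd_mul_right _ _)

lemma N3_0 (n : ℕ) (ih : ∀ F D E H A B C G I J, 2 ^ ex 0 n ∣ 2 * N3 0 n F D E H A B C G I J)
    (F D E H A B C G I J : ℤ) : 2 ^ ex 0 (n + 2) ∣ 2 * N3 0 (n + 2) F D E H A B C G I J := by
  unfold N3
  simp only [zero_add, pow_zero, one_mul]
  rw [show n + 2 = n + 1 + 1 by rfl]
  rw [S_split]
  simp only [S_split _ (n + 1)]
  rw [mul_sum]
  apply dvd_sum
  intro x0 _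
  rw [sum_comm, mul_sum]
  apply dvd_sum
  intro y0 _
  rw [sum_congr rfl (fun x _ => sum_comm), sum_comm, mul_sum]
  apply dvd_sum
  intro z0 _
  have h := N3_0class n ih (q3 F D E H A B C G I J x0 y0 z0)
    (D + 2 * A * x0 + B * y0 + I * z0) (E + 2 * C * y0 + B * x0 + J * z0)
    (H + 2 * G * z0 + I * x0 + J * y0) A B C G I J
  refine h.trans (dvd_of_eq (congrArg _ ?_))
  apply sum_congr rfl
  intro x _
  apply sum_congr rfl
  intro y _
  apply sum_congr rfl
  intro z _
  congr 1
  unfold q3 q2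
  push_cast
  ring

lemma N3_class (d v : ℕ) (ih : ∀ F D E H A B C G I J, 2 ^ ex d v ∣ 2 * N3 d v F D E H A B C G I J)
    (F D E H A B C G I J : ℤ) :
    2 ^ ex (d + 1) (v + 1) ∣ 2 * ∑ x ∈ range (2 ^ (d + v + 1)), ∑ y ∈ range (2 ^ (d + v + 1)),
      ∑ j ∈ range (2 ^ (v + 1)), ind (d + v + 1 + 1) (q3 F (2 * D) (2 * E) H (4 * A) (4 * B) (4 * C)
        G (2 * I) (2 * J) x y (2 ^ (d + 1) * j)) := by
  have fin : ∀ c : ℕ, 2 ^ ex (d + 1) (v + 1) ∣ 2 * (2 ^ (d + v + 1) * (2 ^ (v + 1) * c)) := by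
    intro c
    refine (pow_dvd_pow 2 (?_ : _ ≤ 1 + (d + v + 1) + (v + 1))).trans ⟨c, by ring⟩
    unfold ex; omega
  by_cases hD : Odd D
  · have : ∀ y ∈ range (2 ^ (d + v + 1)), ∀ j ∈ range (2 ^ (v + 1)), ∑ x ∈ range (2 ^ (d + v + 1)),
        ind (d + v + 1 + 1) (q3 F (2 * D) (2 * E) H (4 * A) (4 * B) (4 * C)
        G (2 * I) (2 * J) x y (2 ^ (d + 1) * j)) = ind 1 F := by
      intro y _ j _
      rw [← ind_congr 1 (F + 2 * (E * y + 2 * C * y ^ 2 + (2 ^ d * j) * (H + 2 * J * y) + 2 * G * (2 ^ d * j) ^ 2)) F (by simp),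
        ← henselC (d + v + 1) A (D + 2 * (B * y + I * (2 ^ d * j))) _ (hD.add_even (even_two_mul _))]
      apply sum_congr rfl
      intro x _
      congr 1; unfold q3 q2; ring
    rw [sum_comm]
    rw [sum_congr rfl (fun y hy => by rw [sum_comm, sum_congr rfl (this y hy)])]
    simpa using fin _
  by_cases hE : Odd E
  · have : ∀ x ∈ range (2 ^ (d + v + 1)), ∀ j ∈ range (2 ^ (v + 1)), ∑ y ∈ range (2 ^ (d + v + 1)),
        ind (d + v + 1 + 1) (q3 F (2 * D) (2 * E) H (4 * A) (4 * B) (4 * C)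
        G (2 * I) (2 * J) x y (2 ^ (d + 1) * j)) = ind 1 F := by
      intro x _ j _
      rw [← ind_congr 1 (F + 2 * (D * x + 2 * A * x ^ 2 + (2 ^ d * j) * (H + 2 * I * x) + 2 * G * (2 ^ d * j) ^ 2)) F (by simp),
        ← henselC (d + v + 1) C (E + 2 * (B * x + J * (2 ^ d * j))) _ (hE.add_even (even_two_mul _))]
      apply sum_congr rfl
      intro x _
      congr 1; unfold q3 q2; ring
    rw [sum_congr rfl (fun y hy => by rw [sum_comm, sum_congr rfl (this y hy)])]
    simpa using fin _
  by_cases hH : Odd H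
  · have key : ∀ (X O : ℤ), Odd O → ∑ j ∈ range (2 ^ (v + 1)),
        ind (d + v + 1 + 1) (X + 2 ^ (d + 1) * j * O + G * (2 ^ (d + 1) * j) ^ 2) = ind (d + 1) X := by
      intro X O hO
      by_cases hX : (2 ^ (d + 1) : ℤ) ∣ X
      · rw [show ind (d + 1) X = 1 by simp [ind, hX]]
        obtain ⟨X, rfl⟩ := hX
        refine Eq.trans ?_ (henselI (v + 1) (2 ^ d * G) O X hO)
        apply sum_congr rfl
        intro j _
        rw [← ind_mul (v + 1) (d + 1), show v + 1 + (d + 1) = d + v + 1 + 1 by ring]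
        congr 1; ring
      · rw [ind_zero _ _ _ le_rfl hX]
        apply sum_eq_zero
        intro j _
        apply ind_zero _ (d + 1) _ (by omega)
        intro h
        apply hX
        have : X = (X + 2 ^ (d + 1) * j * O + G * (2 ^ (d + 1) * j) ^ 2)
          - 2 ^ (d + 1) * (j * O + G * 2 ^ (d + 1) * j ^ 2) := by ring
        rw [this]
        exact dvd_sub h (dvd_mul_right _ _)
    have : ∀ x y : ℤ, ∑ j ∈ range (2 ^ (v + 1)),
        ind (d + v + 1 + 1) (q3 F (2 * D) (2 * E) H (4 * A) (4 * B) (4 * C)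
        G (2 * I) (2 * J) x y (2 ^ (d + 1) * j)) =
        ind (d + 1) (q2 F (2 * D) (2 * E) (4 * A) (4 * B) (4 * C) x y) := by
      intro x y
      rw [← key _ (H + 2 * I * x + 2 * J * y)]
      · simp only [q3]
      · rw [add_assoc, mul_assoc, mul_assoc, ← mul_add]
        exact hH.add_even (even_two_mul _)
    simp only [this]
    rw [show d + v + 1 = d + (v + 1) by ring]
    rw [box2 (fun x y => ind (d + 1) (q2 F (2 * D) (2 * E) (4 * A) (4 * B) (4 * C) x y))]
    · have h := C2_dvd' d F D E A B C
      rw [mul_left_comm]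
      change _ ∣ 2 ^ (2 * (v + 1)) * (2 * C2 d F D E A B C)
      refine (pow_dvd_pow 2 (?_ : _ ≤ 2 * (v + 1) + (d + 1))).trans ?_
      · unfold ex; omega
      · rw [pow_add]
        exact mul_dvd_mul_left _ h
    · intro x y
      apply ind_congr
      exact ⟨D + 2 * A * (2 * x + 2 ^ d) + 2 * B * y, by unfold q2; ring⟩
    · intro x y
      apply ind_congr
      exact ⟨E + 2 * C * (2 * y + 2 ^ d) + 2 * B * x, by unfold q2; ring⟩
  obtain ⟨D, rfl⟩ := even_iff_not_odd' D hD
  obtain ⟨E, rfl⟩ := even_iff_not_odd' E hE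
  obtain ⟨H, rfl⟩ := even_iff_not_odd' H hH
  by_cases hF : (4 : ℤ) ∣ F
  · obtain ⟨F, rfl⟩ := hF
    have h := ih F D E H A B C G I J
    have b := box3 d v 1 F D E H A B C G I J
    have e : ∀ x y j : ℤ, ind (d + v + 1 + 1) (q3 (4 * F) (2 * (2 * D)) (2 * (2 * E)) (2 * H) (4 * A) (4 * B) (4 * C)
        G (2 * I) (2 * J) x y (2 ^ (d + 1) * j))
        = ind (d + v) (q3 F D E H A B C G I J x y (2 ^ d * j)) := by
      intro x y z
      rw [← ind_mul (d + v) 2]; congr 1; unfold q3 q2; ring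
    simp only [e]
    rw [b, show ex (d + 1) (v + 1) = 3 + ex d v by unfold ex; omega, pow_add]
    rw [show 2 * (2 ^ (3 * 1) * N3 d v F D E H A B C G I J) = 2 ^ 3 * (2 * N3 d v F D E H A B C G I J) by ring]
    exact mul_dvd_mul_left _ h
  · rw [sum_eq_zero]
    · simp
    intro x _
    apply sum_eq_zero
    intro y _
    apply sum_eq_zero
    intro z _
    apply ind_zero _ 2 _ (by omega)
    intro h
    apply hF
    have : F = (q3 F (2 * (2 * D)) (2 * (2 * E)) (2 * H) (4 * A) (4 * B) (4 * C)
        G (2 * I) (2 * J) x y (2 ^ (d + 1) * z))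
      - 4 * (D * x + E * y + A * x ^ 2 + B * x * y + C * y ^ 2 + (2 ^ d * z) * (H + I * x + J * y)
        + G * (2 ^ d * z) ^ 2) := by
      unfold q3 q2; ring
    rw [this]
    exact dvd_sub (by simpa using h) (dvd_mul_right _ _)

lemma N3_succ (d v : ℕ) (ih : ∀ F D E H A B C G I J, 2 ^ ex d v ∣ 2 * N3 d v F D E H A B C G I J)
    (F D E H A B C G I J : ℤ) :
    2 ^ ex (d + 1) (v + 1) ∣ 2 * N3 (d + 1) (v + 1) F D E H A B C G I J := by
  unfold N3
  rw [show d + 1 + (v + 1) = d + v + 1 + 1 by ring]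
  rw [S_split]
  simp only [S_split _ (d + v + 1)]
  rw [mul_sum]
  apply dvd_sum
  intro x0 _
  rw [sum_comm, mul_sum]
  apply dvd_sum
  intro y0 _
  have h := N3_class d v ih (q2 F D E A B C x0 y0)
    (D + 2 * A * x0 + B * y0) (E + 2 * C * y0 + B * x0)
    (H + I * x0 + J * y0) A B C G I J
  refine h.trans (dvd_of_eq (congrArg _ ?_))
  apply sum_congr rfl
  intro x _
  apply sum_congr rfl
  intro y _
  apply sum_congr rfl
  intro z _
  congr 1
  unfold q3 q2
  push_cast
  ring

lemma N3_dvd (v : ℕ) : ∀ d F D E H A B C G I J, 2 ^ ex d v ∣ 2 * N3 d v F D E H A B C G I J := by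
  induction v using Nat.strong_induction_on with
  | _ v ih =>
  intro d
  rcases v with _ | v
  · exact N3_v0 d
  rcases d with _ | d
  · rcases v with _ | v
    · exact N3_01
    · exact N3_0 v (ih v (by omega) 0)
  · exact N3_succ d v (ih v (by omega) d)

lemma w_lemma (p q : ℕ) (W : ℤ) : ∃ e ≤ q, ∀ X : ℤ,
    ∑ i ∈ range (2 ^ q), ind (p + q) (X - W * 2 ^ p * i) = 2 ^ e * ind (p + e) X := by
  by_cases hW : (2 ^ q : ℤ) ∣ W
  · obtain ⟨W, rfl⟩ := hW
    refine ⟨q, le_rfl, fun X => ?_⟩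
    have : ∀ i ∈ range (2 ^ q), ind (p + q) (X - 2 ^ q * W * 2 ^ p * i) = ind (p + q) X := by
      intro i _
      apply ind_congr
      exact ⟨-(W * i), by ring⟩
    rw [sum_congr rfl this]; simp
  · have : ∃ e O : _, e < q ∧ Odd O ∧ W = 2 ^ e * O := by
      have hW0 : W ≠ 0 := by rintro rfl; exact hW (dvd_zero _)
      have hf : FiniteMultiplicity (2 : ℤ) W := Int.finiteMultiplicity_iff.mpr ⟨by norm_num, hW0⟩
      obtain ⟨O, h1, h2⟩ := hf.exists_eq_pow_mul_and_not_dvd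
      refine ⟨_, O, ?_, ?_, h1⟩
      · by_contra hlt
        exact hW ((pow_dvd_pow 2 (not_lt.mp hlt)).trans ⟨O, h1⟩)
      · rw [← Int.not_even_iff_odd, even_iff_two_dvd]; exact h2
    obtain ⟨e, O, he, hO, rfl⟩ := this
    refine ⟨e, he.le, fun X => ?_⟩
    obtain ⟨t, rfl⟩ := Nat.exists_eq_add_of_lt he
    by_cases hX : (2 ^ (p + e) : ℤ) ∣ X
    · rw [show ind (p + e) X = 1 by simp [ind, hX]]
      obtain ⟨X, rfl⟩ := hX
      have h1 : ∀ i : ℕ, ind (p + (e + t + 1)) (2 ^ (p + e) * X - 2 ^ e * O * 2 ^ p * i)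
          = ind (t + 1) (X + (-O) * i + 2 * 0 * i ^ 2) := by
        intro i
        rw [← ind_mul (t + 1) (p + e), show t + 1 + (p + e) = p + (e + t + 1) by ring]
        congr 1; ring
      simp only [h1]
      rw [show e + t + 1 = t + 1 + e by ring,
        S_per (fun i : ℕ => ind (t + 1) (X + (-O) * i + 2 * 0 * i ^ 2)) (t + 1) e,
        henselI _ _ _ _ hO.neg]
      intro i
      apply ind_congr
      exact ⟨-O, by push_cast; ring⟩
    · rw [ind_zero _ _ _ le_rfl hX, mul_zero]
      apply sum_eq_zero
      intro i _
      apply ind_zero _ (p + e) _ (by omega)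
      intro h
      apply hX
      have : X = (X - 2 ^ e * O * 2 ^ p * i) + 2 ^ (p + e) * (O * i) := by ring
      rw [this]
      exact dvd_add h (dvd_mul_right _ _)

lemma total (r q v : ℕ) (hq : q ≤ r) (hv : v ≤ r) (W F D E H A B C G I J : ℤ) :
    2 ^ (r + (min (2 * v) r + 1) / 2 + q) ∣ 2 * ∑ i ∈ range (2 ^ q), ∑ j ∈ range (2 ^ v),
      ∑ x ∈ range (2 ^ r), ∑ y ∈ range (2 ^ r),
      ind r (q3 F D E H A B C G I J x y (2 ^ (r - v) * j) - W * 2 ^ (r - q) * i) := by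
  obtain ⟨p, rfl⟩ := Nat.exists_eq_add_of_le' hq
  obtain ⟨e, he, h⟩ := w_lemma p q W
  rw [Nat.add_sub_cancel]
  have h1 : ∑ i ∈ range (2 ^ q), ∑ j ∈ range (2 ^ v),
      ∑ x ∈ range (2 ^ (p + q)), ∑ y ∈ range (2 ^ (p + q)),
      ind (p + q) (q3 F D E H A B C G I J x y (2 ^ (p + q - v) * j) - W * 2 ^ p * i) =
      2 ^ e * ∑ x ∈ range (2 ^ (p + q)), ∑ y ∈ range (2 ^ (p + q)), ∑ j ∈ range (2 ^ v),
        ind (p + e) (q3 F D E H A B C G I J x y (2 ^ (p + q - v) * j)) := by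
    rw [sum_comm]
    rw [sum_congr rfl (fun j _ => sum_comm)]
    rw [sum_congr rfl (fun j _ => sum_congr rfl (fun x _ => sum_comm))]
    rw [sum_comm]
    rw [sum_congr rfl (fun x _ => sum_comm)]
    simp only [h, mul_sum]
  rw [h1]
  obtain ⟨f, rfl⟩ := Nat.exists_eq_add_of_le he
  by_cases hc : f ≤ v
  · obtain ⟨v, rfl⟩ := Nat.exists_eq_add_of_le' hc
    obtain ⟨d, hd⟩ := Nat.exists_eq_add_of_le' (show v ≤ p + e by omega)
    have b := box3 d v f F D E H A B C G I J
    rw [← hd] at b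
    rw [show p + (e + f) - (v + f) = d by omega, show p + (e + f) = p + e + f by ring, b]
    have hh := N3_dvd v d F D E H A B C G I J
    rw [show 2 * (2 ^ e * (2 ^ (3 * f) * N3 d v F D E H A B C G I J)) =
      2 ^ (e + 3 * f) * (2 * N3 d v F D E H A B C G I J) by ring]
    refine (pow_dvd_pow 2 (?_ : _ ≤ e + 3 * f + ex d v)).trans ?_
    · unfold ex; omega
    · rw [pow_add]; exact mul_dvd_mul_left _ hh
  · push Not at hc
    have h2 : ∀ x y j : ℤ, ind (p + e) (q3 F D E H A B C G I J x y (2 ^ (p + (e + f) - v) * j))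
        = ind (p + e) (q2 F D E A B C x y) := by
      intro x y j
      apply ind_congr
      rw [show p + (e + f) - v = p + e + (f - v) by omega]
      exact ⟨2 ^ (f - v) * j * (H + I * x + J * y + G * 2 ^ (p + e + (f - v)) * j), by unfold q3; ring⟩
    simp only [h2]
    simp only [sum_const, card_range, smul_eq_mul, ← mul_sum]
    rw [show p + (e + f) = p + e + f by ring,
      box2 (fun x y => ind (p + e) (q2 F D E A B C x y))]
    · have hh := N2_dvd (p + e) F D E A B C
      change _ ∣ 2 * (2 ^ e * (2 ^ v * (2 ^ (2 * f) * N2 (p + e) F D E A B C)))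
      rw [show 2 * (2 ^ e * (2 ^ v * (2 ^ (2 * f) * N2 (p + e) F D E A B C))) =
        2 ^ (e + v + 2 * f) * (2 * N2 (p + e) F D E A B C) by ring]
      refine (pow_dvd_pow 2 (?_ : _ ≤ e + v + 2 * f + (p + e))).trans ?_
      · omega
      · rw [pow_add _ (e + v + 2 * f)]; exact mul_dvd_mul_left _ hh
    · intro x y
      apply ind_congr
      exact ⟨D + A * (2 * x + 2 ^ (p + e)) + B * y, by unfold q2; ring⟩
    · intro x y
      apply ind_congr
      exact ⟨E + C * (2 * y + 2 ^ (p + e)) + B * x, by unfold q2; ring⟩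

def R3 {R : Type*} [CommRing R] (F D E H A B C G I J x y z : R) : R :=
  F + D * x + E * y + A * x ^ 2 + B * x * y + C * y ^ 2 + z * (H + I * x + J * y) + G * z ^ 2

lemma quad_form {R : Type*} [CommRing R] (Q : MvPolynomial (Fin 3) R) (hQ : Q.totalDegree ≤ 2) :
    ∃ F D E H A B C G I J : R, ∀ X : Fin 3 → R,
      MvPolynomial.eval X Q = R3 F D E H A B C G I J (X 0) (X 1) (X 2) := by
  have key : ∀ S : Finset (Fin 3 →₀ ℕ), (∀ s ∈ S, s ∈ Q.support) →
    ∃ F D E H A B C G I J : R, ∀ X : Fin 3 → R,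
      ∑ s ∈ S, Q.coeff s * ∏ i, X i ^ s i = R3 F D E H A B C G I J (X 0) (X 1) (X 2) := by
    intro S
    induction S using Finset.induction_on with
    | empty => intro _; exact ⟨0, 0, 0, 0, 0, 0, 0, 0, 0, 0, fun X => by simp [R3]⟩
    | insert s S hs ih =>
      intro h
      obtain ⟨F, D, E, H, A, B, C, G, I, J, hX⟩ := ih (fun s hs => h s (mem_insert_of_mem hs))
      have hd := (MvPolynomial.le_totalDegree (h s (mem_insert_self _ _))).trans hQ
      rw [Finsupp.sum_fintype _ _ (by simp), Fin.sum_univ_three] at hd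
      simp only [sum_insert hs, hX]
      simp only [Fin.prod_univ_three]
      generalize Q.coeff s = c
      generalize s 0 = a at *
      generalize s 1 = b at *
      generalize s 2 = d at *
      have ha : a ≤ 2 := by omega
      have hb : b ≤ 2 := by omega
      have hdd : d ≤ 2 := by omega
      interval_cases a <;> interval_cases b <;> interval_cases d <;> first
        | (exfalso; omega)
        | exact ⟨F + c, D, E, H, A, B, C, G, I, J, fun X => by unfold R3; ring1⟩
        | exact ⟨F, D + c, E, H, A, B, C, G, I, J, fun X => by unfold R3; ring1⟩
        | exact ⟨F, D, E + c, H, A, B, C, G, I, J, fun X => by unfold R3; ring1⟩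
        | exact ⟨F, D, E, H + c, A, B, C, G, I, J, fun X => by unfold R3; ring1⟩
        | exact ⟨F, D, E, H, A + c, B, C, G, I, J, fun X => by unfold R3; ring1⟩
        | exact ⟨F, D, E, H, A, B + c, C, G, I, J, fun X => by unfold R3; ring1⟩
        | exact ⟨F, D, E, H, A, B, C + c, G, I, J, fun X => by unfold R3; ring1⟩
        | exact ⟨F, D, E, H, A, B, C, G + c, I, J, fun X => by unfold R3; ring1⟩
        | exact ⟨F, D, E, H, A, B, C, G, I + c, J, fun X => by unfold R3; ring1⟩
        | exact ⟨F, D, E, H, A, B, C, G, I, J + c, fun X => by unfold R3; ring1⟩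
  obtain ⟨F, D, E, H, A, B, C, G, I, J, hX⟩ := key Q.support (fun _ h => h)
  exact ⟨F, D, E, H, A, B, C, G, I, J, fun X => by rw [MvPolynomial.eval_eq', hX]⟩

lemma aff_form {R : Type*} [CommRing R] (Q : MvPolynomial (Fin 2) R) (hQ : Q.totalDegree ≤ 1) :
    ∃ F D E : R, ∀ X : Fin 2 → R,
      MvPolynomial.eval X Q = F + D * X 0 + E * X 1 := by
  have key : ∀ S : Finset (Fin 2 →₀ ℕ), (∀ s ∈ S, s ∈ Q.support) →
    ∃ F D E : R, ∀ X : Fin 2 → R,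
      ∑ s ∈ S, Q.coeff s * ∏ i, X i ^ s i = F + D * X 0 + E * X 1 := by
    intro S
    induction S using Finset.induction_on with
    | empty => intro _; exact ⟨0, 0, 0, fun X => by simp⟩
    | insert s S hs ih =>
      intro h
      obtain ⟨F, D, E, hX⟩ := ih (fun s hs => h s (mem_insert_of_mem hs))
      have hd := (MvPolynomial.le_totalDegree (h s (mem_insert_self _ _))).trans hQ
      rw [Finsupp.sum_fintype _ _ (by simp), Fin.sum_univ_two] at hd
      simp only [sum_insert hs, hX]
      simp only [Fin.prod_univ_two]
      generalize Q.coeff s = c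
      generalize s 0 = a at *
      generalize s 1 = b at *
      have ha : a ≤ 1 := by omega
      have hb : b ≤ 1 := by omega
      interval_cases a <;> interval_cases b <;> first
        | (exfalso; omega)
        | exact ⟨F + c, D, E, fun X => by ring1⟩
        | exact ⟨F, D + c, E, fun X => by ring1⟩
        | exact ⟨F, D, E + c, fun X => by ring1⟩
  obtain ⟨F, D, E, hX⟩ := key Q.support (fun _ h => h)
  exact ⟨F, D, E, fun X => by rw [MvPolynomial.eval_eq', hX]⟩

lemma sum_zmod_s3 (n : ℕ) [NeZero n] (f : ZMod n → ℕ) :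
    ∑ x : ZMod n, f x = ∑ i ∈ range n, f (i : ZMod n) := by
  symm
  refine Finset.sum_nbij' (fun i => (i : ZMod n)) (fun x => x.val) ?_ ?_ ?_ ?_ ?_
  · intro i _; simp
  · intro x _; simp [ZMod.val_lt]
  · intro i hi; exact ZMod.val_cast_of_lt (mem_range.mp hi)
  · intro x _; simp
  · intro i _; rfl

lemma card_form (n : ℕ) [NeZero n] (p : ZMod n → ZMod n → Prop) [∀ x y, Decidable (p x y)] :
    Nat.card {x : Fin 2 → ZMod n // p (x 0) (x 1)} =
      ∑ x ∈ range n, ∑ y ∈ range n, if p x y then 1 else 0 := by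
  rw [Nat.card_eq_fintype_card, Fintype.card_subtype, card_filter,
    ← (finTwoArrowEquiv (ZMod n)).symm.sum_comp, Fintype.sum_prod_type]
  simp only [sum_zmod_s3, finTwoArrowEquiv_symm_apply, Matrix.cons_val_zero, Matrix.cons_val_one]

lemma lift_int (n : ℕ) (a : ZMod n) : ∃ A : ℤ, a = (A : ZMod n) :=
  (ZMod.intCast_surjective a).imp fun _ h => h.symm

end aux


/-- Base case of the main theorem: for `Q` of degree ≤ 2 in 3 variables `(x, y, z)`
over `ℤ/2^r`, the double sum of constrained solution counts is divisible by
`2^{r+⌈min(2v,r)/2⌉+q-1}`. -/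
theorem stmt_3 (r : ℕ) (hr : 1 ≤ r)
    (Q : MvPolynomial (Fin 3) (ZMod (2 ^ r))) (hQ : Q.totalDegree ≤ 2)
    (q v : ℕ) (hq : q ≤ r) (hv : v ≤ r)
    (k w g u : ZMod (2 ^ r))
    (T : MvPolynomial (Fin 2) (ZMod (2 ^ r))) (hT : T.totalDegree ≤ 1) :
    (2 ^ (r + (min (2 * v) r + 1) / 2 + q - 1) : ℕ) ∣
    ∑ i : Fin (2 ^ q), ∑ j : Fin (2 ^ v),
      Nat.card {x : Fin 2 → ZMod (2 ^ r) //
        MvPolynomial.eval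
          (fun t : Fin 3 => if h : (t : ℕ) < 2 then x ⟨t, h⟩
            else MvPolynomial.eval x T
              + u * (2 : ZMod (2 ^ r)) ^ (r - v) * ((j : ℕ) : ZMod (2 ^ r))) Q
          = k + w * (2 : ZMod (2 ^ r)) ^ (r - q) * ((i : ℕ) : ZMod (2 ^ r))
              + g * (2 : ZMod (2 ^ r)) ^ (r - v) * ((j : ℕ) : ZMod (2 ^ r))} := by

  have : NeZero (2 ^ r) := ⟨by positivity⟩
  obtain ⟨F, D, E, H, A, B, C, G, I, J, hX⟩ := quad_form Q hQ
  obtain ⟨t0, t1, t2, hTX⟩ := aff_form T hT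
  obtain ⟨F', hF'⟩ := lift_int _ (F + H * t0 + G * t0 ^ 2 - k)
  obtain ⟨D', hD'⟩ := lift_int _ (D + H * t1 + I * t0 + 2 * G * t0 * t1)
  obtain ⟨E', hE'⟩ := lift_int _ (E + H * t2 + J * t0 + 2 * G * t0 * t2)
  obtain ⟨H', hH'⟩ := lift_int _ (u * H + 2 * G * t0 * u - g)
  obtain ⟨A', hA'⟩ := lift_int _ (A + I * t1 + G * t1 ^ 2)
  obtain ⟨B', hB'⟩ := lift_int _ (B + I * t2 + J * t1 + 2 * G * t1 * t2)
  obtain ⟨C', hC'⟩ := lift_int _ (C + J * t2 + G * t2 ^ 2)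
  obtain ⟨G', hG'⟩ := lift_int _ (G * u ^ 2)
  obtain ⟨I', hI'⟩ := lift_int _ (u * I + 2 * G * t1 * u)
  obtain ⟨J', hJ'⟩ := lift_int _ (u * J + 2 * G * t2 * u)
  obtain ⟨W, hW⟩ := lift_int _ w
  have main := total r q v hq hv W F' D' E' H' A' B' C' G' I' J'
  rw [show r + (min (2 * v) r + 1) / 2 + q = 1 + (r + (min (2 * v) r + 1) / 2 + q - 1) by omega,
    pow_add, pow_one] at main
  have main' := Nat.dvd_of_mul_dvd_mul_left (by norm_num) main
  refine main'.trans (dvd_of_eq ?_)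
  rw [Finset.sum_range]
  apply Finset.sum_congr rfl
  intro i _
  rw [Finset.sum_range]
  apply Finset.sum_congr rfl
  intro j _
  have cf := card_form (2 ^ r) (fun x y => R3 F D E H A B C G I J x y (t0 + t1 * x + t2 * y
      + u * (2 : ZMod (2 ^ r)) ^ (r - v) * ((j : ℕ) : ZMod (2 ^ r)))
      = k + w * (2 : ZMod (2 ^ r)) ^ (r - q) * ((i : ℕ) : ZMod (2 ^ r))
              + g * (2 : ZMod (2 ^ r)) ^ (r - v) * ((j : ℕ) : ZMod (2 ^ r)))
  simp only [hX, hTX]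
  refine Eq.trans ?_ cf.symm
  apply Finset.sum_congr rfl
  intro x _
  apply Finset.sum_congr rfl
  intro y _
  unfold ind
  refine if_congr ?_ rfl rfl
  have hz := ZMod.intCast_zmod_eq_zero_iff_dvd
    (q3 F' D' E' H' A' B' C' G' I' J' x y (2 ^ (r - v) * (j : ℕ)) - W * 2 ^ (r - q) * (i : ℕ)) (2 ^ r)
  push_cast at hz
  rw [← hz, ← sub_eq_zero (b := k + _ + _)]
  unfold q3 q2 R3
  push_cast
  rw [← hF', ← hD', ← hE', ← hH', ← hA', ← hB', ← hC', ← hG', ← hI', ← hJ', ← hW]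
  apply Eq.congr_left
  ring
end
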